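/- arXiv:2203.12704 — 2 statements merged into one kernel-verified Lean document; each statement's English description precedes it below -/
import Mathlib

section
/- Let G be a finite group of odd order and let p be an odd prime with p ≡ 1 (mod 3). If acd(G) < 3(p+2)/(p+8), then G is p-nilpotent. -/
/-!
Write `W(d) = (p + 8) d - 3 (p + 2)`. The hypothesis on `acd G` says that the sum of `W(χ(1))` over
`Irr(G)` is negative, so it suffices to show that this sum is nonnegative when `G` has no normal
`p`-complement (`average_degree_aux`). Since `|G|` is odd there is no irreducible character of
degree `2` (`finrank_ne_two`), so only the linear characters contribute a negative amount, namely
`-2 (p - 1)` each.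

Let `P` be a Sylow `p`-subgroup and `K` a complement of `P` in its normalizer. By a theorem of Tate
(`tate`), the failure of `p`-nilpotency means that `P ∩ G'` is not contained in `P'`. Let `Λ` be
the group of linear characters of `P` and `Λ₀` the subgroup of those trivial on `P ∩ G'`; then
`Λ₀ ≠ Λ`, and `K` acts on `Λ` fixing `Λ₀` pointwise. The Frattini argument gives `G = G' P K`, so
`G` has at most `|Λ₀| |Lin K|` linear characters, where `Lin K` is the group of linear characters
of `K`.

For `λ ∈ Λ` let `K_λ` be its stabilizer in `K` and `t_λ` the index of `K_λ`. For `λ ∉ Λ₀` and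
`σ ∈ Lin K_λ` there is a simple `G`-module `V` containing a nonzero vector on which `P` acts by `λ`
and `K_λ` acts by `σ` (`exists_occurs`). Such a `V` is not linear, has dimension at least `t_λ`
because it contains the weights conjugate to `λ`, and at most `dim V` pairs `(λ, σ)` occur in it,
since the corresponding vectors are linearly independent. As `W(d) / d` increases with `d`, the
nonlinear characters contribute at least the sum over `λ ∉ Λ₀` of `|Lin K_λ| W(m) / m`, where
`m = max(3, t_λ)` (`sum_nonlinear_ge`). Moreover `|Lin K| ≤ t_λ |Lin K_λ|`.

It remains to see that the sum over `λ ∉ Λ₀` of `W(m) / (m t_λ)` is at least `2 (p - 1) |Λ₀|`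
(`sum_wt_ge`). If every `t_λ` is at most `(p + 2) / 3`, each term is at least `2` and there are at
least `(p - 1) |Λ₀|` terms. Otherwise some `t = t_λ` exceeds `(p + 2) / 3`, and the characters
`(k λ)^(±1) τ` with `τ ∈ Λ₀` are `2 t |Λ₀|` distinct elements outside `Λ₀` with the same `t`, each
contributing at least `(p - 1) / t`.
-/

/-- The set of irreducible complex characters of `G`. -/
noncomputable def Irr (G : Type) [Group G] : Set (G → ℂ) :=
  {χ | ∃ V : FDRep ℂ G, CategoryTheory.Simple V ∧ χ = FDRep.character V}

/-- A group `G` has a normal `p`-complement: a normal subgroup of order coprime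
to `p` whose index is a power of `p`. -/
def HasNormalPComplement (G : Type) [Group G] (p : ℕ) : Prop :=
  ∃ N : Subgroup G, N.Normal ∧ Nat.Coprime (Nat.card N) p ∧ ∃ n : ℕ, N.index = p ^ n

/-- The average of the degrees of the irreducible complex characters of `G`. -/
noncomputable def acd (G : Type) [Group G] : ℝ :=
  (∑ᶠ χ ∈ Irr G, (χ 1).re) / (Nat.card (Irr G))

/-! ### Tate's theorem -/

/-- The subgroup generated by all elements whose order divides `m`. -/
def powClosure (G : Type) [Group G] (m : ℕ) : Subgroup G :=
  Subgroup.closure {x | x ^ m = 1}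

theorem powClosure_normal (G : Type) [Group G] (m : ℕ) : (powClosure G m).Normal := by
  refine ⟨fun n hn g => ?_⟩
  have hle : powClosure G m ≤ (powClosure G m).comap (MulAut.conj g).toMonoidHom := by
    refine (Subgroup.closure_le _).2 fun x hx => ?_
    refine Subgroup.subset_closure ?_
    change (g * x * g⁻¹) ^ m = 1
    rw [conj_pow, show x ^ m = 1 from hx]
    simp
  exact hle hn

/-- In a finite `p`-group `Q`, nilpotency forces `[U, Q] < U` for nontrivial normal `U`; the form
proved here needs no normality. -/
theorem commutator_top_lt_of_isPGroup {Q : Type} [Group Q] [Finite Q] {p : ℕ} [Fact p.Prime]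
    (hQ : IsPGroup p Q) (U : Subgroup Q) (hU : U ≠ ⊥) : ¬ U ≤ ⁅U, (⊤ : Subgroup Q)⁆ := by
  intro h
  have hnil : Group.IsNilpotent Q := hQ.isNilpotent
  have hle : ∀ n, U ≤ (⊤ : Subgroup Q).lowerCentralSeries n := by
    intro n
    induction n with
    | zero => simp
    | succ n ih => exact h.trans (Subgroup.commutator_mono ih le_rfl)
  obtain ⟨n, hn⟩ := Subgroup.nilpotent_iff_lowerCentralSeries.1 hnil
  exact hU (le_bot_iff.1 (hn ▸ hle n))

theorem eq_one_of_pow_coprime {A : Type} [Group A] {x : A} {a b : ℕ} (hab : Nat.Coprime a b)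
    (ha : x ^ a = 1) (hb : x ^ b = 1) : x = 1 := by
  have h1 := orderOf_dvd_of_pow_eq_one ha
  have h2 := orderOf_dvd_of_pow_eq_one hb
  exact orderOf_eq_one_iff.1 (Nat.eq_one_of_dvd_coprimes hab h1 h2)

open Subgroup in
open scoped IsMulCommutative in
/-- The transfer step of Tate's theorem. Let `M` be generated by the elements of order dividing `m`,
prime to `p`, with `G = P M`. With `U = P ∩ M` and `V = [U, P]`, the fibre product `E` of `G` and
`P / V` over `G / M` has the central subgroup `1 × U / V`. Transfer from the preimage of `P` in `E`
to the center of `P / V` kills `M × 1` because `M` is generated by `p'`-elements, and it kills the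
diagonal copy of `U` if `U ≤ P'`; hence it kills `1 × U / V`. But on central elements it is the
power map with exponent `|G : P|`, so `U = V`, which forces `U = 1`. -/
theorem tate_aux {G : Type} [Group G] [Finite G] {p : ℕ} [Fact p.Prime] (P : Sylow p G)
    (M : Subgroup G) [M.Normal] (m : ℕ) (hm : Nat.Coprime m p)
    (hM : M = powClosure G m) (hPM : ∀ g : G, ∃ x ∈ P, x⁻¹ * g ∈ M)
    (h : M.subgroupOf P ≤ commutator P) : M.subgroupOf P = ⊥ := by
  by_contra hne
  set U : Subgroup P := M.subgroupOf P with hU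
  set V : Subgroup P := ⁅U, (⊤ : Subgroup P)⁆ with hV
  have hVU : V ≤ U := commutator_le_left U ⊤
  obtain ⟨u, huU, huV⟩ : ∃ u ∈ U, u ∉ V :=
    SetLike.not_le_iff_exists.1 (commutator_top_lt_of_isPGroup P.isPGroup' U hne)
  let π : P ⧸ V →* G ⧸ M := QuotientGroup.lift V ((QuotientGroup.mk' M).comp (P : Subgroup G).subtype) (by
    intro x hx
    exact (QuotientGroup.eq_one_iff _).2 (mem_subgroupOf.1 (hVU hx)))
  have hcen : ∀ z ∈ U, (QuotientGroup.mk z : P ⧸ V) ∈ center (P ⧸ V) := by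
    intro z hz
    rw [mem_center_iff]
    intro y
    induction y using QuotientGroup.induction_on with
    | H w =>
      rw [← QuotientGroup.mk_mul, ← QuotientGroup.mk_mul, QuotientGroup.eq]
      have := commutator_mem_commutator (U.inv_mem hz)
        (mem_top (w⁻¹ : P))
      have h2 : (w * z)⁻¹ * (z * w) = z⁻¹ * w⁻¹ * z⁻¹⁻¹ * w⁻¹⁻¹ := by
        group
      rw [h2]; exact this
  let E : Subgroup (G × (P ⧸ V)) :=
    MonoidHom.eqLocus ((QuotientGroup.mk' M).comp (MonoidHom.fst G (P ⧸ V)))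
      (π.comp (MonoidHom.snd G (P ⧸ V)))
  have hE : ∀ (g : G) (x : P), (g, (QuotientGroup.mk x : P ⧸ V)) ∈ E ↔ g⁻¹ * x ∈ M := by
    intro g x
    change (QuotientGroup.mk g : G ⧸ M) = QuotientGroup.mk (x : G) ↔ _
    rw [QuotientGroup.eq]
  let r : E →* G := (MonoidHom.fst G (P ⧸ V)).comp E.subtype
  have hr : Function.Surjective r := by
    intro g
    obtain ⟨x, hx, hxg⟩ := hPM g
    refine ⟨⟨(g, QuotientGroup.mk ⟨x, hx⟩), (hE _ _).2 ?_⟩, rfl⟩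
    have := M.inv_mem hxg
    simpa using this
  let Q : Subgroup E := (P : Subgroup G).comap r
  have hQi : Q.index = (P : Subgroup G).index := index_comap_of_surjective _ hr
  have hfmem : ∀ z : Q, (QuotientGroup.mk (⟨z.1.1.1, z.2⟩ : P) : P ⧸ V)⁻¹ * z.1.1.2 ∈
      center (P ⧸ V) := by
    rintro ⟨⟨⟨g, y⟩, hgy⟩, hg⟩
    induction y using QuotientGroup.induction_on with
    | H w =>
      exact hcen ((⟨g, hg⟩ : P)⁻¹ * w) (mem_subgroupOf.2 ((hE _ _).1 hgy))
  let f : Q →* center (P ⧸ V) := MonoidHom.mk' (fun z => ⟨_, hfmem z⟩) (by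
    intro a b
    apply Subtype.ext
    have hb := mem_center_iff.1 (hfmem a) (QuotientGroup.mk (⟨b.1.1.1, b.2⟩ : P) : P ⧸ V)⁻¹
    change ((QuotientGroup.mk (⟨a.1.1.1, a.2⟩ : P) : P ⧸ V) *
      (QuotientGroup.mk (⟨b.1.1.1, b.2⟩ : P) : P ⧸ V))⁻¹ * (a.1.1.2 * b.1.1.2) = 
      ((QuotientGroup.mk (⟨a.1.1.1, a.2⟩ : P) : P ⧸ V)⁻¹ * a.1.1.2) *
      ((QuotientGroup.mk (⟨b.1.1.1, b.2⟩ : P) : P ⧸ V)⁻¹ * b.1.1.2)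
    rw [mul_inv_rev, ← mul_assoc (_ * a.1.1.2), ← hb]
    simp only [mul_assoc])
  let τ : E →* center (P ⧸ V) := f.transfer
  have hApg : ∀ a : center (P ⧸ V), ∃ k : ℕ, a ^ p ^ k = 1 :=
    (P.isPGroup'.to_quotient V).to_subgroup _
  -- `τ` kills `M × 1`.
  have hME : ∀ x ∈ M, (x, (1 : P ⧸ V)) ∈ E := by
    intro x hx
    refine (hE x 1).2 ?_
    simpa using M.inv_mem hx
  have hτM : ∀ (x : G) (hx : x ∈ M), τ ⟨(x, 1), hME x hx⟩ = 1 := by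
    have key : ∀ (x : G) (_ : x ∈ powClosure G m) (hx : x ∈ M), τ ⟨(x, 1), hME x hx⟩ = 1 := by
      intro x hx
      induction hx using closure_induction with
      | mem x hxm =>
        intro hx
        obtain ⟨k, hk⟩ := hApg (τ ⟨(x, 1), hME x hx⟩)
        refine eq_one_of_pow_coprime (Nat.Coprime.pow_right k hm) ?_ hk
        rw [← map_pow]
        have : (⟨(x, 1), hME x hx⟩ : E) ^ m = 1 := by
          apply Subtype.ext
          change (x, (1 : P ⧸ V)) ^ m = 1
          rw [Prod.pow_mk, show x ^ m = 1 from hxm, one_pow]; rfl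
        rw [this, map_one]
      | one => intro hx; exact map_one τ
      | mul x y hx hy ihx ihy =>
        intro hxy
        have hx' : x ∈ M := hM ▸ hx
        have hy' : y ∈ M := hM ▸ hy
        have : (⟨(x * y, 1), hME _ hxy⟩ : E) = ⟨(x, 1), hME x hx'⟩ * ⟨(y, 1), hME y hy'⟩ := by
          apply Subtype.ext
          change (x * y, (1 : P ⧸ V)) = (x * y, 1 * 1)
          rw [one_mul]
        rw [this, map_mul, ihx hx', ihy hy', one_mul]
      | inv x hx ih =>
        intro hxi
        have hx' : x ∈ M := hM ▸ hx
        have : (⟨(x⁻¹, 1), hME _ hxi⟩ : E) = ⟨(x, 1), hME x hx'⟩⁻¹ := by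
          apply Subtype.ext
          change (x⁻¹, (1 : P ⧸ V)) = (x⁻¹, 1⁻¹)
          rw [inv_one]
        rw [this, map_inv, ih hx', inv_one]
    intro x hx
    exact key x (hM ▸ hx) hx
  have hdiag : ∀ x : P, ((x : G), (QuotientGroup.mk x : P ⧸ V)) ∈ E := by
    intro x
    exact (hE _ _).2 (by simp)
  let δ : P →* E := ((P : Subgroup G).subtype.prod (QuotientGroup.mk' V)).codRestrict E hdiag
  have h1 : τ (δ u) = 1 := by
    have hle : commutator P ≤ (τ.comp δ).ker := Abelianization.commutator_subset_ker _
    exact hle (h huU)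
  have hu1 : ((1 : G), (QuotientGroup.mk u : P ⧸ V)) ∈ E :=
    (hE _ _).2 (by simpa using mem_subgroupOf.1 huU)
  have h2 : τ ⟨(1, QuotientGroup.mk u), hu1⟩ = 1 := by
    have : δ u = ⟨((u : G), 1), hME _ (mem_subgroupOf.1 huU)⟩ * ⟨(1, QuotientGroup.mk u), hu1⟩ := by
      apply Subtype.ext
      change ((u : G), (QuotientGroup.mk u : P ⧸ V)) = ((u : G) * 1, 1 * QuotientGroup.mk u)
      rw [mul_one, one_mul]
    rw [this, map_mul, hτM _ (mem_subgroupOf.1 huU), one_mul] at h1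
    exact h1
  have hzc : (⟨(1, QuotientGroup.mk u), hu1⟩ : E) ∈ center E := by
    rw [mem_center_iff]
    rintro ⟨⟨g, y⟩, hgy⟩
    apply Subtype.ext
    change (g * 1, y * QuotientGroup.mk u) = (1 * g, QuotientGroup.mk u * y)
    rw [mul_one, one_mul, mem_center_iff.1 (hcen u huU) y]
  have h3 := MonoidHom.transfer_eq_pow f (⟨(1, QuotientGroup.mk u), hu1⟩ : E) (by
    intro k g₀ _
    have := (mem_center_iff.1 ((center E).pow_mem hzc k)) g₀
    rw [mul_assoc, ← this, inv_mul_cancel_left])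
  rw [show MonoidHom.transfer f _ = (1 : center (P ⧸ V)) from h2] at h3
  have h4 : (QuotientGroup.mk u : P ⧸ V) ^ Q.index = 1 := by
    have h5 := congrArg Subtype.val h3.symm
    have hpw : ((⟨(1, QuotientGroup.mk u), hu1⟩ : E) ^ Q.index).1 =
        (1, (QuotientGroup.mk u : P ⧸ V) ^ Q.index) := by
      change ((1 : G), (QuotientGroup.mk u : P ⧸ V)) ^ Q.index = _
      rw [Prod.pow_mk, one_pow]
    have hone : ∀ z : Q, z.1.1.1 = 1 → (f z).1 = z.1.1.2 := by
      rintro ⟨⟨⟨g, y⟩, hgy⟩, hg⟩ hz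
      change g = 1 at hz
      subst hz
      change (QuotientGroup.mk (1 : P) : P ⧸ V)⁻¹ * y = y
      rw [QuotientGroup.mk_one, inv_one, one_mul]
    rw [hone _ (congrArg Prod.fst hpw)] at h5
    exact (congrArg Prod.snd hpw).symm.trans h5
  obtain ⟨k, hk⟩ := (P.isPGroup'.to_quotient V) (QuotientGroup.mk u)
  have hcop : Nat.Coprime Q.index (p ^ k) := by
    rw [hQi]
    exact Nat.Coprime.pow_right k
      (((Nat.Prime.coprime_iff_not_dvd Fact.out).2 P.not_dvd_index).symm)
  exact huV ((QuotientGroup.eq_one_iff u).1 (eq_one_of_pow_coprime hcop h4 hk))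

/-- Tate's theorem: if `P ∩ G' ≤ P'` then `G` has a normal `p`-complement. The complement is the
subgroup generated by all elements of order prime to `p`. -/
theorem tate {G : Type} [Group G] [Finite G] {p : ℕ} [Fact p.Prime] (P : Sylow p G)
    (h : (commutator G).subgroupOf P ≤ commutator P) : HasNormalPComplement G p := by
  have hp : p.Prime := Fact.out
  obtain ⟨e, m, hpm, hcard⟩ := Nat.exists_eq_pow_mul_and_not_dvd
    (Nat.card_pos (α := G)).ne' p hp.ne_one
  have hm : Nat.Coprime m p := ((Nat.Prime.coprime_iff_not_dvd hp).2 hpm).symm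
  have hMn : (powClosure G m).Normal := powClosure_normal G m
  have hpow : ∀ g : G, g ^ p ^ e ∈ powClosure G m := by
    intro g
    refine Subgroup.subset_closure ?_
    change (g ^ p ^ e) ^ m = 1
    rw [← pow_mul, ← hcard, pow_card_eq_one']
  have hquot : IsPGroup p (G ⧸ powClosure G m) := by
    intro y
    induction y using QuotientGroup.induction_on with
    | H g => exact ⟨e, (QuotientGroup.eq_one_iff _).2 (hpow g)⟩
  have hPM : ∀ g : G, ∃ x ∈ P, x⁻¹ * g ∈ powClosure G m := by
    have htop : (P : Subgroup G) ⊔ powClosure G m = ⊤ := by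
      rw [← Subgroup.index_eq_one]
      have h1 : ((P : Subgroup G) ⊔ powClosure G m).index ∣ (P : Subgroup G).index :=
        Subgroup.index_dvd_of_le le_sup_left
      have h2 : ((P : Subgroup G) ⊔ powClosure G m).index ∣ (powClosure G m).index :=
        Subgroup.index_dvd_of_le le_sup_right
      obtain ⟨k, hk⟩ := IsPGroup.iff_card.1 hquot
      rw [← Subgroup.index_eq_card] at hk
      rw [hk] at h2
      refine Nat.eq_one_of_dvd_coprimes ?_ h1 h2
      exact Nat.Coprime.pow_right k (((Nat.Prime.coprime_iff_not_dvd hp).2 P.not_dvd_index).symm)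
    intro g
    obtain ⟨x, hx, y, hy, rfl⟩ := Subgroup.mem_sup_of_normal_right.1
      (htop ▸ Subgroup.mem_top g : g ∈ (P : Subgroup G) ⊔ powClosure G m)
    exact ⟨x, hx, by simpa using hy⟩
  have hab : ∀ x ∈ powClosure G m, (Abelianization.of x) ^ m = 1 := by
    intro x hx
    induction hx using Subgroup.closure_induction with
    | mem x hx => rw [← map_pow, show x ^ m = 1 from hx, map_one]
    | one => simp
    | mul x y _ _ hx hy => rw [map_mul, mul_pow, hx, hy, one_mul]
    | inv x _ hx => rw [map_inv, inv_pow, hx, inv_one]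
  have hU : (powClosure G m).subgroupOf P = ⊥ := by
    refine tate_aux P (powClosure G m) m hm rfl hPM (le_trans ?_ h)
    intro x hx
    rw [Subgroup.mem_subgroupOf] at hx ⊢
    obtain ⟨k, hk⟩ := P.isPGroup' x
    have h1 : Abelianization.of (x : G) ^ p ^ k = 1 := by
      rw [← map_pow, ← Subgroup.coe_pow, hk, Subgroup.coe_one, map_one]
    have h2 := eq_one_of_pow_coprime (Nat.Coprime.pow_right k hm) (hab x hx) h1
    exact (QuotientGroup.eq_one_iff (x : G)).1 h2
  refine ⟨powClosure G m, hMn, ?_, ?_⟩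
  · refine ((Nat.Prime.coprime_iff_not_dvd hp).2 fun hdvd => ?_).symm
    obtain ⟨x, hx⟩ := exists_prime_orderOf_dvd_card' p hdvd
    have hxp : IsPGroup p (Subgroup.zpowers (x : G)) := by
      refine IsPGroup.of_card (n := 1) ?_
      rw [Nat.card_zpowers, Subgroup.orderOf_coe, hx, pow_one]
    obtain ⟨Q, hQ⟩ := hxp.exists_le_sylow
    obtain ⟨g, hg⟩ := MulAction.exists_smul_eq G Q P
    have hgx : g * x * g⁻¹ ∈ P := by
      rw [← hg]
      exact Subgroup.smul_mem_pointwise_smul (x : G) (MulAut.conj g) (Q : Subgroup G)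
        (hQ (Subgroup.mem_zpowers _))
    have h1 : (⟨g * x * g⁻¹, hgx⟩ : P) ∈ (powClosure G m).subgroupOf P :=
      Subgroup.mem_subgroupOf.2 (hMn.conj_mem _ x.2 g)
    rw [hU, Subgroup.mem_bot] at h1
    have h2 : g * (x : G) * g⁻¹ = 1 := congrArg Subtype.val h1
    have h3 : x = 1 := Subtype.ext (by simpa using h2)
    rw [h3, orderOf_one] at hx
    exact hp.one_lt.ne hx
  · obtain ⟨k, hk⟩ := IsPGroup.iff_card.1 hquot
    exact ⟨k, by rw [← hk, Subgroup.index_eq_card]⟩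

/-! ### Irreducible characters -/

open CategoryTheory in
open scoped Classical in
theorem sum_char_simple {G : Type} [Group G] [Fintype G] (V W : FDRep ℂ G) (hV : Simple V)
    (hW : Simple W) : ∑ g : G, V.character g * W.character g⁻¹ =
      if Nonempty (V ≅ W) then (Nat.card G : ℂ) else 0 := by
  have hne : (Nat.card G : ℂ) ≠ 0 := Nat.cast_ne_zero.2 Nat.card_pos.ne'
  have : Invertible (Nat.card G : ℂ) := invertibleOfNonzero hne
  have h := FDRep.char_orthonormal V W
  rw [inv_mul_eq_iff_eq_mul₀ hne] at h
  rw [h]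
  split_ifs
  · rw [mul_one]
  · rw [mul_zero]

open CategoryTheory in
theorem nonempty_iso_of_character_eq {G : Type} [Group G] [Fintype G] {V W : FDRep ℂ G}
    (hV : Simple V) (hW : Simple W) (h : V.character = W.character) : Nonempty (V ≅ W) := by
  classical
  by_contra hc
  have h1 := sum_char_simple V W hV hW
  have h2 := sum_char_simple V V hV hV
  rw [if_neg hc, ← h] at h1
  rw [if_pos ⟨Iso.refl V⟩, h1] at h2
  exact Nat.cast_ne_zero.2 Nat.card_pos.ne' h2.symm

open CategoryTheory in
open scoped Classical in
theorem Irr_orth {G : Type} [Group G] [Fintype G] {χ ψ : G → ℂ} (hχ : χ ∈ Irr G) (hψ : ψ ∈ Irr G) :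
    ∑ g : G, χ g * ψ g⁻¹ = if χ = ψ then (Nat.card G : ℂ) else 0 := by
  obtain ⟨V, hV, rfl⟩ := hχ
  obtain ⟨W, hW, rfl⟩ := hψ
  by_cases hc : V.character = W.character
  · rw [if_pos hc, ← hc, sum_char_simple V V hV hV, if_pos ⟨Iso.refl V⟩]
  · rw [if_neg hc, sum_char_simple V W hV hW, if_neg]
    rintro ⟨i⟩
    exact hc (FDRep.char_iso i)

theorem Irr_finite (G : Type) [Group G] [Fintype G] : (Irr G).Finite := by
  have hli : LinearIndependent ℂ (fun χ : Irr G => χ.1) := by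
    rw [linearIndependent_iff']
    intro s c hc i hi
    have h1 : ∑ g : G, (∑ j ∈ s, c j • j.1) g * i.1 g⁻¹ = 0 := by
      rw [hc]; simp
    simp only [Finset.sum_apply, Pi.smul_apply, smul_eq_mul, Finset.sum_mul] at h1
    rw [Finset.sum_comm] at h1
    simp only [mul_assoc, ← Finset.mul_sum] at h1
    rw [Finset.sum_eq_single i] at h1
    · rw [Irr_orth i.2 i.2, if_pos rfl] at h1
      exact (mul_eq_zero.1 h1).resolve_right (Nat.cast_ne_zero.2 Nat.card_pos.ne')
    · intro b _ hb
      rw [Irr_orth b.2 i.2, if_neg (fun h => hb (Subtype.ext h)), mul_zero]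
    · intro h; exact absurd hi h
  have := hli.finite
  exact Set.toFinite _

open CategoryTheory in
theorem hom_mem_Irr {G : Type} [Group G] [Fintype G] (ν : G →* ℂˣ) :
    (fun g => (ν g : ℂ)) ∈ Irr G := by
  let ρ : Representation ℂ G ℂ :=
    (Algebra.lmul ℂ ℂ).toMonoidHom.comp ((Units.coeHom ℂ).comp ν)
  have hch : (fun g => (ν g : ℂ)) = (FDRep.of ρ).character := by
    funext g
    change _ = LinearMap.trace ℂ ℂ (ρ g)
    rw [LinearMap.trace_eq_matrix_trace ℂ (Module.Basis.singleton Unit ℂ)]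
    simp [ρ, Matrix.trace, LinearMap.toMatrix_apply]
  refine ⟨FDRep.of ρ, ?_, hch⟩
  rw [FDRep.simple_iff_char_is_norm_one, ← hch]
  simp

theorem exists_hom_of_degree_one {G : Type} [Group G] (V : FDRep ℂ G)
    (h : Module.finrank ℂ V = 1) : ∃ ν : G →* ℂˣ, ∀ g, V.character g = ν g ∧ ∀ v : V, V.ρ g v = (ν g : ℂ) • v := by
  let ν : G →* ℂˣ := (LinearMap.det.comp V.ρ).toHomUnits
  refine ⟨ν, fun g => ?_⟩
  obtain ⟨c, hc⟩ : ∃ c : ℂ, V.ρ g = c • LinearMap.id := by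
    obtain ⟨v, hv, hall⟩ := finrank_eq_one_iff'.1 h
    obtain ⟨c, hc⟩ := hall (V.ρ g v)
    refine ⟨c, LinearMap.ext fun w => ?_⟩
    obtain ⟨d, rfl⟩ := hall w
    rw [map_smul, ← hc, smul_comm]; rfl
  have hν : (ν g : ℂ) = c := by
    change LinearMap.det (V.ρ g) = c
    rw [hc, LinearMap.det_smul, h]; simp
  refine ⟨?_, fun v => ?_⟩
  · change LinearMap.trace ℂ V (V.ρ g) = _
    rw [hν, hc, map_smul, LinearMap.trace_id, h]; simp
  · rw [hν, hc]; rfl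

/-- A group of odd order has no irreducible representation of dimension two. Let `χ` be its
character and `μ` the square root of its determinant. Since squaring permutes `G`, the sum of
`χ(g²) μ(g²)⁻¹` is the inner product of `χ` with `μ`, which vanishes. On the other hand
`χ(g²) = χ(g)² - 2 det g` and `χ(g) = χ(g⁻¹) det g`, so the sum equals `|G| - 2 |G|`. -/
theorem finrank_ne_two {G : Type} [Group G] [Fintype G] (hG : Odd (Nat.card G))
    (V : FDRep ℂ G) (hV : CategoryTheory.Simple V) : Module.finrank ℂ V ≠ 2 := by
  intro h2
  let b : Module.Basis (Fin 2) ℂ V := Module.finBasisOfFinrankEq ℂ V h2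
  let M : G →* Matrix (Fin 2) (Fin 2) ℂ :=
    (LinearMap.toMatrixAlgEquiv b).toMonoidHom.comp V.ρ
  have hχ : ∀ g, V.character g = M g 0 0 + M g 1 1 := by
    intro g
    change LinearMap.trace ℂ V (V.ρ g) = _
    rw [LinearMap.trace_eq_matrix_trace ℂ b, Matrix.trace_fin_two]
    rfl
  let ν : G →* ℂˣ := (Matrix.detMonoidHom.comp M).toHomUnits
  have hν : ∀ g, (ν g : ℂ) = M g 0 0 * M g 1 1 - M g 0 1 * M g 1 0 := by
    intro g
    change Matrix.det (M g) = _
    rw [Matrix.det_fin_two]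
  have hsq : ∀ g, V.character (g ^ 2) = V.character g ^ 2 - 2 * ν g := by
    intro g
    rw [hχ, hχ, hν, pow_two, map_mul]
    simp only [Matrix.mul_apply, Fin.sum_univ_two]
    ring
  have hinv : ∀ g, V.character g = ν g * V.character g⁻¹ := by
    intro g
    have h1 : M g * M g⁻¹ = 1 := by rw [← map_mul, mul_inv_cancel, map_one]
    have e00 := congrFun (congrFun h1 0) 0
    have e01 := congrFun (congrFun h1 0) 1
    have e10 := congrFun (congrFun h1 1) 0
    have e11 := congrFun (congrFun h1 1) 1
    simp only [Matrix.mul_apply, Fin.sum_univ_two, Matrix.one_apply, Fin.isValue, if_true,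
      zero_ne_one, one_ne_zero, if_false] at e00 e01 e10 e11
    rw [hχ, hχ, hν]
    linear_combination (-M g 1 1) * e00 + M g 0 1 * e10 - M g 0 0 * e11 + M g 1 0 * e01
  obtain ⟨k, hk⟩ := hG
  let μ : G →* ℂˣ := ν ^ (k + 1)
  have hμ : ∀ g, μ g ^ 2 = ν g := by
    intro g
    change (ν g ^ (k + 1)) ^ 2 = ν g
    rw [← pow_mul, show (k + 1) * 2 = Nat.card G + 1 by omega, pow_succ, ← map_pow,
      pow_card_eq_one', map_one, one_mul]
  have hne : V.character ≠ fun g => (μ g : ℂ) := by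
    intro h
    have h3 := congrFun h 1
    rw [FDRep.char_one, h2, map_one] at h3
    norm_num at h3
  have h0 := Irr_orth ⟨V, hV, rfl⟩ (hom_mem_Irr μ)
  rw [if_neg hne] at h0
  have h1 := Irr_orth (G := G) ⟨V, hV, rfl⟩ ⟨V, hV, rfl⟩
  rw [if_pos rfl] at h1
  have hcop : (Nat.card G).Coprime 2 := by
    rw [Nat.coprime_two_right]; exact ⟨k, hk⟩
  rw [← Equiv.sum_comp (powCoprime hcop)] at h0
  have hterm : ∀ g, V.character (powCoprime hcop g) * (μ (powCoprime hcop g)⁻¹ : ℂ) =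
      V.character g * V.character g⁻¹ - 2 := by
    intro g
    change V.character (g ^ 2) * (μ (g ^ 2)⁻¹ : ℂ) = _
    rw [map_inv, map_pow, hμ, hsq, pow_two]
    nth_rewrite 1 [hinv g]
    have : (ν g : ℂ) ≠ 0 := (ν g).ne_zero
    rw [Units.val_inv_eq_inv_val]
    field_simp
  simp only [hterm, Finset.sum_sub_distrib, h1, Finset.sum_const, Finset.card_univ,
    nsmul_eq_mul, ← Nat.card_eq_fintype_card] at h0
  have h4 : (Nat.card G : ℂ) = 0 := by linear_combination -h0
  exact Nat.cast_ne_zero.2 Nat.card_pos.ne' h4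

/-! ### Simple modules with prescribed eigenvectors -/

theorem exists_maximal_not_mem {R : Type} [Ring R] [IsSemisimpleRing R] (a : R) (ha : a ≠ 0) :
    ∃ I : Submodule R R, IsCoatom I ∧ a ∉ I := by
  by_contra! hc
  have : a ∈ Module.jacobson R R := by
    rw [Module.jacobson, Submodule.mem_sInf]
    exact fun I hI => hc I hI
  rw [IsSemisimpleModule.jacobson_eq_bot R R] at this
  exact ha this

open scoped MonoidAlgebra in
/-- A nonzero element `a` of the group algebra survives in some simple quotient of the regular
module, and its image satisfies every eigenvector equation that `a` satisfies. -/
theorem exists_simple_eigenvector {G : Type} [Group G] [Fintype G] (a : ℂ[G]) (ha : a ≠ 0) :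
    ∃ V : FDRep ℂ G, CategoryTheory.Simple V ∧ ∃ v : V, v ≠ 0 ∧
      ∀ (g : G) (c : ℂ), MonoidAlgebra.single g 1 * a = c • a → V.ρ g v = c • v := by
  obtain ⟨I, hI, haI⟩ := exists_maximal_not_mem a ha
  have hs : IsSimpleModule ℂ[G] (ℂ[G] ⧸ I) := isSimpleModule_iff_isCoatom.2 hI
  let ρ : Representation ℂ G (ℂ[G] ⧸ I) := Representation.ofModule' _
  have hirr : Representation.IsIrreducible ρ := by
    have hnt : Nontrivial (ℂ[G] ⧸ I) := IsSimpleModule.nontrivial ℂ[G] _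
    have hsub : ∀ S : Subrepresentation ρ, S = ⊥ ∨ S = ⊤ := by
      intro S
      let T : Submodule ℂ[G] (ℂ[G] ⧸ I) :=
        { S.toSubmodule with
          smul_mem' := by
            intro c x hx
            induction c using MonoidAlgebra.induction_on with
            | of g => exact S.apply_mem_toSubmodule g hx
            | add f g hf hg => rw [add_smul]; exact S.toSubmodule.add_mem hf hg
            | smul r f hf => rw [smul_assoc]; exact S.toSubmodule.smul_mem r hf }
      have hT : ∀ x, x ∈ T ↔ x ∈ S.toSubmodule := fun x => Iff.rfl
      rcases eq_bot_or_eq_top T with h | h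
      · left
        refine Subrepresentation.toSubmodule_injective (Submodule.ext fun x => ?_)
        rw [← hT, h]; rfl
      · right
        refine Subrepresentation.toSubmodule_injective (Submodule.ext fun x => ?_)
        rw [← hT, h]; rfl
    have hntS : Nontrivial (Subrepresentation ρ) := by
      refine ⟨⊥, ⊤, fun h => ?_⟩
      obtain ⟨x, hx⟩ := exists_ne (0 : ℂ[G] ⧸ I)
      have h1 : x ∈ (⊤ : Subrepresentation ρ).toSubmodule := Submodule.mem_top
      rw [← h] at h1
      exact hx h1
    exact ⟨hsub⟩
  refine ⟨FDRep.of ρ, ?_, I.mkQ a, ?_, ?_⟩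
  · rw [FDRep.simple_iff_char_is_norm_one]
    have hne : (Nat.card G : ℂ) ≠ 0 := Nat.cast_ne_zero.2 Nat.card_pos.ne'
    have : Invertible (Nat.card G : ℂ) := invertibleOfNonzero hne
    have h := Representation.char_orthonormal (ρ := ρ) (σ := ρ)
    rw [inv_mul_eq_iff_eq_mul₀ hne, if_pos ⟨Representation.Equiv.refl ρ⟩, mul_one] at h
    exact h
  · exact fun h => haI ((Submodule.Quotient.mk_eq_zero I).1 h)
  · intro g c h
    change (MonoidAlgebra.single g (1:ℂ)) • I.mkQ a = c • I.mkQ a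
    rw [← map_smul, smul_eq_mul, h]
    rfl

theorem linearIndependent_of_projections {ι V : Type} [AddCommGroup V] [Module ℂ V] (v : ι → V)
    (E : ι → V →ₗ[ℂ] V) (hE : ∀ i, E i (v i) ≠ 0) (hE0 : ∀ i j, i ≠ j → E i (v j) = 0) :
    LinearIndependent ℂ v := by
  rw [linearIndependent_iff']
  intro s c hc i hi
  have h1 := congrArg (E i) hc
  rw [map_sum, map_zero, Finset.sum_eq_single i] at h1
  · rw [map_smul] at h1
    exact (smul_eq_zero.1 h1).resolve_right (hE i)
  · intro j _ hj
    rw [map_smul, hE0 i j (Ne.symm hj), smul_zero]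
  · exact fun h => absurd hi h

/-- The unnormalised projection `∑ x, (lam x)⁻¹ • ρ x` onto the `lam`-eigenspace of `ρ`. -/
noncomputable def eigenProj {H V : Type} [Group H] [Fintype H] [AddCommGroup V] [Module ℂ V]
    (ρ : H →* V →ₗ[ℂ] V) (lam : H →* ℂˣ) : V →ₗ[ℂ] V :=
  ∑ x : H, ((lam x)⁻¹ : ℂˣ).1 • ρ x

theorem eigenProj_same {H V : Type} [Group H] [Fintype H] [AddCommGroup V] [Module ℂ V]
    (ρ : H →* V →ₗ[ℂ] V) (lam : H →* ℂˣ) (v : V) (hv : ∀ x, ρ x v = (lam x : ℂ) • v) :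
    eigenProj ρ lam v = (Fintype.card H : ℂ) • v := by
  simp [eigenProj, LinearMap.sum_apply, hv, smul_smul, Nat.cast_smul_eq_nsmul]

theorem eigenProj_of_ne {H V : Type} [Group H] [Fintype H] [AddCommGroup V] [Module ℂ V]
    (ρ : H →* V →ₗ[ℂ] V) (lam mu : H →* ℂˣ) (hne : lam ≠ mu) (v : V)
    (hv : ∀ x, ρ x v = (mu x : ℂ) • v) : eigenProj ρ lam v = 0 := by
  have h0 := sum_hom_units_eq_zero ((Units.coeHom ℂ).comp (lam⁻¹ * mu)) (by
    intro h
    apply hne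
    ext x
    have h1 := DFunLike.congr_fun h x
    have h2 : ((lam x)⁻¹ * mu x) = 1 := Units.ext h1
    rw [inv_mul_eq_one.1 h2])
  have h1 : eigenProj ρ lam v =
      (∑ x : H, ((Units.coeHom ℂ).comp (lam⁻¹ * mu)) x) • v := by
    simp [eigenProj, LinearMap.sum_apply, hv, smul_smul, Finset.sum_smul]
  rw [h1, h0, zero_smul]

section Weights

variable {G : Type} [Group G] (P K : Subgroup G) [MulAction K (P →* ℂˣ)]

/-- `V` has a nonzero vector on which `P` acts by `lam` and the stabilizer of `lam` in `K`
acts by `sig`. -/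
def Occurs (V : FDRep ℂ G) (lam : P →* ℂˣ) (sig : MulAction.stabilizer K lam →* ℂˣ) : Prop :=
  ∃ v : V, v ≠ 0 ∧ (∀ x : P, V.ρ x v = (lam x : ℂ) • v) ∧
    ∀ k : MulAction.stabilizer K lam, V.ρ k v = (sig k : ℂ) • v

theorem Occurs.of_iso {V W : FDRep ℂ G} (i : V ≅ W) {lam : P →* ℂˣ}
    {sig : MulAction.stabilizer K lam →* ℂˣ} (h : Occurs P K V lam sig) :
    Occurs P K W lam sig := by
  obtain ⟨v, hv0, hv1, hv2⟩ := h
  refine ⟨FDRep.isoToLinearEquiv i v, ?_, fun x => ?_, fun k => ?_⟩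
  · simpa using hv0
  · rw [FDRep.Iso.conj_ρ i, LinearEquiv.conj_apply_apply, LinearEquiv.symm_apply_apply, hv1,
      map_smul]
  · rw [FDRep.Iso.conj_ρ i, LinearEquiv.conj_apply_apply, LinearEquiv.symm_apply_apply, hv2,
      map_smul]

open Classical in
/-- Vectors realising distinct pairs `(lam, sig)` are linearly independent. -/
theorem card_occurs_le_finrank [Fintype G] (V : FDRep ℂ G)
    (s : Finset (Σ lam : P →* ℂˣ, (MulAction.stabilizer K lam →* ℂˣ)))
    (hs : ∀ a ∈ s, Occurs P K V a.1 a.2) : s.card ≤ Module.finrank ℂ V := by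
  choose! v hv0 hv1 hv2 using hs
  let E : (Σ lam : P →* ℂˣ, (MulAction.stabilizer K lam →* ℂˣ)) → V →ₗ[ℂ] V := fun a =>
    (eigenProj (V.ρ.comp (K.subtype.comp (MulAction.stabilizer K a.1).subtype)) a.2).comp
      (eigenProj (V.ρ.comp P.subtype) a.1)
  have hli : LinearIndependent ℂ (fun a : s => v a.1) := by
    refine linearIndependent_of_projections _ (fun a : s => E a.1) ?_ ?_
    · rintro ⟨a, ha⟩
      change eigenProj _ a.2 (eigenProj _ a.1 (v a)) ≠ 0
      rw [eigenProj_same (V.ρ.comp P.subtype) a.1 (v a) (hv1 a ha), map_smul,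
        eigenProj_same _ a.2 (v a) (hv2 a ha)]
      simp only [ne_eq, smul_eq_zero, Nat.cast_eq_zero, Fintype.card_ne_zero, false_or]
      exact hv0 a ha
    · rintro ⟨⟨lam, sig⟩, ha⟩ ⟨⟨mu, tau⟩, hb⟩ hne
      change eigenProj _ sig (eigenProj _ lam (v ⟨mu, tau⟩)) = 0
      by_cases hl : lam = mu
      · subst hl
        have hst : sig ≠ tau := by
          rintro rfl
          exact hne rfl
        rw [eigenProj_same (V.ρ.comp P.subtype) lam _ (hv1 _ hb), map_smul,
          eigenProj_of_ne _ sig tau hst _ (hv2 _ hb), smul_zero]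
      · rw [eigenProj_of_ne (V.ρ.comp P.subtype) lam mu hl _ (hv1 _ hb), map_zero]
  have := hli.fintype_card_le_finrank
  simpa using this

/-- The `K`-translates of a vector of weight `lam` realise every weight in the `K`-orbit of `lam`. -/
theorem index_stabilizer_le_finrank [Fintype G] (V : FDRep ℂ G)
    (hact : ∀ (k : K) (lam : P →* ℂˣ) (x y : P), (y : G) = (k : G)⁻¹ * x * k →
      (k • lam) x = lam y)
    (hnorm : ∀ (k : K) (x : P), (k : G)⁻¹ * x * k ∈ P)
    (lam : P →* ℂˣ) (v : V) (hv : v ≠ 0) (hvP : ∀ x : P, V.ρ x v = (lam x : ℂ) • v) :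
    (MulAction.stabilizer K lam).index ≤ Module.finrank ℂ V := by
  classical
  have hex : ∀ mu : MulAction.orbit K lam, ∃ w : V, w ≠ 0 ∧
      ∀ x : P, V.ρ x w = (mu.1 x : ℂ) • w := by
    rintro ⟨_, k, rfl⟩
    refine ⟨V.ρ k v, fun h => hv ?_, fun x => ?_⟩
    · have h1 : V.ρ (k : G)⁻¹ (V.ρ k v) = v := by
        rw [← Module.End.mul_apply, ← map_mul, inv_mul_cancel, map_one]; rfl
      rw [← h1, h, map_zero]
    · have h1 : (x : G) * k = k * ((k : G)⁻¹ * x * k) := by group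
      rw [← Module.End.mul_apply, ← map_mul, h1, map_mul, Module.End.mul_apply,
        hvP ⟨_, hnorm k x⟩, map_smul]
      change _ = (((k • lam) x : ℂˣ) : ℂ) • _
      rw [hact k lam x ⟨_, hnorm k x⟩ rfl]
  choose w hw0 hw using hex
  have hli : LinearIndependent ℂ w := by
    refine linearIndependent_of_projections _
      (fun mu => eigenProj (V.ρ.comp P.subtype) mu.1) ?_ ?_
    · intro mu
      rw [eigenProj_same _ _ _ (hw mu)]
      simp only [ne_eq, smul_eq_zero, Nat.cast_eq_zero, Fintype.card_ne_zero, false_or]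
      exact hw0 mu
    · intro mu mu' hne
      exact eigenProj_of_ne _ _ _ (fun h => hne (Subtype.ext h)) _ (hw mu')
  have hfin := hli.finite
  have := Fintype.ofFinite (MulAction.orbit K lam)
  have h1 := hli.fintype_card_le_finrank
  rw [MulAction.index_stabilizer, ← Nat.card_coe_set_eq, Nat.card_eq_fintype_card]
  exact h1

open scoped MonoidAlgebra in
open Classical in
/-- Every pair `(lam, sig)` occurs in some simple module. The element
`a = ∑ lam(x)⁻¹ sig(k)⁻¹ x k` of the group algebra is nonzero because `P ∩ K = 1`, and left
multiplication by `P` and by the stabilizer of `lam` scales it as required. -/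
theorem exists_occurs [Fintype G]
    (hact : ∀ (k : K) (lam : P →* ℂˣ) (x y : P), (y : G) = (k : G)⁻¹ * x * k →
      (k • lam) x = lam y)
    (hnorm : ∀ (k : K) (x : P), (k : G)⁻¹ * x * k ∈ P)
    (hdisj : Disjoint P K) (lam : P →* ℂˣ) (sig : MulAction.stabilizer K lam →* ℂˣ) :
    ∃ V : FDRep ℂ G, CategoryTheory.Simple V ∧ Occurs P K V lam sig := by
  let a : ℂ[G] := ∑ x : P, ∑ k : MulAction.stabilizer K lam,
    MonoidAlgebra.single ((x : G) * k) (((lam x)⁻¹ : ℂˣ) * ((sig k)⁻¹ : ℂˣ) : ℂ)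
  have ha : a ≠ 0 := by
    intro h
    have h1 := congrArg (fun f : ℂ[G] => f.coeff 1) h
    have h2 : a.coeff 1 = 1 := by
      have h3 : a.coeff 1 = ∑ x : P, ∑ k : MulAction.stabilizer K lam,
          Finsupp.single ((x : G) * k) (((lam x)⁻¹ : ℂˣ) * ((sig k)⁻¹ : ℂˣ) : ℂ) 1 := by
        simp only [a, MonoidAlgebra.coeff_sum, Finsupp.finsetSum_apply,
          MonoidAlgebra.coeff_single]
      have hx1 : ∀ (x : P) (k : MulAction.stabilizer K lam), (x : G) * k = 1 → x = 1 ∧ k = 1 := by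
        intro x k hxk
        have hxK : (x : G) ∈ K := by
          rw [eq_inv_of_mul_eq_one_left hxk]
          exact K.inv_mem k.1.2
        have hx : (x : G) = 1 := Subgroup.disjoint_def.1 hdisj x.2 hxK
        rw [hx, one_mul] at hxk
        exact ⟨Subtype.ext hx, Subtype.ext (Subtype.ext hxk)⟩
      rw [h3, Finset.sum_eq_single 1, Finset.sum_eq_single 1]
      · simp
      · intro k _ hk
        rw [Finsupp.single_apply, if_neg]
        exact fun h => hk (hx1 _ _ h).2
      · simp
      · intro x _ hx
        refine Finset.sum_eq_zero fun k _ => ?_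
        rw [Finsupp.single_apply, if_neg]
        exact fun h => hx (hx1 _ _ h).1
      · simp
    change a.coeff 1 = 0 at h1
    rw [h2] at h1
    exact one_ne_zero h1
  obtain ⟨V, hV, v, hv0, hv⟩ := exists_simple_eigenvector a ha
  refine ⟨V, hV, v, hv0, fun y => hv _ _ ?_, fun l => hv _ _ ?_⟩
  · simp only [a, Finset.mul_sum, Finset.smul_sum, MonoidAlgebra.single_mul_single,
      MonoidAlgebra.smul_single, one_mul]
    rw [← Equiv.sum_comp (Equiv.mulLeft y⁻¹)]
    refine Finset.sum_congr rfl fun x _ => Finset.sum_congr rfl fun k _ => ?_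
    congr 1
    · simp [mul_assoc]
    · simp
      ring
  · have hconj : ∀ x : P, (l : G) * x * (l : G)⁻¹ ∈ P := by
      intro x
      have := hnorm (l⁻¹ : MulAction.stabilizer K lam) x
      simpa using this
    let c : P ≃ P := 
      { toFun := fun x => ⟨(l : G)⁻¹ * x * l, hnorm l x⟩
        invFun := fun x => ⟨(l : G) * x * (l : G)⁻¹, hconj x⟩
        left_inv := fun x => Subtype.ext (by simp [mul_assoc])
        right_inv := fun x => Subtype.ext (by simp [mul_assoc]) }
    have hc : ∀ x : P, lam (c x) = lam x := by
      intro x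
      rw [← hact l lam x (c x) rfl]
      rw [show (l : K) • lam = lam from l.2]
    simp only [a, Finset.mul_sum, Finset.smul_sum, MonoidAlgebra.single_mul_single,
      MonoidAlgebra.smul_single, one_mul]
    rw [← Equiv.sum_comp c]
    refine Finset.sum_congr rfl fun x _ => ?_
    rw [← Equiv.sum_comp (Equiv.mulLeft l⁻¹)]
    refine Finset.sum_congr rfl fun k _ => ?_
    rw [hc]
    congr 1
    · simp [c, mul_assoc]
    · simp
      ring

end Weights

/-! ### Degrees of irreducible characters -/

theorem finite_hom (H : Type) [Group H] [Finite H] : Finite (H →* ℂˣ) := by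
  have h1 : Finite (H →* ℂ) := (linearIndependent_monoidHom H ℂ).finite
  refine Finite.of_injective (fun f : H →* ℂˣ => (Units.coeHom ℂ).comp f) fun f g h => ?_
  ext x
  exact DFunLike.congr_fun h x

/-- A simple representation affording the irreducible character `χ`. -/
noncomputable def irrRep {G : Type} [Group G] (χ : Irr G) : FDRep ℂ G := χ.2.choose

theorem irrRep_simple {G : Type} [Group G] (χ : Irr G) : CategoryTheory.Simple (irrRep χ) :=
  χ.2.choose_spec.1

theorem irrRep_character {G : Type} [Group G] (χ : Irr G) : χ.1 = (irrRep χ).character :=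
  χ.2.choose_spec.2

/-- The degree of an irreducible character, as a natural number. -/
noncomputable def irrDeg {G : Type} [Group G] (χ : Irr G) : ℕ := Module.finrank ℂ (irrRep χ)

theorem irr_apply_one {G : Type} [Group G] (χ : Irr G) : χ.1 1 = (irrDeg χ : ℂ) := by
  rw [irrRep_character, FDRep.char_one]; rfl

theorem irrDeg_ne_zero {G : Type} [Group G] [Fintype G] (χ : Irr G) : irrDeg χ ≠ 0 := by
  intro h
  have h1 := sum_char_simple _ _ (irrRep_simple χ) (irrRep_simple χ)
  rw [if_pos ⟨CategoryTheory.Iso.refl _⟩] at h1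
  have h2 : Subsingleton (irrRep χ) := Module.finrank_zero_iff.1 h
  have h3 : ∀ g, (irrRep χ).character g = 0 := by
    intro g
    change LinearMap.trace ℂ _ ((irrRep χ).ρ g) = 0
    rw [show (irrRep χ).ρ g = 0 from LinearMap.ext fun v => Subsingleton.elim _ _, map_zero]
  simp only [h3, mul_zero, Finset.sum_const_zero] at h1
  exact Nat.cast_ne_zero.2 Nat.card_pos.ne' h1.symm

theorem irrDeg_eq_one_or_three_le {G : Type} [Group G] [Fintype G] (hG : Odd (Nat.card G))
    (χ : Irr G) : irrDeg χ = 1 ∨ 3 ≤ irrDeg χ := by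
  have h0 := irrDeg_ne_zero χ
  have h2 : irrDeg χ ≠ 2 := finrank_ne_two hG _ (irrRep_simple χ)
  omega

open Classical in
theorem card_linear_le {G : Type} [Group G] [Fintype G] [Fintype (Irr G)] :
    (Finset.univ.filter fun χ : Irr G => irrDeg χ = 1).card ≤ Nat.card (G →* ℂˣ) := by
  have := finite_hom G
  have := Fintype.ofFinite (G →* ℂˣ)
  rw [Nat.card_eq_fintype_card, ← Finset.card_univ]
  have h : ∀ χ : Irr G, irrDeg χ = 1 → ∃ ν : G →* ℂˣ, ∀ g, χ.1 g = ν g := by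
    intro χ hχ
    obtain ⟨ν, hν⟩ := exists_hom_of_degree_one (irrRep χ) hχ
    exact ⟨ν, fun g => by rw [irrRep_character]; exact (hν g).1⟩
  choose! f hf using h
  refine Finset.card_le_card_of_injOn f (fun _ _ => Finset.mem_univ _) ?_
  intro χ hχ ψ hψ h
  replace hχ := (Finset.mem_filter.1 (Finset.mem_coe.1 hχ)).2
  replace hψ := (Finset.mem_filter.1 (Finset.mem_coe.1 hψ)).2
  apply Subtype.ext
  funext g
  rw [hf χ hχ, hf ψ hψ, h]

/-- A linear character is trivial on the commutator subgroup. -/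
theorem finrank_ne_one_of_eigenvector {G : Type} [Group G] (V : FDRep ℂ G) (v : V) (hv : v ≠ 0)
    (x : G) (hx : x ∈ commutator G) (c : ℂ) (hc : c ≠ 1) (hxv : V.ρ x v = c • v) :
    Module.finrank ℂ V ≠ 1 := by
  intro h
  obtain ⟨ν, hν⟩ := exists_hom_of_degree_one V h
  have h1 : ν x = 1 := Abelianization.commutator_subset_ker ν hx
  have h2 := (hν x).2 v
  rw [h1, hxv, Units.val_one] at h2
  exact hc (smul_left_injective ℂ hv h2)

open Classical in
/-- The contribution of the nonlinear characters: distribute `F (irrDeg χ)` over the at most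
`irrDeg χ` pairs `(lam, sig)` assigned to `χ`. -/
theorem sum_nonlinear_ge {G : Type} [Group G] [Fintype G] [Fintype (Irr G)]
    (hG : Odd (Nat.card G)) (P K : Subgroup G) [MulAction K (P →* ℂˣ)]
    (hact : ∀ (k : K) (lam : P →* ℂˣ) (x y : P), (y : G) = (k : G)⁻¹ * x * k →
      (k • lam) x = lam y)
    (hnorm : ∀ (k : K) (x : P), (k : G)⁻¹ * x * k ∈ P)
    (hdisj : Disjoint P K) (F : ℕ → ℝ) (hF : ∀ a b, 3 ≤ a → a ≤ b → F a ≤ F b) (hF3 : 0 ≤ F 3)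
    (S : Finset (P →* ℂˣ))
    (hS : ∀ lam ∈ S, ∃ x : P, (x : G) ∈ commutator G ∧ lam x ≠ 1) :
    ∑ lam ∈ S, (Nat.card (MulAction.stabilizer K lam →* ℂˣ) : ℝ) *
        F (max 3 (MulAction.stabilizer K lam).index) ≤
      ∑ χ ∈ Finset.univ.filter (fun χ : Irr G => 3 ≤ irrDeg χ), (irrDeg χ : ℝ) * F (irrDeg χ) := by
  have hfin : ∀ lam : P →* ℂˣ, Fintype (MulAction.stabilizer K lam →* ℂˣ) := fun lam =>
    have := finite_hom (MulAction.stabilizer K lam)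
    Fintype.ofFinite _
  have hex : ∀ a : (Σ lam : P →* ℂˣ, (MulAction.stabilizer K lam →* ℂˣ)),
      ∃ χ : Irr G, Occurs P K (irrRep χ) a.1 a.2 := by
    rintro ⟨lam, sig⟩
    obtain ⟨V, hV, hocc⟩ := exists_occurs P K hact hnorm hdisj lam sig
    let χ : Irr G := ⟨V.character, V, hV, rfl⟩
    obtain ⟨i⟩ := nonempty_iso_of_character_eq hV (irrRep_simple χ) (irrRep_character χ)
    exact ⟨χ, hocc.of_iso P K i⟩
  choose f hf using hex
  let T : Finset (Σ lam : P →* ℂˣ, (MulAction.stabilizer K lam →* ℂˣ)) :=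
    S.sigma fun _ => Finset.univ
  have hT3 : ∀ a ∈ T, 3 ≤ irrDeg (f a) := by
    intro a ha
    obtain ⟨v, hv0, hv1, -⟩ := hf a
    obtain ⟨x, hx, hx1⟩ := hS a.1 (Finset.mem_sigma.1 ha).1
    refine (irrDeg_eq_one_or_three_le hG (f a)).resolve_left ?_
    exact finrank_ne_one_of_eigenvector _ v hv0 x hx (a.1 x) (fun h => hx1 (Units.ext h)) (hv1 x)
  have h1 : ∑ lam ∈ S, (Nat.card (MulAction.stabilizer K lam →* ℂˣ) : ℝ) *
        F (max 3 (MulAction.stabilizer K lam).index) =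
      ∑ a ∈ T, F (max 3 (MulAction.stabilizer K a.1).index) := by
    rw [Finset.sum_sigma]
    refine Finset.sum_congr rfl fun lam _ => ?_
    dsimp only
    rw [Finset.sum_const, Finset.card_univ, nsmul_eq_mul, Nat.card_eq_fintype_card]
  have h2 : ∑ a ∈ T, F (max 3 (MulAction.stabilizer K a.1).index) ≤
      ∑ a ∈ T, F (irrDeg (f a)) := by
    refine Finset.sum_le_sum fun a ha => hF _ _ (le_max_left _ _) (max_le (hT3 a ha) ?_)
    obtain ⟨v, hv0, hv1, -⟩ := hf a
    exact index_stabilizer_le_finrank P K _ hact hnorm a.1 v hv0 hv1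
  have h3 : ∑ a ∈ T, F (irrDeg (f a)) =
      ∑ χ ∈ Finset.univ.filter (fun χ : Irr G => 3 ≤ irrDeg χ),
        ∑ a ∈ T with f a = χ, F (irrDeg (f a)) := by
    rw [Finset.sum_fiberwise_of_maps_to]
    intro a ha
    simpa using hT3 a ha
  rw [h1]
  refine h2.trans (h3.le.trans (Finset.sum_le_sum fun χ hχ => ?_))
  have hχ3 : 3 ≤ irrDeg χ := by simpa using hχ
  have h4 : ∑ a ∈ T with f a = χ, F (irrDeg (f a)) =
      ((T.filter fun a => f a = χ).card : ℝ) * F (irrDeg χ) := by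
    rw [← nsmul_eq_mul, ← Finset.sum_const]
    refine Finset.sum_congr rfl fun a ha => ?_
    rw [(Finset.mem_filter.1 ha).2]
  rw [h4]
  refine mul_le_mul_of_nonneg_right ?_ (hF3.trans (hF 3 _ le_rfl hχ3))
  refine Nat.cast_le.2 (card_occurs_le_finrank P K (irrRep χ) _ fun a ha => ?_)
  rw [← (Finset.mem_filter.1 ha).2]
  exact hf a

/-! ### Linear characters and coprime actions -/

/-- The kernel of restriction to `S` consists of characters that are functions on `K ⧸ S`; they are
linearly independent, so there are at most `S.index` of them. -/
theorem card_hom_le_index_mul {K : Type} [Group K] [Finite K] (S : Subgroup K) :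
    Nat.card (K →* ℂˣ) ≤ S.index * Nat.card (S →* ℂˣ) := by
  have := finite_hom K
  have := finite_hom S
  let r : (K →* ℂˣ) →* (S →* ℂˣ) := MonoidHom.compHom' S.subtype
  have hker : Nat.card r.ker ≤ S.index := by
    have hinv : ∀ (f : r.ker) (a b : K), (QuotientGroup.leftRel S) a b →
        ((f.1 a : ℂˣ) : ℂ) = ((f.1 b : ℂˣ) : ℂ) := by
      intro f a b hab
      rw [QuotientGroup.leftRel_apply] at hab
      have h1 : f.1 (a⁻¹ * b) = 1 := DFunLike.congr_fun f.2 (⟨_, hab⟩ : S)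
      rw [map_mul, map_inv, inv_mul_eq_one] at h1
      rw [h1]
    let B : r.ker → (K ⧸ S) → ℂ := fun f => Quotient.lift (fun a => ((f.1 a : ℂˣ) : ℂ)) (hinv f)
    have hli : LinearIndependent ℂ B := by
      refine LinearIndependent.of_comp (LinearMap.funLeft ℂ ℂ (QuotientGroup.mk : K → K ⧸ S)) ?_
      have h1 := (linearIndependent_monoidHom K ℂ).comp
        (fun f : r.ker => (Units.coeHom ℂ).comp f.1) (by
          intro f g h
          refine Subtype.ext (MonoidHom.ext fun x => Units.ext ?_)
          exact DFunLike.congr_fun h x)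
      exact h1
    have := Fintype.ofFinite r.ker
    have := Fintype.ofFinite (K ⧸ S)
    have h2 := hli.fintype_card_le_finrank
    rw [Module.finrank_fintype_fun_eq_card] at h2
    rwa [Nat.card_eq_fintype_card, Subgroup.index_eq_card, Nat.card_eq_fintype_card]
  have h1 : Nat.card (K →* ℂˣ) = r.ker.index * Nat.card r.ker := (Subgroup.index_mul_card _).symm
  rw [h1, Subgroup.index_ker, mul_comm]
  exact Nat.mul_le_mul hker (Subgroup.card_le_card_group _)

theorem prime_mul_card_le {A : Type} [CommGroup A] [Finite A] {p : ℕ} [Fact p.Prime] (hA : IsPGroup p A) (B : Subgroup A)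
    (hB : B ≠ ⊤) : p * Nat.card B ≤ Nat.card A := by
  rw [← B.index_mul_card]
  refine Nat.mul_le_mul_right _ ?_
  obtain ⟨n, hn⟩ := hA.index B
  rw [hn]
  have hn0 : n ≠ 0 := by
    rintro rfl
    exact hB (Subgroup.index_eq_one.1 (by simpa using hn))
  exact Nat.le_self_pow hn0 p

section Combinatorics

variable {K A : Type} [Group K] [CommGroup A] [MulDistribMulAction K A]

/-- Iterating `k • a = a * s` shows that the order of `s` divides `|K|`, which is prime to `p`. -/
theorem eq_one_of_smul_eq_mul {p : ℕ} [Fact p.Prime] (hA : IsPGroup p A)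
    (hK : (Nat.card K).Coprime p) {k : K} {a s : A} (hs : ∀ l : K, l • s = s)
    (h : k • a = a * s) : s = 1 := by
  have hpow : ∀ n : ℕ, k ^ n • a = a * s ^ n := by
    intro n
    induction n with
    | zero => simp
    | succ n ih => rw [pow_succ', mul_smul, ih, smul_mul', h, smul_pow', hs, mul_assoc, pow_succ']
  have h1 := hpow (Nat.card K)
  rw [pow_card_eq_one', one_smul, left_eq_mul] at h1
  obtain ⟨j, hj⟩ := hA s
  exact eq_one_of_pow_coprime (hK.pow_right j) h1 hj

/-- Here `k ^ 2` fixes `a`, hence so does `k` since `|K|` is odd, and so `a ^ 2 ∈ B`. -/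
theorem mem_of_smul_eq_inv_mul {p : ℕ} [Fact p.Prime] (hp : Odd p) (hA : IsPGroup p A)
    (hK : Odd (Nat.card K)) (B : Subgroup A) {k : K} {a s : A} (hsB : s ∈ B)
    (hs : ∀ l : K, l • s = s) (h : k • a = a⁻¹ * s) : a ∈ B := by
  have h2 : k ^ 2 • a = a := by
    rw [pow_two, mul_smul, h, smul_mul', smul_inv', hs, h]; simp
  have hka : k • a = a := by
    obtain ⟨n, hn⟩ := hK
    have h3 : k = (k ^ 2) ^ (n + 1) := by
      rw [← pow_mul, show 2 * (n + 1) = Nat.card K + 1 by omega, pow_succ, pow_card_eq_one', one_mul]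
    rw [h3]
    have : k ^ 2 ∈ MulAction.stabilizer K a := h2
    exact (MulAction.stabilizer K a).pow_mem this (n + 1)
  rw [hka] at h
  have h4 : a ^ 2 ∈ B := by
    rw [pow_two]
    nth_rewrite 2 [h]
    simpa using hsB
  obtain ⟨j, hj⟩ := hA a
  obtain ⟨i, hi⟩ := hp.pow (n := j)
  have h5 : a = (a ^ 2) ^ (i + 1) := by
    rw [← pow_mul, show 2 * (i + 1) = p ^ j + 1 by omega, pow_succ, hj, one_mul]
  rw [h5]
  exact B.pow_mem h4 _

/-- The weight `((p + 8) t - 3 (p + 2)) / t` attached to a character of degree `t`. -/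
noncomputable def wt (p t : ℕ) : ℝ := (p : ℝ) + 8 - (3 * p + 6) / t

theorem wt_mono (p a b : ℕ) (ha : 3 ≤ a) (hab : a ≤ b) : wt p a ≤ wt p b := by
  unfold wt
  have h1 : (0 : ℝ) < a := by exact_mod_cast (by omega : 0 < a)
  have h2 : (a : ℝ) ≤ b := by exact_mod_cast hab
  have : (3 * (p : ℝ) + 6) / b ≤ (3 * p + 6) / a :=
    div_le_div_of_nonneg_left (by positivity) h1 h2
  linarith

theorem wt_three (p : ℕ) : wt p 3 = 6 := by
  unfold wt; push_cast; ring

theorem two_le_wt_div {p t : ℕ} (ht : 1 ≤ t) (htp : 3 * t ≤ p + 2) :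
    2 ≤ wt p (max 3 t) / t := by
  have h1 : (0 : ℝ) < t := by exact_mod_cast ht
  rw [le_div_iff₀ h1]
  rcases le_total t 3 with h | h
  · rw [max_eq_left h, wt_three]
    have : (t : ℝ) ≤ 3 := by exact_mod_cast h
    linarith
  · rw [max_eq_right h]
    have h3 : (3 : ℝ) ≤ t := by exact_mod_cast h
    have h4 : 3 * (t : ℝ) ≤ p + 2 := by exact_mod_cast htp
    unfold wt
    have : (3 * (p : ℝ) + 6) / t ≤ p + 8 - 2 * t := by
      rw [div_le_iff₀ h1]
      nlinarith
    linarith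

theorem le_wt_of_lt {p t : ℕ} (ht : 1 ≤ t) (htp : p + 2 < 3 * t) : (p : ℝ) - 1 ≤ wt p t := by
  have h1 : (0 : ℝ) < t := by exact_mod_cast ht
  have h4 : (p : ℝ) + 2 < 3 * t := by exact_mod_cast htp
  unfold wt
  have : (3 * (p : ℝ) + 6) / t ≤ 9 := by
    rw [div_le_iff₀ h1]
    linarith
  linarith

open Classical in
/-- The weight estimate for a group `K` of odd order prime to `p` acting on an abelian `p`-group `A`
and fixing a proper subgroup `B` pointwise. -/
theorem sum_wt_ge [Finite K] [Fintype A] {p : ℕ} [Fact p.Prime] (hp : Odd p) (hp7 : 7 ≤ p)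
    (hA : IsPGroup p A) (hKodd : Odd (Nat.card K)) (hK : (Nat.card K).Coprime p)
    (B : Subgroup A) (hB : B ≠ ⊤) (hfix : ∀ s ∈ B, ∀ k : K, k • s = s) :
    2 * ((p : ℝ) - 1) * Nat.card B ≤ ∑ a ∈ Finset.univ.filter (fun a : A => a ∉ B),
      wt p (max 3 (MulAction.stabilizer K a).index) / (MulAction.stabilizer K a).index := by
  have hpos : ∀ a : A, 1 ≤ (MulAction.stabilizer K a).index := fun a =>
    Nat.one_le_iff_ne_zero.2 Subgroup.index_ne_zero_of_finite
  have hnn : ∀ a : A,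
      0 ≤ wt p (max 3 (MulAction.stabilizer K a).index) / (MulAction.stabilizer K a).index := by
    intro a
    refine div_nonneg ?_ (Nat.cast_nonneg _)
    have := wt_mono p 3 _ le_rfl (le_max_left 3 (MulAction.stabilizer K a).index)
    rw [wt_three] at this
    linarith
  by_cases hall : ∀ a ∉ B, 3 * (MulAction.stabilizer K a).index ≤ p + 2
  · have hcard : (p - 1) * Nat.card B ≤ (Finset.univ.filter (fun a : A => a ∉ B)).card := by
      have h1 := prime_mul_card_le hA B hB
      have h2 : (Finset.univ.filter (fun a : A => a ∈ B)).card = Nat.card B := by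
        rw [Nat.card_eq_fintype_card]
        exact (Fintype.card_subtype _).symm
      have h3 := Finset.card_filter_add_card_filter_not (s := (Finset.univ : Finset A)) (fun a => a ∈ B)
      rw [h2, Finset.card_univ, ← Nat.card_eq_fintype_card] at h3
      rw [Nat.sub_mul, one_mul]
      omega
    have h1 : (((p - 1 : ℕ) * Nat.card B : ℕ) : ℝ) * 2 ≤
        ∑ a ∈ Finset.univ.filter (fun a : A => a ∉ B), (2 : ℝ) := by
      rw [Finset.sum_const, nsmul_eq_mul]
      exact mul_le_mul_of_nonneg_right (by exact_mod_cast hcard) (by norm_num)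
    rw [Nat.cast_mul, Nat.cast_sub (by omega), Nat.cast_one] at h1
    calc 2 * ((p : ℝ) - 1) * Nat.card B = ((p : ℝ) - 1) * Nat.card B * 2 := by ring
      _ ≤ _ := h1
      _ ≤ _ := Finset.sum_le_sum fun a ha =>
        two_le_wt_div (hpos a) (hall a (Finset.mem_filter.1 ha).2)
  · push Not at hall
    obtain ⟨a, haB, hat⟩ := hall
    set t := (MulAction.stabilizer K a).index with ht
    -- The elements `m ^ (±1) * s` with `m` in the orbit of `a` and `s ∈ B` are pairwise distinct.
    let f : MulAction.orbit K a × B × Bool → A := fun x =>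
      if x.2.2 then x.1.1 * x.2.1 else x.1.1⁻¹ * x.2.1
    have horbB : ∀ m : MulAction.orbit K a, m.1 ∉ B := by
      rintro ⟨_, k, rfl⟩ hm
      have h1 := hfix _ hm k⁻¹
      change k⁻¹ • k • a = k • a at h1
      rw [inv_smul_smul] at h1
      rw [h1] at haB
      exact haB hm
    have horbk : ∀ m m' : MulAction.orbit K a, ∃ k : K, k • m.1 = m'.1 := by
      rintro ⟨_, k, rfl⟩ ⟨_, k', rfl⟩
      exact ⟨k' * k⁻¹, by simp [mul_smul]⟩
    have hinj : Function.Injective f := by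
      have hsame : ∀ (m m' : MulAction.orbit K a) (s s' : B), m.1 * s = m'.1 * s' →
          m = m' ∧ s = s' := by
        intro m m' s s' h
        obtain ⟨k, hk⟩ := horbk m m'
        have h1 : k • m.1 = m.1 * (s * s'⁻¹ : B).1 := by
          rw [hk, Subgroup.coe_mul, Subgroup.coe_inv, ← mul_assoc, h]; simp
        have h2 := eq_one_of_smul_eq_mul hA hK (hfix _ (s * s'⁻¹ : B).2) h1
        have h3 : s = s' := mul_inv_eq_one.1 (Subtype.ext h2)
        rw [h3] at h
        exact ⟨Subtype.ext (mul_right_cancel h), h3⟩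
      have hdiff : ∀ (m m' : MulAction.orbit K a) (s s' : B), m'.1⁻¹ * s' = m.1 * s → False := by
        intro m m' s s' h
        obtain ⟨k, hk⟩ := horbk m m'
        have h1 : k • m.1 = m.1⁻¹ * (s' * s⁻¹ : B).1 := by
          rw [hk, Subgroup.coe_mul, Subgroup.coe_inv]
          rw [← mul_inv_eq_iff_eq_mul, mul_assoc, inv_mul_eq_iff_eq_mul] at h
          rw [h]
          rw [mul_comm m'.1, inv_mul_cancel_left]
        exact horbB m (mem_of_smul_eq_inv_mul hp hA hKodd B (s' * s⁻¹ : B).2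
          (hfix _ (s' * s⁻¹ : B).2) h1)
      rintro ⟨m, s, e⟩ ⟨m', s', e'⟩ h
      rcases e with - | - <;> rcases e' with - | - <;> simp only [f, if_true, if_false, Bool.false_eq_true] at h
      · have h' : m.1 * (s⁻¹ : B).1 = m'.1 * (s'⁻¹ : B).1 := by
          have := congrArg (·⁻¹) h
          simpa [mul_comm] using this
        obtain ⟨h1, h2⟩ := hsame _ _ _ _ h'
        rw [h1, inv_injective h2]
      · exact (hdiff _ _ _ _ h).elim
      · exact (hdiff _ _ _ _ h.symm).elim
      · obtain ⟨h1, h2⟩ := hsame _ _ _ _ h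
        rw [h1, h2]
    have hfB : ∀ x, f x ∉ B := by
      rintro ⟨m, s, e⟩ h
      rcases e with - | - <;> simp only [f, if_true, if_false, Bool.false_eq_true] at h
      · exact horbB m (by simpa using (B.mul_mem_cancel_right s.2).1 h)
      · exact horbB m ((B.mul_mem_cancel_right s.2).1 h)
    have horbt : ∀ m : MulAction.orbit K a, (MulAction.stabilizer K m.1).index = t := by
      intro m
      rw [ht, MulAction.index_stabilizer, MulAction.index_stabilizer,
        MulAction.orbit_eq_iff.2 m.2]
    -- `K` fixes `B` pointwise, so `f x` has the same stabilizer as its orbit component.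
    have hft : ∀ x, (MulAction.stabilizer K (f x)).index = t := by
      rintro ⟨m, s, e⟩
      rw [← horbt m]
      congr 1
      ext k
      rw [MulAction.mem_stabilizer_iff, MulAction.mem_stabilizer_iff]
      rcases e with - | - <;> simp [f, smul_mul', hfix s.1 s.2 k]
    have := Fintype.ofFinite (MulAction.orbit K a)
    have hcardorb : Fintype.card (MulAction.orbit K a) = t := by
      rw [ht, MulAction.index_stabilizer, ← Nat.card_coe_set_eq, Nat.card_eq_fintype_card]
    have ht1 : 1 ≤ t := hpos a
    have ht0 : (t : ℝ) ≠ 0 := by exact_mod_cast (by omega : t ≠ 0)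
    have hsub : Finset.univ.image f ⊆ Finset.univ.filter (fun a : A => a ∉ B) := by
      intro b hb
      obtain ⟨x, -, rfl⟩ := Finset.mem_image.1 hb
      exact Finset.mem_filter.2 ⟨Finset.mem_univ _, hfB x⟩
    refine le_trans ?_ (Finset.sum_le_sum_of_subset_of_nonneg hsub fun b _ _ => hnn b)
    rw [Finset.sum_image fun x _ y _ h => hinj h]
    simp only [hft]
    rw [Finset.sum_const, Finset.card_univ, Fintype.card_prod, Fintype.card_prod, hcardorb,
      Fintype.card_bool, nsmul_eq_mul, max_eq_right (by omega : 3 ≤ t),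
      ← Nat.card_eq_fintype_card]
    have h9 := le_wt_of_lt ht1 hat
    push_cast
    have h10 : (t : ℝ) * (Nat.card B * 2) * (wt p t / t) = wt p t * (2 * Nat.card B) := by
      field_simp
    rw [h10]
    have h11 := mul_le_mul_of_nonneg_right h9 (by positivity : (0 : ℝ) ≤ 2 * Nat.card B)
    linarith

end Combinatorics

/-! ### The Sylow normalizer and the total weight -/

/-- The action of `K` on the linear characters of `P` induced by an action of `K` on `P`. -/
@[reducible]
def dualAction {K P : Type} [Group K] [Group P] (φ : K →* MulAut P) :
    MulDistribMulAction K (P →* ℂˣ) where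
  smul k lam := lam.comp (φ k⁻¹).toMonoidHom
  one_smul lam := by
    ext x
    change ((lam (φ 1⁻¹ x) : ℂˣ) : ℂ) = _
    simp
  mul_smul k l lam := by
    ext x
    change ((lam (φ (k * l)⁻¹ x) : ℂˣ) : ℂ) = lam (φ l⁻¹ (φ k⁻¹ x))
    rw [mul_inv_rev, map_mul]; rfl
  smul_mul _ _ _ := rfl
  smul_one _ := rfl

theorem isPGroup_hom {P : Type} [Group P] {p : ℕ} [Fact p.Prime] [Finite P] (hP : IsPGroup p P) :
    IsPGroup p (P →* ℂˣ) := by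
  obtain ⟨n, hn⟩ := IsPGroup.iff_card.1 hP
  intro lam
  refine ⟨n, MonoidHom.ext fun x => ?_⟩
  rw [MonoidHom.pow_apply, ← map_pow, ← hn, pow_card_eq_one', map_one]; rfl

theorem exists_hom_ne_one {P : Type} [Group P] [Finite P] {x : P} (hx : x ∉ commutator P) :
    ∃ lam : P →* ℂˣ, lam x ≠ 1 := by
  have hx1 : Abelianization.of x ≠ 1 := fun h => hx ((QuotientGroup.eq_one_iff x).1 h)
  obtain ⟨f, hf⟩ := CommGroup.exists_apply_ne_one_of_hasEnoughRootsOfUnity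
    (Abelianization P) ℂ hx1
  exact ⟨f.comp Abelianization.of, hf⟩

/-- Schur–Zassenhaus in the normalizer of a Sylow subgroup. -/
theorem exists_normalizer_complement {G : Type} [Group G] [Finite G] {p : ℕ} [Fact p.Prime]
    (P : Sylow p G) : ∃ K : Subgroup G, (P : Subgroup G) ⊔ K = Subgroup.normalizer (P : Set G) ∧
      Disjoint (P : Subgroup G) K ∧ (Nat.card K).Coprime p := by
  set N := Subgroup.normalizer (P : Set G) with hN
  have hPN : (P : Subgroup G) ≤ N := Subgroup.le_normalizer
  have hnorm : ((P : Subgroup G).subgroupOf N).Normal := Subgroup.normal_in_normalizer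
  have hidx : ¬ p ∣ ((P : Subgroup G).subgroupOf N).index := fun h =>
    P.not_dvd_index (h.trans (Subgroup.relIndex_dvd_index_of_le hPN))
  have hcop : ((P : Subgroup G).subgroupOf N).index.Coprime p :=
    ((Nat.Prime.coprime_iff_not_dvd Fact.out).2 hidx).symm
  have hcardP : Nat.card ((P : Subgroup G).subgroupOf N) = Nat.card P :=
    Nat.card_congr (Subgroup.subgroupOfEquivOfLe hPN).toEquiv
  obtain ⟨n, hn⟩ := IsPGroup.iff_card.1 P.isPGroup'
  obtain ⟨H, hH⟩ := Subgroup.exists_right_complement'_of_coprime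
    (N := (P : Subgroup G).subgroupOf N) (by
      rw [hcardP, hn]
      exact (hcop.pow_right n).symm)
  refine ⟨H.map N.subtype, ?_, ?_, ?_⟩
  · have h1 := congrArg (Subgroup.map N.subtype) hH.sup_eq_top
    rw [Subgroup.map_sup, Subgroup.map_subgroupOf_eq_of_le hPN, ← MonoidHom.range_eq_map,
      Subgroup.range_subtype] at h1
    exact h1
  · have h1 := hH.disjoint
    rw [Subgroup.disjoint_def] at h1 ⊢
    rintro x hx ⟨y, hy, rfl⟩
    rw [h1 (Subgroup.mem_subgroupOf.2 hx) hy, map_one]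
  · rw [Nat.card_congr (H.equivMapOfInjective _ N.subtype_injective).toEquiv.symm,
      ← hH.symm.index_eq_card]
    exact hcop

/-- If `G` has odd order and no normal `p`-complement, the total weight of its irreducible characters
is nonnegative. -/
theorem average_degree_aux (G : Type) [Group G] [Fintype G] (hG : Odd (Nat.card G))
    (p : ℕ) [Fact p.Prime] (hpodd : Odd p) (hp7 : 7 ≤ p) [Fintype (Irr G)]
    (hnot : ¬ HasNormalPComplement G p) :
    0 ≤ ∑ χ : Irr G, (((p : ℝ) + 8) * irrDeg χ - 3 * (p + 2)) := by
  classical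
  let P : Sylow p G := default
  obtain ⟨x0, hx0, hx0P⟩ := SetLike.not_le_iff_exists.1 (fun h => hnot (tate P h))
  rw [Subgroup.mem_subgroupOf] at hx0
  obtain ⟨K, hsup, hdisj, hcop⟩ := exists_normalizer_complement P
  have hKN : K ≤ Subgroup.normalizer (P : Set G) := hsup ▸ le_sup_right
  have hKodd : Odd (Nat.card K) := hG.of_dvd_nat (Subgroup.card_subgroup_dvd_card K)
  let _ := dualAction ((P : Subgroup G).normalizerMonoidHom.comp (Subgroup.inclusion hKN))
  have hnorm : ∀ (k : K) (x : P), (k : G)⁻¹ * x * k ∈ (P : Subgroup G) := by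
    intro k x
    have := (Subgroup.mem_normalizer_iff.1 (hKN (K.inv_mem k.2)) (x : G)).1 x.2
    simpa using this
  have hact : ∀ (k : K) (lam : P →* ℂˣ) (x y : P), (y : G) = (k : G)⁻¹ * x * k →
      (k • lam) x = lam y := by
    intro k lam x y hy
    change lam _ = lam y
    congr 1
    apply Subtype.ext
    rw [hy]
    change ((k⁻¹ : K) : G) * x * ((k⁻¹ : K) : G)⁻¹ = _
    simp
  have := finite_hom P
  have := finite_hom K
  have := Fintype.ofFinite (P →* ℂˣ)
  let B : Subgroup (P →* ℂˣ) :=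
    { carrier := {lam | ∀ x : P, (x : G) ∈ commutator G → lam x = 1}
      one_mem' := fun _ _ => rfl
      mul_mem' := fun {a b} ha hb x hx => by rw [MonoidHom.mul_apply, ha x hx, hb x hx, one_mul]
      inv_mem' := fun {a} ha x hx => by rw [MonoidHom.inv_apply, ha x hx, inv_one] }
  have hB : B ≠ ⊤ := by
    intro h
    obtain ⟨lam, hlam⟩ := exists_hom_ne_one hx0P
    have h1 : lam ∈ B := h ▸ Subgroup.mem_top lam
    exact hlam (h1 x0 hx0)
  have hfix : ∀ s ∈ B, ∀ k : K, k • s = s := by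
    intro s hs k
    refine MonoidHom.ext fun x => ?_
    rw [hact k s x ⟨_, hnorm k x⟩ rfl]
    have h1 := hs (⟨_, hnorm k x⟩ * x⁻¹) (by
      have h2 := Subgroup.commutator_mem_commutator (Subgroup.mem_top (k : G)⁻¹)
        (Subgroup.mem_top (x : G))
      have h3 : (k : G)⁻¹ * x * (k : G)⁻¹⁻¹ * (x : G)⁻¹ ∈ commutator G := h2
      simpa using h3)
    rwa [map_mul, map_inv, mul_inv_eq_one] at h1
  have hlin : Nat.card (G →* ℂˣ) ≤ Nat.card B * Nat.card (K →* ℂˣ) := by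
    rw [← Nat.card_prod]
    refine Nat.card_le_card_of_injective (fun ν : G →* ℂˣ =>
      ((⟨ν.comp (P : Subgroup G).subtype, fun x hx =>
        Abelianization.commutator_subset_ker ν hx⟩ : B), ν.comp K.subtype)) ?_
    intro ν μ h
    have hP1 : ∀ x ∈ P, ν x = μ x := fun x hx =>
      DFunLike.congr_fun (congrArg Subtype.val (Prod.ext_iff.1 h).1) (⟨x, hx⟩ : P)
    have hK1 : ∀ x ∈ K, ν x = μ x := fun x hx =>
      DFunLike.congr_fun (Prod.ext_iff.1 h).2 (⟨x, hx⟩ : K)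
    have hPk : (P : Subgroup G) ≤ (ν / μ).ker := fun x hx => by
      rw [MonoidHom.mem_ker, MonoidHom.div_apply, hP1 x hx, div_self']
    have hKk : K ≤ (ν / μ).ker := fun x hx => by
      rw [MonoidHom.mem_ker, MonoidHom.div_apply, hK1 x hx, div_self']
    have hGk : commutator G ≤ (ν / μ).ker := Abelianization.commutator_subset_ker _
    have hNormal : ((P : Subgroup G) ⊔ commutator G).Normal :=
      Subgroup.Normal.of_commutator_le G le_sup_right
    have hfr := Sylow.normalizer_sup_eq_top' (N := (P : Subgroup G) ⊔ commutator G) P le_sup_left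
    have htop : (⊤ : Subgroup G) ≤ (ν / μ).ker := by
      rw [← hfr, ← hsup]
      exact sup_le (sup_le hPk hKk) (sup_le hPk hGk)
    refine MonoidHom.ext fun g => ?_
    have := htop (Subgroup.mem_top g)
    rwa [MonoidHom.mem_ker, MonoidHom.div_apply, div_eq_one] at this
  have h1 := sum_nonlinear_ge hG (P : Subgroup G) K hact hnorm hdisj (wt p) (wt_mono p)
    (by rw [wt_three]; norm_num) (Finset.univ.filter fun lam => lam ∉ B) (by
      intro lam hlam
      have h := (Finset.mem_filter.1 hlam).2
      by_contra! hc
      exact h fun x hx => hc x hx)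
  have h2 := sum_wt_ge hpodd hp7 (isPGroup_hom P.isPGroup') hKodd hcop B hB hfix
  have h3 : (Nat.card (K →* ℂˣ) : ℝ) * ∑ lam ∈ Finset.univ.filter (fun lam : P →* ℂˣ => lam ∉ B),
      wt p (max 3 (MulAction.stabilizer K lam).index) / (MulAction.stabilizer K lam).index ≤
      ∑ lam ∈ Finset.univ.filter (fun lam : P →* ℂˣ => lam ∉ B),
        (Nat.card (MulAction.stabilizer K lam →* ℂˣ) : ℝ) *
        wt p (max 3 (MulAction.stabilizer K lam).index) := by
    rw [Finset.mul_sum]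
    refine Finset.sum_le_sum fun lam _ => ?_
    have ht : (0 : ℝ) < (MulAction.stabilizer K lam).index := by
      exact_mod_cast Nat.pos_of_ne_zero Subgroup.index_ne_zero_of_finite
    have hw : 0 ≤ wt p (max 3 (MulAction.stabilizer K lam).index) := by
      have := wt_mono p 3 _ le_rfl (le_max_left 3 (MulAction.stabilizer K lam).index)
      rw [wt_three] at this
      linarith
    have hc : (Nat.card (K →* ℂˣ) : ℝ) ≤ (MulAction.stabilizer K lam).index *
        Nat.card (MulAction.stabilizer K lam →* ℂˣ) := by
      exact_mod_cast card_hom_le_index_mul (MulAction.stabilizer K lam)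
    rw [← mul_div_assoc, div_le_iff₀ ht]
    nlinarith [mul_le_mul_of_nonneg_right hc hw]
  have hp1 : (0 : ℝ) ≤ (p : ℝ) - 1 := by
    have : (7 : ℝ) ≤ p := by exact_mod_cast hp7
    linarith
  have h4 : ((Finset.univ.filter fun χ : Irr G => irrDeg χ = 1).card : ℝ) ≤
      Nat.card B * Nat.card (K →* ℂˣ) := by
    exact_mod_cast card_linear_le.trans hlin
  have h5 : (Nat.card (K →* ℂˣ) : ℝ) * (2 * ((p : ℝ) - 1) * Nat.card B) ≤
      ∑ χ ∈ Finset.univ.filter (fun χ : Irr G => 3 ≤ irrDeg χ),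
        (irrDeg χ : ℝ) * wt p (irrDeg χ) :=
    (mul_le_mul_of_nonneg_left h2 (Nat.cast_nonneg _)).trans (h3.trans h1)
  have h6 : ∑ χ ∈ Finset.univ.filter (fun χ : Irr G => 3 ≤ irrDeg χ),
      (irrDeg χ : ℝ) * wt p (irrDeg χ) =
      ∑ χ ∈ Finset.univ.filter (fun χ : Irr G => 3 ≤ irrDeg χ),
        (((p : ℝ) + 8) * irrDeg χ - 3 * (p + 2)) := by
    refine Finset.sum_congr rfl fun χ hχ => ?_
    have h : (irrDeg χ : ℝ) ≠ 0 := by exact_mod_cast irrDeg_ne_zero χ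
    unfold wt
    field_simp
    ring
  have h7 : ∑ χ ∈ Finset.univ.filter (fun χ : Irr G => ¬ 3 ≤ irrDeg χ),
        (((p : ℝ) + 8) * irrDeg χ - 3 * (p + 2)) =
      ((Finset.univ.filter fun χ : Irr G => irrDeg χ = 1).card : ℝ) * (-(2 * ((p : ℝ) - 1))) := by
    rw [← nsmul_eq_mul, ← Finset.sum_const]
    have hfilter : (Finset.univ.filter fun χ : Irr G => ¬ 3 ≤ irrDeg χ) =
        Finset.univ.filter fun χ : Irr G => irrDeg χ = 1 := by
      refine Finset.filter_congr fun χ _ => ?_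
      have := irrDeg_eq_one_or_three_le hG χ
      omega
    rw [hfilter]
    refine Finset.sum_congr rfl fun χ hχ => ?_
    rw [(Finset.mem_filter.1 hχ).2]
    push_cast
    ring
  rw [← Finset.sum_filter_add_sum_filter_not Finset.univ (fun χ : Irr G => 3 ≤ irrDeg χ), h7, ← h6]
  nlinarith [mul_le_mul_of_nonneg_right h4 (by linarith : (0 : ℝ) ≤ 2 * ((p : ℝ) - 1))]

theorem average_degree_p_nilpotent_one_mod_three
    (G : Type) [Group G] [Fintype G] (hG : Odd (Nat.card G))
    (p : ℕ) (hp : p.Prime) (hpodd : Odd p) (hmod : p % 3 = 1)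
    (h : acd G < 3 * ((p : ℝ) + 2) / ((p : ℝ) + 8)) :
    HasNormalPComplement G p := by
  by_contra hnot
  have : Fact p.Prime := ⟨hp⟩
  have hp7 : 7 ≤ p := by
    have h2 := hp.two_le
    obtain ⟨k, hk⟩ := hpodd
    omega
  have := (Irr_finite G).fintype
  have h1 := average_degree_aux G hG p hpodd hp7 hnot
  have h2 : ∑ᶠ χ ∈ Irr G, (χ 1).re = ∑ χ : Irr G, (irrDeg χ : ℝ) := by
    rw [← finsum_set_coe_eq_finsum_mem, finsum_eq_sum_of_fintype]
    refine Finset.sum_congr rfl fun χ _ => ?_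
    rw [irr_apply_one, Complex.natCast_re]
  have hne : Nonempty (Irr G) := ⟨⟨_, hom_mem_Irr 1⟩⟩
  have hn : (0 : ℝ) < Nat.card (Irr G) := by exact_mod_cast Nat.card_pos
  have hp8 : (0 : ℝ) < (p : ℝ) + 8 := by positivity
  unfold acd at h
  rw [h2, div_lt_div_iff₀ hn hp8] at h
  rw [Finset.sum_sub_distrib, ← Finset.mul_sum, Finset.sum_const, Finset.card_univ, nsmul_eq_mul,
    ← Nat.card_eq_fintype_card] at h1
  linarith
end

section
/- Let G be a finite group of odd order and let p be an odd prime with p ≡ 2 (mod 3) such that (p-1)/2 is even. If acd(G) < 3(p²+2)/(p²+8), then G is p-nilpotent. -/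
namespace OddAcd

set_option linter.unusedSectionVars false
set_option linter.style.haveILetI false

/-! ### Characters and degrees -/

section Basics

variable {G : Type} [Group G]

/-- `χ` is the character of some finite-dimensional complex representation of `G`. -/
def IsChar (χ : G → ℂ) : Prop := ∃ V : FDRep ℂ G, χ = V.character

/-- The bilinear form `|G|⁻¹ ∑ φ(g) ψ(g⁻¹)`, for which the irreducible characters are
orthonormal. -/
noncomputable def ip [Fintype G] (φ ψ : G → ℂ) : ℂ :=
  (Nat.card G : ℂ)⁻¹ * ∑ g : G, φ g * ψ g⁻¹

/-- The dual `g ↦ χ(g⁻¹)`, which is the complex conjugate when `χ` is a character. -/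
def dual (χ : G → ℂ) : G → ℂ := fun g => χ g⁻¹

/-- A homomorphism `G → ℂˣ` seen as a class function. -/
def lin (l : G →* ℂˣ) : G → ℂ := fun g => (l g : ℂ)

/-- The degree `χ(1)` as a natural number (meaningful when `χ` is a character). -/
noncomputable def deg (χ : G → ℂ) : ℕ := ⌊(χ 1).re⌋₊

/-- The multiplicity of `ψ` in `χ` as a natural number (meaningful when both are characters). -/
noncomputable def mult [Fintype G] (χ ψ : G → ℂ) : ℕ := ⌊(ip χ ψ).re⌋₊

theorem isChar_of_rep {V : Type} [AddCommGroup V] [Module ℂ V] [FiniteDimensional ℂ V]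
    (ρ : Representation ℂ G V) : IsChar ρ.character :=
  ⟨FDRep.of ρ, rfl⟩

theorem isChar_iff {χ : G → ℂ} : IsChar χ ↔ ∃ (V : Type) (_ : AddCommGroup V) (_ : Module ℂ V)
    (_ : FiniteDimensional ℂ V) (ρ : Representation ℂ G V), χ = ρ.character := by
  constructor
  · rintro ⟨V, rfl⟩
    exact ⟨V, inferInstance, inferInstance, inferInstance, V.ρ, rfl⟩
  · rintro ⟨V, _, _, _, ρ, rfl⟩
    exact isChar_of_rep ρ

theorem isChar_of_irr {χ : G → ℂ} (h : χ ∈ Irr G) : IsChar χ := by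
  obtain ⟨V, -, rfl⟩ := h
  exact ⟨V, rfl⟩

theorem isChar_mul {χ ψ : G → ℂ} (h : IsChar χ) (h' : IsChar ψ) : IsChar (χ * ψ) := by
  rw [isChar_iff] at h h'
  obtain ⟨V, _, _, _, ρ, rfl⟩ := h
  obtain ⟨W, _, _, _, σ, rfl⟩ := h'
  rw [← Representation.char_tensor]
  exact isChar_of_rep _

theorem isChar_dual {χ : G → ℂ} (h : IsChar χ) : IsChar (dual χ) := by
  rw [isChar_iff] at h
  obtain ⟨V, _, _, _, ρ, rfl⟩ := h
  have : dual ρ.character = ρ.dual.character := by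
    ext g; rw [Representation.char_dual]; rfl
  rw [this]
  exact isChar_of_rep _

theorem isChar_comp {H : Type} [Group H] (f : H →* G) {χ : G → ℂ} (h : IsChar χ) :
    IsChar (χ ∘ f) := by
  rw [isChar_iff] at h
  obtain ⟨V, _, _, _, ρ, rfl⟩ := h
  exact isChar_of_rep (MonoidHom.comp ρ f : Representation ℂ H V)

theorem isChar_lin (l : G →* ℂˣ) : IsChar (lin l) := by
  let ρ : Representation ℂ G ℂ :=
    { toFun := fun g => (l g : ℂ) • LinearMap.id
      map_one' := by ext; simp
      map_mul' := by intro a b; ext; simp [mul_comm] }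
  have : lin l = ρ.character := by
    ext g
    simp [lin, ρ, Representation.character]
  rw [this]
  exact isChar_of_rep ρ

theorem deg_cast {χ : G → ℂ} (h : IsChar χ) : (deg χ : ℂ) = χ 1 := by
  obtain ⟨V, rfl⟩ := h
  simp [deg]

theorem deg_re {χ : G → ℂ} (h : IsChar χ) : (χ 1).re = deg χ := by
  rw [← deg_cast h]; simp

@[simp] theorem dual_dual (χ : G → ℂ) : dual (dual χ) = χ := by
  ext g; simp [dual]

@[simp] theorem dual_apply (χ : G → ℂ) (g : G) : dual χ g = χ g⁻¹ := rfl

@[simp] theorem deg_dual (χ : G → ℂ) : deg (dual χ) = deg χ := by simp [deg]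

theorem lin_one : lin (1 : G →* ℂˣ) = 1 := by ext; simp [lin]

theorem lin_mul (l l' : G →* ℂˣ) : lin (l * l') = lin l * lin l' := by ext; simp [lin]

@[simp] theorem lin_apply (l : G →* ℂˣ) (g : G) : lin l g = (l g : ℂ) := rfl

theorem lin_injective : Function.Injective (lin : (G →* ℂˣ) → (G → ℂ)) := by
  intro l l' h
  ext g
  exact congrFun h g

theorem deg_mul_lin (χ : G → ℂ) (l : G →* ℂˣ) : deg (χ * lin l) = deg χ := by simp [deg]

theorem dual_lin (l : G →* ℂˣ) : dual (lin l) = lin l⁻¹ := by ext; simp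

theorem dual_mul (χ ψ : G → ℂ) : dual (χ * ψ) = dual χ * dual ψ := rfl

end Basics

/-! ### Orthogonality and the finite set of irreducible characters -/

section Finite

variable {G : Type} [Group G] [Fintype G]

theorem card_ne : (Nat.card G : ℂ) ≠ 0 := by
  exact_mod_cast Nat.card_pos.ne'

theorem ip_comm (φ ψ : G → ℂ) : ip φ ψ = ip ψ φ := by
  unfold ip
  congr 1
  refine Fintype.sum_equiv (Equiv.inv G) _ _ fun g => ?_
  simp [mul_comm]

theorem ip_add_left (φ φ' ψ : G → ℂ) : ip (φ + φ') ψ = ip φ ψ + ip φ' ψ := by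
  simp [ip, add_mul, Finset.sum_add_distrib, mul_add]

theorem ip_smul_left (c : ℂ) (φ ψ : G → ℂ) : ip (c • φ) ψ = c * ip φ ψ := by
  simp only [ip, Pi.smul_apply, smul_eq_mul, mul_assoc, ← Finset.mul_sum]
  ring

theorem ip_zero_left (ψ : G → ℂ) : ip (0 : G → ℂ) ψ = 0 := by simp [ip]

theorem ip_sum_left {ι : Type*} (s : Finset ι) (f : ι → G → ℂ) (ψ : G → ℂ) :
    ip (∑ i ∈ s, f i) ψ = ∑ i ∈ s, ip (f i) ψ := by
  classical
  induction s using Finset.induction_on with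
  | empty => simp [ip_zero_left]
  | insert a s ha ih => rw [Finset.sum_insert ha, Finset.sum_insert ha, ip_add_left, ih]

theorem ip_add_right (φ φ' ψ : G → ℂ) : ip ψ (φ + φ') = ip ψ φ + ip ψ φ' := by
  rw [ip_comm, ip_add_left, ip_comm φ, ip_comm φ']

theorem ip_dual (φ ψ : G → ℂ) : ip (dual φ) (dual ψ) = ip φ ψ := by
  rw [ip_comm φ]
  simp [ip, mul_comm]

/-- Moving a factor to the other side of the form. -/
theorem ip_mul_left (φ ψ θ : G → ℂ) : ip (φ * θ) ψ = ip φ (ψ * dual θ) := by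
  simp [ip, mul_assoc, mul_comm]

theorem ip_nat {χ ψ : G → ℂ} (h : IsChar χ) (h' : IsChar ψ) : ∃ n : ℕ, ip χ ψ = n := by
  obtain ⟨V, rfl⟩ := h
  obtain ⟨W, rfl⟩ := h'
  have := invertibleOfNonzero (card_ne (G := G))
  exact ⟨_, FDRep.scalar_product_char_eq_finrank_equivariant W V⟩

theorem mult_cast {χ ψ : G → ℂ} (h : IsChar χ) (h' : IsChar ψ) : (mult χ ψ : ℂ) = ip χ ψ := by
  obtain ⟨n, hn⟩ := ip_nat h h'
  simp [mult, hn]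

theorem irr_iff {χ : G → ℂ} (h : IsChar χ) : χ ∈ Irr G ↔ ip χ χ = 1 := by
  have key (V : FDRep ℂ G) : CategoryTheory.Simple V ↔ ip V.character V.character = 1 := by
    rw [FDRep.simple_iff_char_is_norm_one, ip, inv_mul_eq_one₀ card_ne, eq_comm]
  constructor
  · rintro ⟨V, hV, rfl⟩
    exact (key V).1 hV
  · intro h1
    obtain ⟨V, rfl⟩ := h
    exact ⟨V, (key V).2 h1, rfl⟩

theorem ip_self {χ : G → ℂ} (h : χ ∈ Irr G) : ip χ χ = 1 := (irr_iff (isChar_of_irr h)).1 h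

theorem ip_ne {χ ψ : G → ℂ} (h : χ ∈ Irr G) (h' : ψ ∈ Irr G) (hne : χ ≠ ψ) : ip χ ψ = 0 := by
  obtain ⟨V, hV, rfl⟩ := h
  obtain ⟨W, hW, rfl⟩ := h'
  have := invertibleOfNonzero (card_ne (G := G))
  have h2 := FDRep.char_orthonormal V W
  rw [if_neg] at h2
  · exact h2
  · rintro ⟨i⟩
    exact hne (FDRep.char_iso i)

theorem irr_linearIndependent :
    LinearIndependent ℂ (fun χ : Irr G => (χ : G → ℂ)) := by
  classical
  rw [linearIndependent_iff']
  intro s c hc i hi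
  have h1 := congrArg (fun φ => ip φ i) hc
  simp only [ip_sum_left, ip_smul_left, ip_zero_left] at h1
  rw [Finset.sum_eq_single i] at h1
  · simpa [ip_self i.2] using h1
  · intro j _ hj
    rw [ip_ne j.2 i.2 (fun h => hj (Subtype.ext h)), mul_zero]
  · intro h; exact absurd hi h

theorem irr_finite : (Irr G).Finite :=
  LinearIndependent.setFinite (R := ℂ) (irr_linearIndependent (G := G))

variable (G) in
/-- The irreducible characters as a finite set of functions. -/
noncomputable def irr : Finset (G → ℂ) := (irr_finite (G := G)).toFinset

@[simp] theorem mem_irr {χ : G → ℂ} : χ ∈ irr G ↔ χ ∈ Irr G := by simp [irr]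

theorem lin_mem (l : G →* ℂˣ) : lin l ∈ Irr G := by
  rw [irr_iff (isChar_lin l)]
  simp [ip]

theorem one_mem : (1 : G → ℂ) ∈ Irr G := by
  rw [← lin_one]; exact lin_mem 1

theorem mul_lin_mem {χ : G → ℂ} (h : χ ∈ Irr G) (l : G →* ℂˣ) : χ * lin l ∈ Irr G := by
  rw [irr_iff (isChar_mul (isChar_of_irr h) (isChar_lin l)), ip_mul_left,
    mul_assoc, dual_lin, ← lin_mul, show l * l⁻¹ = 1 from mul_inv_cancel l, lin_one, mul_one]
  exact ip_self h

theorem dual_mem {χ : G → ℂ} (h : χ ∈ Irr G) : dual χ ∈ Irr G := by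
  rw [irr_iff (isChar_dual (isChar_of_irr h)), ip_dual]
  exact ip_self h

end Finite

/-! ### Decomposition into irreducible characters and the Frobenius–Schur argument -/

section Decomposition

variable {G : Type} [Group G] [Fintype G]

theorem char_isCompl {V : Type} [AddCommGroup V] [Module ℂ V] [FiniteDimensional ℂ V]
    (ρ : Representation ℂ G V) (W W' : Subrepresentation ρ) (h : IsCompl W W') :
    ρ.character = W.toRepresentation.character + W'.toRepresentation.character := by
  have h' : IsCompl W.toSubmodule W'.toSubmodule := by
    constructor
    · rw [disjoint_iff, ← Subrepresentation.toSubmodule_inf, h.inf_eq_bot]; rfl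
    · rw [codisjoint_iff, ← Subrepresentation.toSubmodule_sup, h.sup_eq_top]; rfl
  have hinternal : DirectSum.IsInternal (fun b : Bool => cond b W.toSubmodule W'.toSubmodule) := by
    rw [DirectSum.isInternal_submodule_iff_isCompl _ (i := true) (j := false) (by simp)]
    · exact h'
    · ext b; cases b <;> simp
  ext g
  have hm : ∀ b : Bool, Set.MapsTo (ρ g) (cond b W.toSubmodule W'.toSubmodule : Submodule ℂ V)
      (cond b W.toSubmodule W'.toSubmodule : Submodule ℂ V) := by
    intro b; cases b
    · exact fun v hv => W'.apply_mem_toSubmodule g hv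
    · exact fun v hv => W.apply_mem_toSubmodule g hv
  have := LinearMap.trace_eq_sum_trace_restrict hinternal hm
  rw [Fintype.sum_bool] at this
  exact this

theorem mem_span_of_isChar {χ : G → ℂ} (h : IsChar χ) : χ ∈ Submodule.span ℂ (Irr G) := by
  rw [isChar_iff] at h
  obtain ⟨V, i1, i2, i3, ρ, rfl⟩ := h
  induction hn : Module.finrank ℂ V using Nat.strong_induction_on generalizing V with
  | _ n ih =>
  by_cases hirr : ρ.IsIrreducible
  · refine Submodule.subset_span ((irr_iff (isChar_of_rep ρ)).2 ?_)
    have := invertibleOfNonzero (card_ne (G := G))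
    have h2 := Representation.char_orthonormal ρ ρ
    rw [if_pos ⟨Representation.Equiv.refl ρ⟩] at h2
    exact h2
  rcases subsingleton_or_nontrivial V with hV | hV
  · have : ρ.character = 0 := by
      ext g
      have : ρ g = 0 := Subsingleton.elim _ _
      simp [Representation.character, this]
    rw [this]; exact Submodule.zero_mem _
  · have hnt : Nontrivial (Subrepresentation ρ) := by
      refine ⟨⟨⊥, ⊤, fun h => ?_⟩⟩
      have : (⊥ : Submodule ℂ V) = ⊤ := congrArg Subrepresentation.toSubmodule h
      exact bot_ne_top this
    have : ∃ W : Subrepresentation ρ, W ≠ ⊥ ∧ W ≠ ⊤ := by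
      by_contra! hc
      exact hirr ⟨fun W => or_iff_not_imp_left.2 (hc W)⟩
    obtain ⟨W, hW1, hW2⟩ := this
    haveI : NeZero (Nat.card G : ℂ) := ⟨card_ne⟩
    obtain ⟨W', hc⟩ := ComplementedLattice.exists_isCompl W
    have hlt : ∀ W : Subrepresentation ρ, W ≠ ⊤ → Module.finrank ℂ W.toSubmodule < n := by
      intro W hW
      rw [← hn]
      exact Submodule.finrank_lt (fun h => hW (Subrepresentation.toSubmodule_injective h))
    rw [char_isCompl ρ W W' hc]
    refine Submodule.add_mem _ (ih _ (hlt W hW2) _ _ _ inferInstance W.toRepresentation rfl)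
      (ih _ (hlt W' ?_) _ _ _ inferInstance W'.toRepresentation rfl)
    rintro rfl
    exact hW1 (by simpa using hc.inf_eq_bot)

/-- A character is the sum of the irreducible ones with its multiplicities. -/
theorem decomp {χ : G → ℂ} (h : IsChar χ) : χ = ∑ ψ ∈ irr G, (mult χ ψ : ℂ) • ψ := by
  have h1 := mem_span_of_isChar h
  have h2 : (irr G : Set (G → ℂ)) = Irr G := by ext; simp
  rw [← h2, Submodule.mem_span_finset'] at h1
  obtain ⟨f, hf⟩ := h1
  classical
  have h3 : ∀ ψ (hψ : ψ ∈ irr G), ip χ ψ = f ⟨ψ, hψ⟩ := by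
    intro ψ hψ
    rw [← hf, ip_sum_left]
    rw [Finset.sum_eq_single ⟨ψ, hψ⟩]
    · rw [ip_smul_left, ip_self (mem_irr.1 hψ), mul_one]
    · rintro ⟨θ, hθ⟩ _ hne
      rw [ip_smul_left, ip_ne (mem_irr.1 hθ) (mem_irr.1 hψ) (fun h => hne (Subtype.ext h)), mul_zero]
    · simp
  conv_lhs => rw [← hf]
  rw [← Finset.sum_coe_sort (irr G) (fun ψ => (mult χ ψ : ℂ) • ψ)]
  refine Finset.sum_congr rfl fun ψ _ => ?_
  rw [mult_cast h (isChar_of_irr (mem_irr.1 ψ.2)), h3 ψ ψ.2]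

theorem deg_eq_sum {χ : G → ℂ} (h : IsChar χ) : deg χ = ∑ ψ ∈ irr G, mult χ ψ * deg ψ := by
  have h1 := congrFun (decomp h) 1
  rw [← deg_cast h, Finset.sum_apply] at h1
  have h2 : (deg χ : ℂ) = ∑ ψ ∈ irr G, (mult χ ψ : ℂ) * deg ψ := by
    rw [h1]
    refine Finset.sum_congr rfl fun ψ hψ => ?_
    rw [deg_cast (isChar_of_irr (mem_irr.1 hψ))]; rfl
  exact_mod_cast h2

theorem deg_pos {χ : G → ℂ} (h : χ ∈ Irr G) : 0 < deg χ := by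
  rw [Nat.pos_iff_ne_zero]
  intro h0
  have hc := isChar_of_irr h
  rw [isChar_iff] at hc
  obtain ⟨V, i1, i2, i3, ρ, rfl⟩ := hc
  have h1 := deg_cast (isChar_of_rep ρ)
  rw [h0, Representation.char_one] at h1
  have h2 : Module.finrank ℂ V = 0 := by exact_mod_cast h1.symm
  have h3 : Subsingleton V := Module.finrank_zero_iff.1 h2
  have : ρ.character = 0 := by
    ext g
    have : ρ g = 0 := Subsingleton.elim _ _
    simp [Representation.character, this]
  have h4 := ip_self h
  rw [this, ip_zero_left] at h4
  exact zero_ne_one h4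

open Classical in
/-- The character `∑ χ(1) χ` of the regular representation. -/
theorem regular (g : G) : ∑ χ ∈ irr G, (deg χ : ℂ) * χ g = if g = 1 then (Nat.card G : ℂ) else 0 := by
  let r : Representation ℂ G (G → ℂ) :=
    { toFun := fun g => LinearMap.funLeft ℂ ℂ (fun x => x * g)
      map_one' := by ext; simp [LinearMap.funLeft_apply]
      map_mul' := by intro a b; ext; simp [LinearMap.funLeft_apply, mul_assoc] }
  have hr : r.character = fun g => if g = 1 then (Nat.card G : ℂ) else 0 := by
    ext g
    have : r.character g = ∑ x : G, (r g (Pi.single x 1)) x := by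
      rw [Representation.character, LinearMap.trace_eq_matrix_trace ℂ (Pi.basisFun ℂ G)]
      simp [Matrix.trace]
    rw [this]
    simp only [r, MonoidHom.coe_mk, OneHom.coe_mk, LinearMap.funLeft_apply, Pi.single_apply,
      mul_eq_left]
    split_ifs <;> simp
  have h := isChar_of_rep r
  have h1 := congrFun (decomp h) g
  rw [Finset.sum_apply] at h1
  rw [show (if g = 1 then (Nat.card G : ℂ) else 0) = r.character g by rw [hr], h1]
  refine Finset.sum_congr rfl fun χ hχ => ?_
  have hχ := mem_irr.1 hχ
  rw [mult_cast h (isChar_of_irr hχ), deg_cast (isChar_of_irr hχ), hr]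
  simp [ip]

theorem trace_swap {V : Type} [AddCommGroup V] [Module ℂ V] [FiniteDimensional ℂ V]
    (f g : V →ₗ[ℂ] V) :
    LinearMap.trace ℂ _ ((TensorProduct.comm ℂ V V).toLinearMap ∘ₗ TensorProduct.map f g) =
      LinearMap.trace ℂ _ (f * g) := by
  classical
  let b := Module.finBasis ℂ V
  rw [LinearMap.trace_eq_matrix_trace ℂ (b.tensorProduct b), LinearMap.trace_eq_matrix_trace ℂ b,
    LinearMap.toMatrix_mul]
  simp only [Matrix.trace, Matrix.diag_apply, Matrix.mul_apply, LinearMap.toMatrix_apply,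
    Fintype.sum_prod_type]
  rw [Finset.sum_comm]
  refine Finset.sum_congr rfl fun i _ => Finset.sum_congr rfl fun j _ => ?_
  simp [Module.Basis.tensorProduct_apply, Module.Basis.tensorProduct_repr_tmul_apply]

/-- Frobenius–Schur for groups of odd order: only the trivial irreducible character is self-dual.
If `χ` is self-dual then `V ⊗ V` has a one-dimensional space of invariants, on which the swap acts
by a non-zero scalar; that scalar equals `|G|⁻¹ ∑ χ(g²) = |G|⁻¹ ∑ χ(g)`, which vanishes for
`χ ≠ 1`. -/
theorem eq_one_of_dual_eq (hG : Odd (Nat.card G)) {χ : G → ℂ} (h : χ ∈ Irr G)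
    (hd : dual χ = χ) : χ = 1 := by
  by_contra hne
  have hc := isChar_of_irr h
  rw [isChar_iff] at hc
  obtain ⟨V, i1, i2, i3, ρ, rfl⟩ := hc
  have inv1 : Invertible (Nat.card G : ℂ) := invertibleOfNonzero (card_ne (G := G))
  have inv2 : Invertible (Fintype.card G : ℂ) := by rw [Fintype.card_eq_nat_card]; assumption
  let T := ρ.tprod ρ
  let P := T.averageMap
  have hP := T.isProj_averageMap
  let τ := (TensorProduct.comm ℂ V V).toLinearMap
  have hτ : ∀ g x, τ (T g x) = T g (τ x) := by
    intro g x
    induction x using TensorProduct.induction_on with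
    | zero => simp
    | tmul x y => simp [τ, T]
    | add x y hx hy => simp only [map_add, hx, hy]
  have h1 : Module.finrank ℂ T.invariants = 1 := by
    have h2 := T.card_inv_mul_sum_char_eq_finrank
    have h3 := ip_self h
    conv at h3 => lhs; arg 2; rw [← hd]
    have h4 : (Module.finrank ℂ T.invariants : ℂ) = 1 := by
      rw [← h2, ← h3, ip, Representation.char_tensor]
      simp
    exact_mod_cast h4
  obtain ⟨u, hu0, hu⟩ := finrank_eq_one_iff'.1 h1
  have hτu : τ u ∈ T.invariants := by
    rw [Representation.mem_invariants]
    intro g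
    rw [← hτ, (Representation.mem_invariants _ _).1 u.2 g]
  obtain ⟨c, hc⟩ := hu ⟨τ u, hτu⟩
  have hc : c • (u : TensorProduct ℂ V V) = τ u := congrArg Subtype.val hc
  have hc0 : c ≠ 0 := by
    rintro rfl
    rw [zero_smul] at hc
    have : (u : TensorProduct ℂ V V) = 0 := (TensorProduct.comm ℂ V V).map_eq_zero_iff.1 hc.symm
    exact hu0 (Subtype.ext this)
  have hτP : τ ∘ₗ P = c • P := by
    ext1
    ext x y
    obtain ⟨d, hd⟩ := hu ⟨P (x ⊗ₜ y), hP.map_mem _⟩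
    have hd : d • (u : TensorProduct ℂ V V) = P (x ⊗ₜ y) := congrArg Subtype.val hd
    simp only [LinearMap.comp_apply,
      TensorProduct.AlgebraTensorModule.curry_apply, LinearMap.restrictScalars_self,
      TensorProduct.curry_apply, LinearMap.smul_apply]
    rw [← hd, map_smul, ← hc, smul_comm]
  have ht : LinearMap.trace ℂ _ (τ ∘ₗ P) = c := by
    rw [hτP, map_smul, hP.trace, h1]; simp
  have hsq : ∑ g : G, ρ.character (g ^ 2) = 0 := by
    have : Function.Bijective (fun g : G => g ^ 2) := by
      have hco : (Nat.card G).Coprime 2 := hG.coprime_two_right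
      exact (powCoprime hco).bijective
    rw [this.sum_comp (fun g => ρ.character g)]
    have h5 := ip_ne h one_mem hne
    simpa [ip] using h5
  have hsum : LinearMap.trace ℂ _ (τ ∘ₗ P) = (Nat.card G : ℂ)⁻¹ * ∑ g : G, ρ.character (g ^ 2) := by
    have : τ ∘ₗ P = (Nat.card G : ℂ)⁻¹ • ∑ g : G, τ ∘ₗ TensorProduct.map (ρ g) (ρ g) := by
      ext1
      ext x y
      simp [P, GroupAlgebra.average, Representation.averageMap, T]
    rw [this, map_smul, map_sum, smul_eq_mul]
    congr 1
    refine Finset.sum_congr rfl fun g _ => ?_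
    rw [trace_swap, Representation.character, ← map_mul, pow_two]
  rw [hsq, mul_zero, ht] at hsum
  exact hc0 hsum

end Decomposition

/-! ### Degrees in groups of odd order -/

section OddDegrees

variable {G : Type} [Group G] [Fintype G]

theorem deg_mul {χ ψ : G → ℂ} (h : IsChar χ) (h' : IsChar ψ) : deg (χ * ψ) = deg χ * deg ψ := by
  have : (deg (χ * ψ) : ℂ) = deg χ * deg ψ := by
    rw [deg_cast (isChar_mul h h'), deg_cast h, deg_cast h']; rfl
  exact_mod_cast this

@[simp] theorem deg_lin (l : G →* ℂˣ) : deg (lin l) = 1 := by simp [deg]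

@[simp] theorem deg_one : deg (1 : G → ℂ) = 1 := by simp [deg]

theorem dual_one : dual (1 : G → ℂ) = 1 := rfl

theorem mult_dual (χ ψ : G → ℂ) : mult (dual χ) (dual ψ) = mult χ ψ := by
  rw [mult, ip_dual, mult]

/-- In a group of odd order the non-trivial constituents of a self-dual character come in dual
pairs, so its degree has the parity of the multiplicity of the trivial character. -/
theorem deg_mod_two (hG : Odd (Nat.card G)) {θ : G → ℂ} (h : IsChar θ) (hd : dual θ = θ) :
    (deg θ : ZMod 2) = mult θ 1 := by
  classical
  rw [deg_eq_sum h, ← Finset.add_sum_erase _ _ (mem_irr.2 (one_mem (G := G)))]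
  push_cast
  rw [deg_one, Nat.cast_one, mul_one, add_eq_left]
  refine Finset.sum_involution (fun ψ _ => dual ψ) ?_ ?_ ?_ ?_
  · intro ψ _
    rw [deg_dual, ← mult_dual θ ψ, hd]
    exact CharTwo.add_self_eq_zero _
  · intro ψ hψ _ hf
    rw [Finset.mem_erase, mem_irr] at hψ
    exact hψ.1 (eq_one_of_dual_eq hG hψ.2 hf)
  · intro ψ hψ
    rw [Finset.mem_erase, mem_irr] at hψ ⊢
    refine ⟨fun h1 => hψ.1 ?_, dual_mem hψ.2⟩
    rw [← dual_dual ψ, h1, dual_one]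
  · intro ψ _; exact dual_dual ψ

theorem ip_mul_dual_lin (χ : G → ℂ) (l : G →* ℂˣ) :
    ip (χ * dual χ) (lin l) = ip χ (χ * lin l) := by
  rw [ip_mul_left, dual_dual, mul_comm]

theorem mult_mul_dual_one {χ : G → ℂ} (h : χ ∈ Irr G) : mult (χ * dual χ) 1 = 1 := by
  have : ip (χ * dual χ) 1 = 1 := by
    rw [← lin_one, ip_mul_dual_lin, lin_one, mul_one, ip_self h]
  simp [mult, this]

theorem dual_mul_dual (χ : G → ℂ) : dual (χ * dual χ) = χ * dual χ := by
  rw [dual_mul, dual_dual, mul_comm]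

/-- Apply `deg_mod_two` to `χ * dual χ`, which contains the trivial character once. -/
theorem odd_deg (hG : Odd (Nat.card G)) {χ : G → ℂ} (h : χ ∈ Irr G) : Odd (deg χ) := by
  have hc := isChar_of_irr h
  have h1 := deg_mod_two hG (isChar_mul hc (isChar_dual hc)) (dual_mul_dual χ)
  rw [mult_mul_dual_one h, deg_mul hc (isChar_dual hc), deg_dual] at h1
  have h2 : Odd (deg χ * deg χ) := by
    rw [← ZMod.natCast_eq_one_iff_odd, h1]; simp
  exact Nat.Odd.of_mul_left h2

theorem exists_lin {χ : G → ℂ} (h : χ ∈ Irr G) (h1 : deg χ = 1) : ∃ l : G →* ℂˣ, χ = lin l := by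
  have hc := isChar_of_irr h
  rw [isChar_iff] at hc
  obtain ⟨V, i1, i2, i3, ρ, rfl⟩ := hc
  have h2 : Module.finrank ℂ V = 1 := by
    have := deg_cast (isChar_of_rep ρ)
    rw [h1, Representation.char_one] at this
    exact_mod_cast this.symm
  let b : Module.Basis (Fin 1) ℂ V := Module.finBasisOfFinrankEq ℂ V h2
  refine ⟨MonoidHom.toHomUnits ((LinearMap.det : (V →ₗ[ℂ] V) →* ℂ).comp ρ), ?_⟩
  ext g
  simp only [lin_apply, MonoidHom.coe_toHomUnits, MonoidHom.comp_apply]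
  rw [← LinearMap.det_toMatrix b, Representation.character, LinearMap.trace_eq_matrix_trace ℂ b]
  simp [Matrix.trace]

theorem three_le_deg (hG : Odd (Nat.card G)) {χ : G → ℂ} (h : χ ∈ Irr G)
    (hl : ∀ l : G →* ℂˣ, χ ≠ lin l) : 3 ≤ deg χ := by
  have h1 := odd_deg hG h
  have h2 : deg χ ≠ 1 := fun h1 => by
    obtain ⟨l, hl'⟩ := exists_lin h h1
    exact hl l hl'
  rcases h1 with ⟨k, hk⟩
  omega

/-- An irreducible character of degree `3` is fixed by multiplication with some non-trivial linear
character: otherwise the contributions of the non-trivial irreducible characters to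
`8 = χ(1)² - 1`, which come in equal pairs and are not linear, would all be `0` or `3`. -/
theorem exists_fix_of_deg_three (hG : Odd (Nat.card G)) {χ : G → ℂ} (h : χ ∈ Irr G)
    (h3 : deg χ = 3) : ∃ l : G →* ℂˣ, l ≠ 1 ∧ χ * lin l = χ := by
  classical
  by_contra! hno
  have hc := isChar_of_irr h
  set θ := χ * dual χ with hθ
  have hθc : IsChar θ := isChar_mul hc (isChar_dual hc)
  have hsum := deg_eq_sum hθc
  rw [← Finset.add_sum_erase _ _ (mem_irr.2 (one_mem (G := G))), hθ, mult_mul_dual_one h, deg_one,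
    deg_mul hc (isChar_dual hc), deg_dual, h3, ← hθ] at hsum
  set f : (G → ℂ) → ℕ := fun ψ => mult θ ψ * deg ψ with hf
  replace hsum : 3 * 3 = 1 * 1 + ∑ x ∈ (irr G).erase 1, f x := hsum
  have hfd : ∀ ψ, f (dual ψ) = f ψ := by
    intro ψ
    simp only [hf, deg_dual]
    conv_rhs => rw [← mult_dual, dual_mul_dual]
  have hf3 : ∀ ψ ∈ (irr G).erase 1, 3 ∣ f ψ := by
    intro ψ hψ
    have hψ' := hψ
    rw [Finset.mem_erase, mem_irr] at hψ
    rcases Nat.eq_zero_or_pos (mult θ ψ) with h0 | hpos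
    · simp [hf, h0]
    have hd3 : 3 ≤ deg ψ := by
      refine three_le_deg hG hψ.2 fun l hl => ?_
      subst hl
      have hl1 : l ≠ 1 := by rintro rfl; exact hψ.1 lin_one
      have : ip θ (lin l) = 0 := by
        rw [hθ, ip_mul_dual_lin]
        exact ip_ne h (mul_lin_mem h l) (fun h' => hno l hl1 h'.symm)
      simp [mult, this] at hpos
    have hne : dual ψ ≠ ψ := fun h' => hψ.1 (eq_one_of_dual_eq hG hψ.2 h')
    have hdm : dual ψ ∈ ((irr G).erase 1) := by
      rw [Finset.mem_erase, mem_irr]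
      refine ⟨fun h1 => hψ.1 ?_, dual_mem hψ.2⟩
      rw [← dual_dual ψ, h1, dual_one]
    have hle : f ψ + f (dual ψ) ≤ ∑ x ∈ (irr G).erase 1, f x := by
      rw [← Finset.sum_pair hne.symm]
      refine Finset.sum_le_sum_of_subset ?_
      intro x hx
      simp only [Finset.mem_insert, Finset.mem_singleton] at hx
      rcases hx with rfl | rfl
      · exact hψ'
      · exact hdm
    rw [hfd] at hle
    have h4 : f ψ ≤ 4 := by omega
    have hodd := odd_deg hG hψ.2
    simp only [hf] at h4 ⊢
    have hm : mult θ ψ = 1 := by nlinarith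
    rw [hm, one_mul] at h4 ⊢
    obtain ⟨k, hk⟩ := hodd
    have : deg ψ = 3 := by omega
    rw [this]
  have := Finset.dvd_sum hf3
  omega

instance : Finite (G →* ℂˣ) :=
  have := (irr_finite (G := G)).to_subtype
  Finite.of_injective (fun l : G →* ℂˣ => (⟨lin l, lin_mem l⟩ : Irr G))
    fun _ _ h => lin_injective (congrArg Subtype.val h)

theorem lin_pow_card (l : G →* ℂˣ) : l ^ Nat.card G = 1 := by
  ext g
  simp only [MonoidHom.pow_apply, MonoidHom.one_apply]
  rw [← map_pow, pow_card_eq_one', map_one]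

theorem odd_card_lin (hG : Odd (Nat.card G)) (S : Subgroup (G →* ℂˣ)) : Odd (Nat.card S) := by
  by_contra hne
  rw [Nat.not_odd_iff_even, even_iff_two_dvd] at hne
  obtain ⟨x, hx⟩ := exists_prime_orderOf_dvd_card' 2 hne
  have h1 : orderOf (x : G →* ℂˣ) ∣ Nat.card G := orderOf_dvd_of_pow_eq_one (lin_pow_card _)
  rw [Subgroup.orderOf_coe, hx] at h1
  exact (Nat.not_even_iff_odd.2 hG) (even_iff_two_dvd.2 h1)

/-- A non-linear irreducible character and its dual lie in different orbits of the group of linear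
characters, which has odd order. -/
theorem dual_ne_mul_lin (hG : Odd (Nat.card G)) {χ : G → ℂ} (h : χ ∈ Irr G) (h1 : deg χ ≠ 1)
    (l : G →* ℂˣ) : dual χ ≠ χ * lin l := by
  intro hd
  obtain ⟨k, hk⟩ := hG
  have hl : l = l ^ (k + 1) * l ^ (k + 1) := by
    have := lin_pow_card l
    calc l = l ^ Nat.card G * l := by rw [this]; exact (one_mul l).symm
      _ = l ^ (k + 1 + (k + 1)) := by
        rw [show k + 1 + (k + 1) = Nat.card G + 1 by omega]; exact (pow_succ l _).symm
      _ = _ := pow_add l _ _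
  -- with `μ² = l` the character `χ μ` is self-dual
  set μ := l ^ (k + 1) with hμ
  have h2 : dual (χ * lin μ) = χ * lin μ := by
    rw [dual_mul, hd, dual_lin, hl, lin_mul, mul_assoc, mul_assoc, ← lin_mul _ μ⁻¹,
      show μ * μ⁻¹ = 1 from mul_inv_cancel μ, lin_one, mul_one]
  have h3 := eq_one_of_dual_eq ⟨k, hk⟩ (mul_lin_mem h μ) h2
  have h4 := deg_mul_lin χ μ
  rw [h3, deg_one] at h4
  exact h1 h4.symm

end OddDegrees

/-! ### Multiplication by linear characters -/

section Orbits

variable {G : Type} [Group G] [Fintype G]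

/-- The stabilizer of `χ` in the group of linear characters. -/
def stab (χ : G → ℂ) : Subgroup (G →* ℂˣ) where
  carrier := {l | χ * lin l = χ}
  one_mem' := by simp [lin_one]
  mul_mem' := by
    intro a b ha hb
    simp only [Set.mem_ofPred_eq] at *
    rw [lin_mul, ← mul_assoc, ha, hb]
  inv_mem' := by
    intro a ha
    simp only [Set.mem_ofPred_eq] at *
    conv_lhs => rw [← ha]
    rw [mul_assoc, ← lin_mul, show a * a⁻¹ = 1 from mul_inv_cancel a, lin_one, mul_one]

theorem mem_stab {χ : G → ℂ} {l : G →* ℂˣ} : l ∈ stab χ ↔ χ * lin l = χ := Iff.rfl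

open Classical in
/-- The orbit of `χ` under multiplication by linear characters. -/
noncomputable def orb (χ : G → ℂ) : Finset (G → ℂ) :=
  haveI := Fintype.ofFinite (G →* ℂˣ)
  Finset.univ.image fun l : G →* ℂˣ => χ * lin l

theorem mem_orb {χ ψ : G → ℂ} : ψ ∈ orb χ ↔ ∃ l, χ * lin l = ψ := by simp [orb]

theorem mul_lin_eq_iff {χ ψ : G → ℂ} {l : G →* ℂˣ} : χ * lin l = ψ ↔ χ = ψ * lin l⁻¹ := by
  constructor
  · rintro rfl
    rw [mul_assoc, ← lin_mul, show l * l⁻¹ = 1 from mul_inv_cancel l, lin_one, mul_one]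
  · rintro rfl
    rw [mul_assoc, ← lin_mul, show l⁻¹ * l = 1 from inv_mul_cancel l, lin_one, mul_one]

theorem card_orb (χ : G → ℂ) : (orb χ).card * Nat.card (stab χ) = Nat.card (G →* ℂˣ) := by
  classical
  letI := Fintype.ofFinite (G →* ℂˣ)
  have h1 := Finset.card_eq_sum_card_image (fun l : G →* ℂˣ => χ * lin l) Finset.univ
  rw [Nat.card_eq_fintype_card (α := G →* ℂˣ), ← Finset.card_univ, h1]
  have : ∀ ψ ∈ Finset.univ.image (fun l : G →* ℂˣ => χ * lin l),
      (Finset.univ.filter fun l : G →* ℂˣ => χ * lin l = ψ).card = Nat.card (stab χ) := by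
    intro ψ hψ
    obtain ⟨l0, -, rfl⟩ := Finset.mem_image.1 hψ
    rw [Nat.card_eq_fintype_card, ← Finset.card_univ]
    refine Finset.card_bij' (fun l hl => ⟨l * l0⁻¹, ?_⟩) (fun l _ => l.1 * l0) ?_ ?_ ?_ ?_
    · simp only [Finset.mem_filter, Finset.mem_univ, true_and] at hl
      rw [mem_stab, lin_mul, ← mul_assoc, hl, ← mul_lin_eq_iff.1 rfl]
    · simp
    · intro l _
      simp only [Finset.mem_filter, Finset.mem_univ, true_and]
      rw [lin_mul, ← mul_assoc, mem_stab.1 l.2]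
    · intro l _; exact inv_mul_cancel_right l l0
    · intro l _; exact Subtype.ext (mul_inv_cancel_right l.1 l0)
  rw [Finset.sum_const_nat this]
  congr 1

theorem acd_lt_iff {B : ℝ} : acd G < B ↔ ∑ χ ∈ irr G, ((deg χ : ℝ) - B) < 0 := by
  have hcard : Nat.card (Irr G) = (irr G).card := by
    rw [irr, Nat.card_coe_set_eq, Set.ncard_eq_toFinset_card _ irr_finite]
  have hpos : 0 < (irr G).card := Finset.card_pos.2 ⟨1, mem_irr.2 one_mem⟩
  have hsum : ∑ᶠ χ ∈ Irr G, (χ 1).re = ∑ χ ∈ irr G, (deg χ : ℝ) := by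
    rw [finsum_mem_eq_finite_toFinset_sum _ irr_finite]
    exact Finset.sum_congr rfl fun χ hχ => deg_re (isChar_of_irr (mem_irr.1 hχ))
  rw [acd, hsum, hcard, div_lt_iff₀ (by exact_mod_cast hpos), Finset.sum_sub_distrib,
    Finset.sum_const, nsmul_eq_mul, mul_comm B, sub_neg]

/-- Bound on the contribution of pairwise disjoint orbits of non-linear characters: the linear
characters contribute `|Irr(G/G')| (1 - B)` to `∑ (χ(1) - B) < 0`, all others are non-negative. -/
theorem orbit_bound (hG : Odd (Nat.card G)) {B : ℝ} (hB : B ≤ 3) (h : acd G < B)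
    (F : Finset (G → ℂ)) (hF : ∀ χ ∈ F, χ ∈ Irr G ∧ deg χ ≠ 1)
    (hdisj : ∀ χ ∈ F, ∀ ψ ∈ F, ∀ l, χ * lin l = ψ → χ = ψ) :
    ∑ χ ∈ F, (orb χ).card * ((deg χ : ℝ) - B) < Nat.card (G →* ℂˣ) * (B - 1) := by
  classical
  letI := Fintype.ofFinite (G →* ℂˣ)
  rw [acd_lt_iff] at h
  have hd : (F : Set (G → ℂ)).PairwiseDisjoint orb := by
    intro χ hχ ψ hψ hne
    rw [Function.onFun, Finset.disjoint_left]
    intro θ h1 h2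
    rw [mem_orb] at h1 h2
    obtain ⟨l, rfl⟩ := h1
    obtain ⟨l', h2⟩ := h2
    apply hne
    refine (hdisj ψ hψ χ hχ (l' * l⁻¹) ?_).symm
    rw [lin_mul, ← mul_assoc, h2, ← mul_lin_eq_iff.1 rfl]
  have hFs : ∑ χ ∈ F, (orb χ).card * ((deg χ : ℝ) - B) =
      ∑ ψ ∈ F.biUnion orb, ((deg ψ : ℝ) - B) := by
    rw [Finset.sum_biUnion hd]
    refine Finset.sum_congr rfl fun χ _ => ?_
    rw [← nsmul_eq_mul]
    refine (Finset.sum_eq_card_nsmul fun ψ hψ => ?_).symm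
    obtain ⟨l, rfl⟩ := mem_orb.1 hψ
    rw [deg_mul_lin]
  set L : Finset (G → ℂ) := Finset.univ.image (lin : (G →* ℂˣ) → (G → ℂ)) with hL
  have hLs : ∑ ψ ∈ L, ((deg ψ : ℝ) - B) = Nat.card (G →* ℂˣ) * (1 - B) := by
    rw [hL, Finset.sum_image (fun _ _ _ _ h => lin_injective h)]
    simp [mul_sub]
  have hLF : Disjoint L (F.biUnion orb) := by
    rw [Finset.disjoint_left]
    intro ψ h1 h2
    obtain ⟨l, -, rfl⟩ := Finset.mem_image.1 h1
    obtain ⟨χ, hχ, h3⟩ := Finset.mem_biUnion.1 h2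
    obtain ⟨l', h4⟩ := mem_orb.1 h3
    refine (hF χ hχ).2 ?_
    rw [← deg_mul_lin χ l', h4, deg_lin]
  have hsub : L ∪ F.biUnion orb ⊆ irr G := by
    intro ψ hψ
    rw [mem_irr]
    rcases Finset.mem_union.1 hψ with h1 | h1
    · obtain ⟨l, -, rfl⟩ := Finset.mem_image.1 h1
      exact lin_mem l
    · obtain ⟨χ, hχ, h3⟩ := Finset.mem_biUnion.1 h1
      obtain ⟨l', rfl⟩ := mem_orb.1 h3
      exact mul_lin_mem (hF χ hχ).1 l'
  have hle := Finset.sum_le_sum_of_subset_of_nonneg (f := fun ψ : G → ℂ => (deg ψ : ℝ) - B) hsub ?_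
  · rw [Finset.sum_union hLF, hLs, ← hFs] at hle
    linarith
  · intro ψ hψ hn
    have h3 : 3 ≤ deg ψ := by
      refine three_le_deg hG (mem_irr.1 hψ) ?_
      rintro l rfl
      exact hn (Finset.mem_union_left _ (Finset.mem_image_of_mem _ (Finset.mem_univ _)))
    have : (3 : ℝ) ≤ deg ψ := by exact_mod_cast h3
    linarith

end Orbits

/-! ### Restriction to a subgroup -/

section Restriction

variable {G : Type} [Group G] [Fintype G]

/-- Restriction of a function on `G` to a subgroup. -/
def res (A : Subgroup G) (χ : G → ℂ) : A → ℂ := χ ∘ A.subtype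

/-- Restriction of a linear character to a subgroup. -/
def resLin (A : Subgroup G) (l : G →* ℂˣ) : A →* ℂˣ := l.comp A.subtype

theorem isChar_res (A : Subgroup G) {χ : G → ℂ} (h : IsChar χ) : IsChar (res A χ) :=
  isChar_comp _ h

theorem deg_res (A : Subgroup G) (χ : G → ℂ) : deg (res A χ) = deg χ := by simp [deg, res]

theorem res_lin (A : Subgroup G) (l : G →* ℂˣ) : res A (lin l) = lin (resLin A l) := rfl

theorem res_mul (A : Subgroup G) (χ ψ : G → ℂ) : res A (χ * ψ) = res A χ * res A ψ := rfl

variable (A : Subgroup G) [Fintype A]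

/-- Frobenius reciprocity for the permutation character on the cosets of `A`, evaluated at `1`. -/
theorem sum_deg_mult : ∑ χ ∈ irr G, deg χ * mult (res A χ) 1 = A.index := by
  classical
  have h1 : ((∑ χ ∈ irr G, deg χ * mult (res A χ) 1 : ℕ) : ℂ) * Nat.card A = Nat.card G := by
    push_cast
    have h2 : ∀ χ ∈ irr G, (deg χ : ℂ) * mult (res A χ) 1 =
        (Nat.card A : ℂ)⁻¹ * ∑ x : A, (deg χ : ℂ) * χ x := by
      intro χ hχ
      rw [mult_cast (isChar_res A (isChar_of_irr (mem_irr.1 hχ))) (isChar_of_irr one_mem), ip,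
        ← Finset.mul_sum]
      simp only [Pi.one_apply, mul_one, res, Function.comp_apply, Subgroup.subtype_apply]
      ring
    rw [Finset.sum_congr rfl h2, ← Finset.mul_sum, Finset.sum_comm]
    simp_rw [regular]
    have h3 : ∑ x : A, (if (x : G) = 1 then (Nat.card G : ℂ) else 0) = Nat.card G := by
      rw [Finset.sum_eq_single 1] <;> simp
    have h4 : (Nat.card A : ℂ) ≠ 0 := card_ne
    rw [h3]
    field_simp
  have h5 := A.index_mul_card
  have h6 : (∑ χ ∈ irr G, deg χ * mult (res A χ) 1) * Nat.card A = A.index * Nat.card A := by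
    rw [h5]; exact_mod_cast h1
  exact Nat.eq_of_mul_eq_mul_right Nat.card_pos h6

variable {V : Type} [AddCommGroup V] [Module ℂ V] [FiniteDimensional ℂ V]
  (ρ : Representation ℂ G V)

/-- The common fixed points of a subgroup. -/
noncomputable def fixedPts (X : Subgroup G) : Submodule ℂ V :=
  Representation.invariants (MonoidHom.comp ρ X.subtype : Representation ℂ X V)

theorem mem_fixedPts (X : Subgroup G) (v : V) : v ∈ fixedPts ρ X ↔ ∀ x ∈ X, ρ x v = v := by
  rw [fixedPts, Representation.mem_invariants]
  simp

theorem finrank_fixedPts : (Module.finrank ℂ (fixedPts ρ A) : ℂ) = ip (res A ρ.character) 1 := by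
  have := invertibleOfNonzero (card_ne (G := A))
  rw [fixedPts, ← Representation.card_inv_mul_sum_char_eq_finrank, ip]
  simp [res, Representation.character]

/-- A subgroup on which the character takes the value `χ(1)` acts trivially. -/
theorem eq_one_of_char_eq (X : Subgroup G)
    (h : ∀ x ∈ X, ρ.character x = ρ.character 1) : ∀ x ∈ X, ρ x = 1 := by
  haveI := Fintype.ofFinite X
  have h1 := finrank_fixedPts X ρ
  have h2 : ip (res X ρ.character) 1 = Module.finrank ℂ V := by
    have : ∀ x : X, res X ρ.character x = Module.finrank ℂ V := by
      intro x
      rw [← Representation.char_one ρ]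
      exact h x x.2
    have h0 : (Nat.card X : ℂ) ≠ 0 := card_ne
    simp only [ip, this, Pi.one_apply, mul_one, Finset.sum_const, Finset.card_univ, nsmul_eq_mul]
    rw [← Nat.card_eq_fintype_card]
    field_simp
  rw [h2] at h1
  have h3 : fixedPts ρ X = ⊤ := Submodule.eq_top_of_finrank_eq (by exact_mod_cast h1)
  intro x hx
  ext v
  have : v ∈ fixedPts ρ X := by rw [h3]; trivial
  exact (mem_fixedPts ρ X v).1 this x hx

theorem subrep_eq_bot_or_top (h : ρ.character ∈ Irr G) (W : Submodule ℂ V)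
    (hW : ∀ g, ∀ v ∈ W, ρ g v ∈ W) : W = ⊥ ∨ W = ⊤ := by
  haveI : NeZero (Nat.card G : ℂ) := ⟨card_ne⟩
  let W1 : Subrepresentation ρ := ⟨W, fun g v hv => hW g v hv⟩
  obtain ⟨W2, hc⟩ := ComplementedLattice.exists_isCompl W1
  have hadd := char_isCompl ρ W1 W2 hc
  have c1 := isChar_of_rep W1.toRepresentation
  have c2 := isChar_of_rep W2.toRepresentation
  have hc := isChar_of_irr h
  have hm : ∀ ψ ∈ irr G, mult ρ.character ψ =
      mult W1.toRepresentation.character ψ + mult W2.toRepresentation.character ψ := by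
    intro ψ hψ
    have hψ := isChar_of_irr (mem_irr.1 hψ)
    have : (mult ρ.character ψ : ℂ) =
      mult W1.toRepresentation.character ψ + mult W2.toRepresentation.character ψ := by
      rw [mult_cast hc hψ, mult_cast c1 hψ, mult_cast c2 hψ, ← ip_add_left, ← hadd]
    exact_mod_cast this
  have hχ : mult ρ.character ρ.character = 1 := by simp [mult, ip_self h]
  have hψ : ∀ ψ ∈ irr G, ψ ≠ ρ.character → mult ρ.character ψ = 0 := by
    intro ψ hψ hne
    simp [mult, ip_ne h (mem_irr.1 hψ) hne.symm]
  -- a summand in which the irreducible character does not occur is zero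
  have key : ∀ W' : Subrepresentation ρ,
      (∀ ψ ∈ irr G, mult W'.toRepresentation.character ψ ≤ mult ρ.character ψ) →
      mult W'.toRepresentation.character ρ.character = 0 → W'.toSubmodule = ⊥ := by
    intro W' hle h0
    have h1 := deg_eq_sum (isChar_of_rep W'.toRepresentation)
    rw [Finset.sum_eq_zero] at h1
    · have h2 := deg_cast (isChar_of_rep W'.toRepresentation)
      rw [h1, Representation.char_one] at h2
      rw [← Submodule.finrank_eq_zero (R := ℂ)]
      exact_mod_cast h2.symm
    · intro ψ hψ'
      by_cases hne : ψ = ρ.character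
      · rw [hne, h0, zero_mul]
      · have := hle ψ hψ'
        rw [hψ ψ hψ' hne] at this
        rw [Nat.le_zero.1 this, zero_mul]
  have hs := hm _ (mem_irr.2 h)
  rw [hχ] at hs
  rcases Nat.eq_zero_or_pos (mult W1.toRepresentation.character ρ.character) with h0 | h0
  · left
    exact key W1 (fun ψ hψ => by rw [hm ψ hψ]; omega) h0
  · right
    have := key W2 (fun ψ hψ => by rw [hm ψ hψ]; omega) (by omega)
    have h2 : W2 = ⊥ := Subrepresentation.toSubmodule_injective this
    rename_i hcompl
    have h3 : W1 = ⊤ := by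
      have := hcompl.sup_eq_top
      rwa [h2, sup_bot_eq] at this
    exact congrArg Subrepresentation.toSubmodule h3

end Restriction

/-! ### Supplements of a minimal normal subgroup -/

section Key

variable {G : Type} [Group G] [Fintype G] {A R : Subgroup G} [Fintype A]

theorem lin_eq_one_of_mem {l : G →* ℂˣ} (hR : R ≤ commutator G) {x : G} (hx : x ∈ R) : l x = 1 :=
  Abelianization.commutator_subset_ker l (hR hx)

theorem resLin_injective (hR : R ≤ commutator G) (hAR : A ⊔ R = ⊤) :
    Function.Injective (resLin A) := by
  intro l l' h
  have h1 : A ≤ (l / l').ker := by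
    intro a ha
    have := DFunLike.congr_fun h ⟨a, ha⟩
    simp only [resLin, MonoidHom.comp_apply, Subgroup.subtype_apply] at this
    rw [MonoidHom.mem_ker, MonoidHom.div_apply, this, div_self']
  have h2 : R ≤ (l / l').ker := fun x hx => lin_eq_one_of_mem hR hx
  have h3 : (l / l').ker = ⊤ := top_le_iff.1 (hAR ▸ sup_le h1 h2)
  ext g
  have : g ∈ (l / l').ker := by rw [h3]; trivial
  rw [MonoidHom.mem_ker, MonoidHom.div_apply, div_eq_one] at this
  rw [this]

theorem deg_ne_one (hR : R ≤ commutator G) (hAR : A ⊔ R = ⊤) {χ : G → ℂ} (h : χ ∈ Irr G)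
    (hne : χ ≠ 1) (hm : 0 < mult (res A χ) 1) : deg χ ≠ 1 := by
  intro h1
  obtain ⟨l, rfl⟩ := exists_lin h h1
  rw [res_lin] at hm
  by_cases h2 : lin (resLin A l) = 1
  · rw [← lin_one] at h2
    have h3 : resLin A l = resLin A 1 := lin_injective h2
    rw [resLin_injective hR hAR h3, lin_one] at hne
    exact hne rfl
  · simp [mult, ip_ne (lin_mem _) one_mem h2] at hm

theorem ip_res_mul_lin (χ : G → ℂ) {l : G →* ℂˣ} (hl : l ∈ stab χ) (ψ : A → ℂ) :
    ip (res A χ) (ψ * lin (resLin A l)) = ip (res A χ) ψ := by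
  rw [mem_stab] at hl
  conv_rhs => rw [← mul_lin_eq_iff.2 (mul_lin_eq_iff.1 hl)]
  have : dual (lin (resLin A l⁻¹)) = lin (resLin A l) := by
    rw [dual_lin]; congr 1
  rw [← this, ← ip_mul_left, ← res_lin, ← res_mul, ← mul_lin_eq_iff.1 hl, hl]

/-- The restriction to `A` of a non-trivial irreducible character containing `1_A` is the sum of
the restrictions of the linear characters fixing it. -/
theorem res_eq_sum (hG : Odd (Nat.card G)) {B : ℝ} (hB : B ≤ 3) (hacd : acd G < B)
    (hR : R ≤ commutator G) (hAR : A ⊔ R = ⊤) {χ : G → ℂ} (h : χ ∈ Irr G)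
    (hne : χ ≠ 1) (hm : 0 < mult (res A χ) 1) :
    deg χ = Nat.card (stab χ) ∧ mult (res A χ) 1 = 1 ∧
      ∀ ψ ∈ Irr A, ip (res A χ) ψ ≠ 0 → ∃ l ∈ stab χ, ψ = lin (resLin A l) := by
  classical
  haveI : Fintype (stab χ) := Fintype.ofFinite _
  have hGA : Odd (Nat.card A) := hG.of_dvd_nat A.card_subgroup_dvd_card
  have hc := isChar_of_irr h
  have hd1 := deg_ne_one hR hAR h hne hm
  have hrc := isChar_res A hc
  set d := deg χ with hd
  set s := Nat.card (stab χ) with hs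
  set m := mult (res A χ) 1 with hmdef
  have hspos : 0 < s := Nat.card_pos
  have hsodd : Odd s := odd_card_lin hG _
  have hd3 : 3 ≤ d := three_le_deg hG h (fun l hl => hd1 (by rw [hd, hl, deg_lin]))
  -- apply the orbit bound to the two disjoint orbits of `χ` and its dual
  have hds : d ≤ s + 2 := by
    have hstab : stab (dual χ) = stab χ := by
      ext l
      rw [mem_stab, mem_stab]
      constructor
      · intro hl
        have := congrArg dual hl
        rw [dual_mul, dual_dual, dual_lin] at this
        exact (mul_lin_eq_iff.2 this.symm)
      · intro hl
        have := congrArg dual hl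
        rw [dual_mul, dual_lin] at this
        exact (mul_lin_eq_iff.2 this.symm)
    have hb := orbit_bound hG hB hacd {χ, dual χ} ?_ ?_
    · have hne' : χ ≠ dual χ := by
        have := dual_ne_mul_lin hG h hd1 1
        rw [lin_one, mul_one] at this
        exact this.symm
      rw [Finset.sum_pair hne', deg_dual] at hb
      have e1 := card_orb χ
      have e2 := card_orb (dual χ)
      rw [hstab] at e2
      have e3 : (orb (dual χ)).card = (orb χ).card :=
        Nat.eq_of_mul_eq_mul_right hspos (e2.trans e1.symm)
      rw [e3, ← e1] at hb
      push_cast at hb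
      have ho : (0 : ℝ) < (orb χ).card := by
        have : 0 < (orb χ).card := Finset.card_pos.2 ⟨χ, mem_orb.2 ⟨1, by rw [lin_one, mul_one]⟩⟩
        exact_mod_cast this
      have hb2 : 2 * ((d : ℝ) - B) < s * (B - 1) := by
        have : (orb χ).card * (2 * ((d : ℝ) - B)) < (orb χ).card * (s * (B - 1)) := by
          rw [← hs, ← hd] at hb
          linarith
        exact lt_of_mul_lt_mul_left this ho.le
      have hs' : (0 : ℝ) < s := by exact_mod_cast hspos
      have : (d : ℝ) < s + 3 := by nlinarith
      have : d < s + 3 := by exact_mod_cast this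
      omega
    · intro ψ hψ
      simp only [Finset.mem_insert, Finset.mem_singleton] at hψ
      rcases hψ with rfl | rfl
      · exact ⟨h, hd1⟩
      · exact ⟨dual_mem h, by rw [deg_dual]; exact hd1⟩
    · intro φ hφ ψ hψ l hl
      simp only [Finset.mem_insert, Finset.mem_singleton] at hφ hψ
      rcases hφ with rfl | rfl <;> rcases hψ with rfl | rfl
      · rfl
      · exact absurd hl.symm (dual_ne_mul_lin hG h hd1 l)
      · exact absurd (mul_lin_eq_iff.1 hl) (dual_ne_mul_lin hG h hd1 _)
      · rfl
  -- if `s = 1` then `d = 3`, and a character of degree `3` has a non-trivial stabilizer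
  have hs3 : 3 ≤ s := by
    rcases hsodd with ⟨k, hk⟩
    by_contra hlt
    have hs1 : s = 1 := by omega
    obtain ⟨l, hl1, hl⟩ := exists_fix_of_deg_three hG h (by omega)
    have := (Subgroup.eq_bot_iff_card (stab χ)).2 hs1
    have hmem : l ∈ stab χ := hl
    rw [this] at hmem
    exact hl1 (Subgroup.mem_bot.1 hmem)
  -- `T ψ` consists of the `ψ λ_A` with `λ` in the stabilizer; its members occur equally often
  let T : (A → ℂ) → Finset (A → ℂ) := fun ψ =>
    Finset.univ.image fun l : stab χ => ψ * lin (resLin A l.1)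
  have hTirr : ∀ ψ ∈ Irr A, T ψ ⊆ irr A := by
    intro ψ hψ θ hθ
    obtain ⟨l, -, rfl⟩ := Finset.mem_image.1 hθ
    exact mem_irr.2 (mul_lin_mem hψ _)
  have hTcard : ∀ ν : A →* ℂˣ, (T (lin ν)).card = s := by
    intro ν
    rw [Finset.card_image_of_injective, Finset.card_univ, hs, Nat.card_eq_fintype_card]
    intro l l' hll
    have h1 : lin (ν * resLin A l.1) = lin (ν * resLin A l'.1) := by
      rw [lin_mul, lin_mul]; exact hll
    exact Subtype.ext (resLin_injective hR hAR (mul_left_cancel (lin_injective h1)))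
  have hTsum : ∀ ν : A →* ℂˣ,
      ∑ ψ ∈ T (lin ν), mult (res A χ) ψ * deg ψ = s * mult (res A χ) (lin ν) := by
    intro ν
    rw [← hTcard ν, ← smul_eq_mul]
    refine Finset.sum_eq_card_nsmul fun ψ hψ => ?_
    obtain ⟨l, -, rfl⟩ := Finset.mem_image.1 hψ
    rw [deg_mul_lin, deg_lin, mul_one, mult, ip_res_mul_lin χ l.2, mult]
  have hsum := deg_eq_sum hrc
  rw [deg_res, ← hd] at hsum
  have hT1 := hTsum 1
  rw [lin_one] at hT1
  have hle1 : s * m ≤ d := by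
    rw [hsum, ← hT1]
    exact Finset.sum_le_sum_of_subset (hTirr 1 one_mem)
  have hm1 : m = 1 := by nlinarith
  have hother : ∀ ψ ∈ Irr A, ψ ∉ T 1 → mult (res A χ) ψ = 0 := by
    intro ψ hψ hn
    by_contra h0
    have h0 : 0 < mult (res A χ) ψ := Nat.pos_of_ne_zero h0
    have hdψ : deg ψ = 1 := by
      have hle : mult (res A χ) ψ * deg ψ + s * m ≤ d := by
        rw [hsum, ← hT1, ← Finset.sum_insert (f := fun ψ => mult (res A χ) ψ * deg ψ) hn]
        exact Finset.sum_le_sum_of_subset (Finset.insert_subset (mem_irr.2 hψ) (hTirr 1 one_mem))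
      obtain ⟨k, hk⟩ := odd_deg hGA hψ
      have : deg ψ ≤ mult (res A χ) ψ * deg ψ := Nat.le_mul_of_pos_left _ h0
      rw [hm1] at hle
      omega
    obtain ⟨ν, rfl⟩ := exists_lin hψ hdψ
    have hdisj : Disjoint (T (lin ν)) (T 1) := by
      rw [Finset.disjoint_left]
      intro θ h1 h2
      obtain ⟨l, -, rfl⟩ := Finset.mem_image.1 h1
      obtain ⟨l', -, h2⟩ := Finset.mem_image.1 h2
      apply hn
      refine Finset.mem_image.2 ⟨l' * l⁻¹, Finset.mem_univ _, ?_⟩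
      rw [one_mul] at h2 ⊢
      have h3 := mul_lin_eq_iff.1 h2.symm
      rw [h3, ← lin_mul]
      congr 1
    have hle : s * mult (res A χ) (lin ν) + s * m ≤ d := by
      rw [hsum, ← hT1, ← hTsum, ← Finset.sum_union hdisj]
      exact Finset.sum_le_sum_of_subset (Finset.union_subset (hTirr _ hψ) (hTirr 1 one_mem))
    nlinarith
  refine ⟨?_, hm1, ?_⟩
  · rw [hsum, ← Finset.sum_subset (hTirr 1 one_mem), hT1, ← hmdef, hm1, mul_one]
    intro ψ hψ hn
    rw [hother ψ (mem_irr.1 hψ) hn, zero_mul]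
  · intro ψ hψ h0
    have : ψ ∈ T 1 := by
      by_contra hn
      apply h0
      rw [← mult_cast hrc (isChar_of_irr hψ), hother ψ hψ hn, Nat.cast_zero]
    obtain ⟨l, -, rfl⟩ := Finset.mem_image.1 this
    exact ⟨l, l.2, by rw [one_mul]⟩

theorem apply_eq_sum (hG : Odd (Nat.card G)) {B : ℝ} (hB : B ≤ 3) (hacd : acd G < B)
    (hR : R ≤ commutator G) (hAR : A ⊔ R = ⊤) {χ : G → ℂ} (h : χ ∈ Irr G)
    (hne : χ ≠ 1) (hm : 0 < mult (res A χ) 1) [Fintype (stab χ)] (x : A) :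
    χ x = ∑ l : stab χ, ((l.1 x : ℂˣ) : ℂ) := by
  classical
  obtain ⟨-, h1, h2⟩ := res_eq_sum hG hB hacd hR hAR h hne hm
  have hrc := isChar_res A (isChar_of_irr h)
  have h3 : res A χ x = (∑ ψ ∈ irr A, (mult (res A χ) ψ : ℂ) • ψ) x :=
    congrFun (decomp hrc) x
  change res A χ x = _
  have hinj : Function.Injective fun l : stab χ => lin (resLin A l.1) := fun l l' hll =>
    Subtype.ext (resLin_injective hR hAR (lin_injective hll))
  rw [h3, Finset.sum_apply, ← Finset.sum_subset
    (s₁ := Finset.univ.image fun l : stab χ => lin (resLin A l.1)),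
    Finset.sum_image (fun _ _ _ _ hll => hinj hll)]
  · refine Finset.sum_congr rfl fun l _ => ?_
    have h4 : mult (res A χ) (lin (resLin A l.1)) = 1 := by
      rw [← h1, mult, ← one_mul (lin (resLin A l.1)), ip_res_mul_lin χ l.2, mult]
    rw [h4]
    simp [resLin]
  · intro ψ hψ
    obtain ⟨l, -, rfl⟩ := Finset.mem_image.1 hψ
    exact mem_irr.2 (lin_mem _)
  · intro ψ hψ hn
    have : ip (res A χ) ψ = 0 := by
      by_contra h0
      obtain ⟨l, hl, rfl⟩ := h2 ψ (mem_irr.1 hψ) h0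
      exact hn (Finset.mem_image.2 ⟨⟨l, hl⟩, Finset.mem_univ _, rfl⟩)
    simp [mult, this]

/-- The values of `χ|_A`, a sum over a group of linear characters, are `χ(1)` on its kernel and `0`
elsewhere; compare with the multiplicity `1` of `1_A`. -/
theorem card_eq_deg_mul (hG : Odd (Nat.card G)) {B : ℝ} (hB : B ≤ 3) (hacd : acd G < B)
    (hR : R ≤ commutator G) (hAR : A ⊔ R = ⊤) {χ : G → ℂ} (h : χ ∈ Irr G)
    (hne : χ ≠ 1) (hm : 0 < mult (res A χ) 1) :
    Nat.card A = deg χ * Nat.card {x : A // χ x = χ 1} := by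
  classical
  haveI : Fintype (stab χ) := Fintype.ofFinite _
  obtain ⟨hds, h1, -⟩ := res_eq_sum hG hB hacd hR hAR h hne hm
  have hc := isChar_of_irr h
  have hrc := isChar_res A hc
  have hdeg := deg_cast hc
  have hval : ∀ x : A, χ x = if χ x = χ 1 then (deg χ : ℂ) else 0 := by
    intro x
    have h2 := apply_eq_sum hG hB hacd hR hAR h hne hm x
    let f : stab χ →* ℂ :=
      { toFun := fun l => ((l.1 x : ℂˣ) : ℂ)
        map_one' := by simp
        map_mul' := by intro a b; simp }
    have h3 : χ x = ((if f = 1 then Fintype.card (stab χ) else 0 : ℕ) : ℂ) := by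
      rw [h2]; exact_mod_cast sum_hom_units f
    split_ifs with hx
    · rw [hdeg, hx]
    · rw [h3]
      split_ifs with hf
      · rw [if_pos hf, ← Nat.card_eq_fintype_card, ← hds, hdeg] at h3
        exact absurd h3 hx
      · simp
  have h4 := mult_cast hrc (isChar_of_irr (one_mem (G := A)))
  rw [h1, ip] at h4
  have h5 : ∑ x : A, res A χ x * (1 : A → ℂ) x⁻¹ =
      deg χ * Nat.card {x : A // χ x = χ 1} := by
    have : ∀ x : A, res A χ x * (1 : A → ℂ) x⁻¹ = if χ x = χ 1 then (deg χ : ℂ) else 0 := by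
      intro x
      rw [Pi.one_apply, mul_one]
      exact hval x
    simp_rw [this]
    rw [← Finset.sum_filter, Finset.sum_const, nsmul_eq_mul, Nat.card_eq_fintype_card,
      Fintype.card_subtype, mul_comm]
  rw [h5] at h4
  have h0 : (Nat.card A : ℂ) ≠ 0 := card_ne
  field_simp at h4
  have h6 : ((Nat.card A : ℕ) : ℂ) = ((deg χ * Nat.card {x : A // χ x = χ 1} : ℕ) : ℂ) := by
    push_cast; rw [← h4]; simp
  exact_mod_cast h6

/-- For a non-trivial irreducible constituent `χ` of the permutation character on `G/A`, the kernel
of `χ|_A` is the centralizer of `R` in `A`. Both claims hold because the kernel of `χ` meets the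
minimal normal subgroup `R` trivially, while `A ∩ R` lies in it. -/
theorem ker_facts (hG : Odd (Nat.card G)) {B : ℝ} (hB : B ≤ 3) (hacd : acd G < B)
    (hR : R ≤ commutator G) (hRn : R.Normal)
    (hmin : ∀ N : Subgroup G, N.Normal → N ≤ R → N = ⊥ ∨ N = R)
    (hAR : A ⊔ R = ⊤) {χ : G → ℂ} (h : χ ∈ Irr G)
    (hne : χ ≠ 1) (hm : 0 < mult (res A χ) 1) :
    A ⊓ R = ⊥ ∧ ∀ x : A, χ x = χ 1 ↔ (x : G) ∈ Subgroup.centralizer (R : Set G) := by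
  classical
  haveI : Fintype (stab χ) := Fintype.ofFinite _
  have hval := apply_eq_sum hG hB hacd hR hAR h hne hm
  have hmc := mult_cast (isChar_res A (isChar_of_irr h)) (isChar_of_irr (one_mem (G := A)))
  have hc := isChar_of_irr h
  rw [isChar_iff] at hc
  obtain ⟨V, i1, i2, i3, ρ, rfl⟩ := hc
  rw [← finrank_fixedPts] at hmc
  have hmc : mult (res A ρ.character) 1 = Module.finrank ℂ (fixedPts ρ A) := by exact_mod_cast hmc
  rw [hmc] at hm
  have hAfix : fixedPts ρ A ≠ ⊥ := by
    intro h0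
    rw [h0] at hm
    simp at hm
  obtain ⟨v, hv, hv0⟩ := (Submodule.ne_bot_iff _).1 hAfix
  rw [mem_fixedPts] at hv
  let K : Subgroup G := (MonoidHom.ker ρ)
  have hK : K ⊓ R = ⊥ := by
    refine (hmin _ inferInstance inf_le_right).resolve_right fun hKR => ?_
    have hRK : R ≤ K := inf_eq_right.1 hKR
    -- a vector fixed by `A` and by `R` is fixed by `G`
    have h2 : ∀ g : G, ρ g v = v := by
      intro g
      have hg : g ∈ A ⊔ R := by rw [hAR]; trivial
      obtain ⟨a, ha, r, hr, rfl⟩ := Subgroup.mem_sup_of_normal_right.1 hg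
      have hr1 : ρ r = 1 := hRK hr
      rw [map_mul, hr1, mul_one, hv a ha]
    have inv1 := invertibleOfNonzero (card_ne (G := G))
    have h3 := ip_ne h one_mem hne
    have h4 := ρ.card_inv_mul_sum_char_eq_finrank
    have h5 : (Module.finrank ℂ ρ.invariants : ℂ) = 0 := by
      rw [← h4, ← h3, ip]; simp
    have h6 : ρ.invariants = ⊥ := by
      rw [← Submodule.finrank_eq_zero (R := ℂ)]; exact_mod_cast h5
    have h7 : v ∈ ρ.invariants := (Representation.mem_invariants _ _).2 h2
    rw [h6] at h7
    exact hv0 h7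
  constructor
  · rw [eq_bot_iff, ← hK]
    have h1 : ∀ x ∈ A ⊓ R, ρ x = 1 := by
      refine eq_one_of_char_eq ρ (A ⊓ R) fun x hx => ?_
      have h2 := hval ⟨x, hx.1⟩
      have h3 := hval 1
      simp only at h2
      rw [h2]
      rw [show ((1 : A) : G) = 1 from rfl] at h3
      rw [h3]
      refine Finset.sum_congr rfl fun l _ => ?_
      rw [lin_eq_one_of_mem hR hx.2, map_one]
    exact fun x hx => ⟨h1 x hx, hx.2⟩
  · intro x
    constructor
    · intro hx
      have hx1 : ρ x = 1 := by
        refine eq_one_of_char_eq ρ (Subgroup.zpowers (x : G)) ?_ x (Subgroup.mem_zpowers _)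
        rintro y ⟨n, rfl⟩
        -- from `χ l = χ` and `χ x ≠ 0`
        have hl : ∀ l ∈ stab ρ.character, l (x : G) = 1 := by
          intro l hl
          by_contra hlx
          have h1 := congrFun (mem_stab.1 hl) (x : G)
          rw [Pi.mul_apply, lin_apply, mul_eq_left₀, Units.val_eq_one] at h1
          · exact hlx h1
          · rw [hx, ← deg_cast (isChar_of_rep ρ)]
            exact_mod_cast (deg_pos h).ne'
        have h2 := hval (x ^ n)
        have h3 := hval 1
        rw [show ((x ^ n : A) : G) = (x : G) ^ n by simp] at h2
        rw [show ((1 : A) : G) = 1 from rfl] at h3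
        simp only
        rw [h2, h3]
        refine Finset.sum_congr rfl fun l _ => ?_
        rw [map_zpow, hl l.1 l.2, one_zpow, map_one]
      rw [Subgroup.mem_centralizer_iff]
      intro r hr
      have : x * r * (x : G)⁻¹ * r⁻¹ ∈ K ⊓ R := by
        constructor
        · change ρ _ = 1
          have hx2 : ρ (x : G)⁻¹ = 1 := by
            have := map_mul ρ (x : G) (x : G)⁻¹
            rw [mul_inv_cancel, map_one, hx1, one_mul] at this
            exact this.symm
          rw [map_mul, map_mul, map_mul, hx1, hx2, one_mul, mul_one, ← map_mul, mul_inv_cancel,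
            map_one]
        · exact R.mul_mem (hRn.conj_mem r hr x) (R.inv_mem hr)
      rw [hK, Subgroup.mem_bot] at this
      have h3 := mul_inv_eq_one.1 this
      exact (mul_inv_eq_iff_eq_mul.1 h3).symm
    · intro hx
      let C : Subgroup G := A ⊓ Subgroup.centralizer (R : Set G)
      have hCn : C.Normal := by
        refine ⟨fun c hc g => ?_⟩
        have hg : g ∈ A ⊔ R := by rw [hAR]; trivial
        obtain ⟨a, ha, r, hr, rfl⟩ := Subgroup.mem_sup_of_normal_right.1 hg
        have h1 : r * c * r⁻¹ = c := by
          rw [Subgroup.mem_centralizer_iff.1 hc.2 r hr, mul_inv_cancel_right]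
        have h2 : a * r * c * (a * r)⁻¹ = a * c * a⁻¹ := by
          rw [mul_inv_rev, ← mul_assoc, mul_assoc a r c, mul_assoc a (r * c), h1]
        rw [h2]
        exact ⟨A.mul_mem (A.mul_mem ha hc.1) (A.inv_mem ha),
          (inferInstance : (Subgroup.centralizer (R : Set G)).Normal).conj_mem c hc.2 a⟩
      have hstab : ∀ g, ∀ w ∈ fixedPts ρ C, ρ g w ∈ fixedPts ρ C := by
        intro g w hw
        rw [mem_fixedPts] at hw ⊢
        intro c hc
        have h1 := hw _ (hCn.conj_mem c hc g⁻¹)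
        rw [inv_inv, map_mul, map_mul] at h1
        have h2 := congrArg (ρ g) h1
        simp only [Module.End.mul_apply] at h2
        rw [← Module.End.mul_apply, ← map_mul, mul_inv_cancel, map_one, Module.End.one_apply] at h2
        exact h2
      have hCfix : fixedPts ρ C = ⊤ := by
        refine (subrep_eq_bot_or_top ρ h _ hstab).resolve_left fun h0 => hv0 ?_
        have : v ∈ fixedPts ρ C := (mem_fixedPts ρ C v).2 fun c hc => hv c hc.1
        rw [h0] at this
        exact this
      have hx1 : ρ x = 1 := by
        ext w
        have : w ∈ fixedPts ρ C := by rw [hCfix]; trivial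
        exact (mem_fixedPts ρ C w).1 this x ⟨x.2, hx⟩
      simp only [Representation.character, hx1, map_one]

/-- A proper supplement `A` of a minimal normal subgroup `R ≤ G'` is a complement. Here `N` counts
the non-trivial irreducible constituents of the permutation character on `G/A`; they have a common
degree `t` and lie in different orbits of the group of linear characters, so that `orbit_bound`
gives the inequality. -/
theorem key (hG : Odd (Nat.card G)) {B : ℝ} (hB : B ≤ 3) (hacd : acd G < B)
    (hR : R ≤ commutator G) (hRn : R.Normal)
    (hmin : ∀ N : Subgroup G, N.Normal → N ≤ R → N = ⊥ ∨ N = R)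
    (hAR : A ⊔ R = ⊤) (hRA : ¬ R ≤ A) :
    A ⊓ R = ⊥ ∧ ∃ N t : ℕ, Odd t ∧ 3 ≤ t ∧ 0 < N ∧ Nat.card R = 1 + N * t ∧
      (N : ℝ) * (t - B) < t * (B - 1) := by
  classical
  set E := ((irr G).erase 1).filter fun χ => 0 < mult (res A χ) 1 with hE
  have hEmem : ∀ χ ∈ E, χ ∈ Irr G ∧ χ ≠ 1 ∧ 0 < mult (res A χ) 1 := by
    intro χ hχ
    rw [hE, Finset.mem_filter, Finset.mem_erase, mem_irr] at hχ
    exact ⟨hχ.1.2, hχ.1.1, hχ.2⟩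
  have hindex : A.index = 1 + ∑ χ ∈ E, deg χ := by
    rw [← sum_deg_mult A, ← Finset.add_sum_erase _ _ (mem_irr.2 (one_mem (G := G)))]
    have h1 : mult (res A 1) 1 = 1 := by
      have : ip (res A 1) 1 = 1 := ip_self (one_mem (G := A))
      simp [mult, this]
    rw [h1, deg_one]
    congr 1
    rw [hE, Finset.sum_filter]
    refine Finset.sum_congr rfl fun χ hχ => ?_
    rw [Finset.mem_erase, mem_irr] at hχ
    split_ifs with h0
    · rw [(res_eq_sum hG hB hacd hR hAR hχ.2 hχ.1 h0).2.1, mul_one]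
    · rw [Nat.eq_zero_of_not_pos h0, mul_zero]
  have hAtop : A ≠ ⊤ := fun h => hRA (h ▸ le_top)
  have hEne : E.Nonempty := by
    rw [Finset.nonempty_iff_ne_empty]
    intro h0
    rw [h0, Finset.sum_empty, add_zero, Subgroup.index_eq_one] at hindex
    exact hAtop hindex
  obtain ⟨χ₀, hχ₀⟩ := hEne
  obtain ⟨hirr0, hne0, hm0⟩ := hEmem χ₀ hχ₀
  have hdeg : ∀ χ ∈ E, deg χ = deg χ₀ := by
    have haux : ∀ χ ∈ E, Nat.card A =
        deg χ * Nat.card {x : A // (x : G) ∈ Subgroup.centralizer (R : Set G)} := by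
      intro χ hχ
      obtain ⟨h1, h2, h3⟩ := hEmem χ hχ
      rw [card_eq_deg_mul hG hB hacd hR hAR h1 h2 h3]
      congr 1
      exact Nat.card_congr (Equiv.subtypeEquivRight
        (ker_facts hG hB hacd hR hRn hmin hAR h1 h2 h3).2)
    intro χ hχ
    have h1 := haux χ hχ
    rw [haux χ₀ hχ₀] at h1
    have hpos : 0 < Nat.card {x : A // (x : G) ∈ Subgroup.centralizer (R : Set G)} :=
      haveI : Nonempty {x : A // (x : G) ∈ Subgroup.centralizer (R : Set G)} := ⟨⟨1, by simp⟩⟩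
      Nat.card_pos
    exact (Nat.eq_of_mul_eq_mul_right hpos h1).symm
  have hinf := (ker_facts hG hB hacd hR hRn hmin hAR hirr0 hne0 hm0).1
  have hd1 := deg_ne_one hR hAR hirr0 hne0 hm0
  have h3 : 3 ≤ deg χ₀ := three_le_deg hG hirr0 (fun l hl => hd1 (by rw [hl, deg_lin]))
  refine ⟨hinf, E.card, deg χ₀, odd_deg hG hirr0, h3, Finset.card_pos.2 ⟨χ₀, hχ₀⟩, ?_, ?_⟩
  · have h4 : Subgroup.IsComplement' A R := by
      refine Subgroup.isComplement'_of_disjoint_and_mul_eq_univ (disjoint_iff.2 hinf) ?_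
      rw [← Subgroup.mul_normal, hAR]; rfl
    rw [← h4.symm.index_eq_card, hindex, Finset.sum_congr rfl hdeg, Finset.sum_const, smul_eq_mul]
  · have hb := orbit_bound hG hB hacd E ?_ ?_
    · have h5 : ∀ χ ∈ E, ((orb χ).card : ℝ) * ((deg χ : ℝ) - B) * deg χ₀ =
          Nat.card (G →* ℂˣ) * ((deg χ₀ : ℝ) - B) := by
        intro χ hχ
        obtain ⟨h1, h2, h3⟩ := hEmem χ hχ
        have h6 := card_orb χ
        rw [← (res_eq_sum hG hB hacd hR hAR h1 h2 h3).1, hdeg χ hχ] at h6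
        rw [hdeg χ hχ, ← h6]
        push_cast
        ring
      have ht : (0 : ℝ) < deg χ₀ := by exact_mod_cast deg_pos hirr0
      have h7 := mul_lt_mul_of_pos_right hb ht
      rw [Finset.sum_mul, Finset.sum_congr rfl h5, Finset.sum_const, nsmul_eq_mul] at h7
      have ha : (0 : ℝ) < Nat.card (G →* ℂˣ) := by
        have : 0 < Nat.card (G →* ℂˣ) := Nat.card_pos
        exact_mod_cast this
      refine lt_of_mul_lt_mul_left (a := (Nat.card (G →* ℂˣ) : ℝ)) ?_ ha.le
      linarith
    · intro χ hχ
      obtain ⟨h1, h2, h3⟩ := hEmem χ hχ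
      exact ⟨h1, deg_ne_one hR hAR h1 h2 h3⟩
    · intro χ hχ ψ hψ l hl
      obtain ⟨h1, h2, h3⟩ := hEmem χ hχ
      obtain ⟨h4, h5, h6⟩ := hEmem ψ hψ
      obtain ⟨-, -, h7⟩ := res_eq_sum hG hB hacd hR hAR h1 h2 h3
      have h8 : ip (res A χ) (lin (resLin A l⁻¹)) ≠ 0 := by
        have h9 := mult_cast (isChar_res A (isChar_of_irr h4)) (isChar_of_irr (one_mem (G := A)))
        rw [← hl, res_mul, ip_mul_left, one_mul, res_lin, dual_lin] at h9
        intro h0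
        have h10 : (mult (res A (χ * lin l)) 1 : ℂ) = 0 := h9.trans h0
        rw [hl] at h10
        have : mult (res A ψ) 1 = 0 := by exact_mod_cast h10
        omega
      obtain ⟨l', hl', h9⟩ := h7 _ (lin_mem _) h8
      have h10 : l⁻¹ = l' := resLin_injective hR hAR (lin_injective h9)
      rw [← h10, mem_stab] at hl'
      rw [← hl]
      exact (mul_lin_eq_iff.2 hl'.symm).symm

end Key

/-! ### Average degree of a quotient -/

section Quotient

variable {G : Type} [Group G] [Fintype G]

theorem ip_comp {H : Type} [Group H] [Fintype H] (f : G →* H) (hf : Function.Surjective f)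
    (φ ψ : H → ℂ) : ip (φ ∘ f) (ψ ∘ f) = ip φ ψ := by
  classical
  -- the fibres of `f` all have the size of the fibre over `1`
  set c : ℕ := (Finset.univ.filter fun g => f g = 1).card with hc
  have hsum : ∀ F : H → ℂ, ∑ g : G, F (f g) = c * ∑ h : H, F h := by
    intro F
    rw [← Finset.sum_fiberwise Finset.univ f, Finset.mul_sum]
    refine Finset.sum_congr rfl fun h _ => ?_
    rw [Finset.sum_congr rfl (g := fun _ => F h) (by
      intro x hx; rw [(Finset.mem_filter.1 hx).2]), Finset.sum_const, nsmul_eq_mul]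
    congr 2
    exact MonoidHom.card_fiber_eq_of_mem_range f (hf h) (hf 1)
  have hcard : (Nat.card G : ℂ) = c * Nat.card H := by
    simpa using hsum fun _ => 1
  have hc0 : (c : ℂ) ≠ 0 := by
    intro h0
    rw [h0, zero_mul] at hcard
    exact card_ne hcard
  have h1 := hsum fun h => φ h * ψ h⁻¹
  simp only [ip, Function.comp_apply, map_inv]
  rw [h1, hcard]
  field_simp

/-- Passing to a quotient by a subgroup of the derived subgroup only discards nonlinear
characters, which have degree at least `3`, so it preserves an upper bound `B ≤ 3` on the
average degree. -/
theorem acd_quotient (hG : Odd (Nat.card G)) {B : ℝ} (hB : B ≤ 3) (hacd : acd G < B)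
    (N : Subgroup G) [N.Normal] (hN : N ≤ commutator G) : acd (G ⧸ N) < B := by
  classical
  haveI : Fintype (G ⧸ N) := Fintype.ofFinite _
  rw [acd_lt_iff] at hacd ⊢
  have hsurj := QuotientGroup.mk'_surjective N
  have hinj : Function.Injective fun ψ : (G ⧸ N) → ℂ => ψ ∘ QuotientGroup.mk' N :=
    hsurj.injective_comp_right
  have hsub : (irr (G ⧸ N)).image (fun ψ => ψ ∘ QuotientGroup.mk' N) ⊆ irr G := by
    intro χ hχ
    obtain ⟨ψ, hψ, rfl⟩ := Finset.mem_image.1 hχ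
    rw [mem_irr] at hψ ⊢
    have hc := isChar_comp (QuotientGroup.mk' N) (isChar_of_irr hψ)
    exact (irr_iff hc).2 ((ip_comp _ hsurj ψ ψ).trans (ip_self hψ))
  rw [← Finset.sum_sdiff hsub, Finset.sum_image hinj.injOn] at hacd
  have hpos : 0 ≤ ∑ χ ∈ irr G \ (irr (G ⧸ N)).image (fun ψ => ψ ∘ QuotientGroup.mk' N),
      ((deg χ : ℝ) - B) := by
    refine Finset.sum_nonneg fun χ hχ => ?_
    rw [Finset.mem_sdiff, mem_irr] at hχ
    have h3 := three_le_deg hG hχ.1 (by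
      rintro l rfl
      refine hχ.2 (Finset.mem_image.2 ⟨lin (QuotientGroup.lift N l fun x hx =>
        lin_eq_one_of_mem hN hx), mem_irr.2 (lin_mem _), ?_⟩)
      rfl)
    have : (3 : ℝ) ≤ deg χ := by exact_mod_cast h3
    linarith
  have hd : ∀ ψ : (G ⧸ N) → ℂ, deg (ψ ∘ QuotientGroup.mk' N) = deg ψ := by
    intro ψ; simp [deg]
  simp only [hd] at hacd
  linarith

end Quotient

/-! ### The numerical contradiction -/

section Arithmetic

/-- The bound on the degrees is incompatible with `|R|` being a power of `p`: since `p ≡ 1 (mod 4)`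
the number `N` is divisible by `4`, which leaves only `t = 3`, and then `p ≡ 2 (mod 3)` forces
`|R| ≥ p ^ 2`. -/
theorem arith {p : ℕ} (hp : p.Prime) (hpodd : Odd p) (hmod : p % 3 = 2)
    (heven : Even ((p - 1) / 2)) {B : ℝ} (hB : B = 3 * ((p : ℝ) ^ 2 + 2) / ((p : ℝ) ^ 2 + 8))
    {N t n : ℕ} (ht : Odd t) (ht3 : 3 ≤ t) (hN : 0 < N) (hc : p ^ n = 1 + N * t)
    (hlt : (N : ℝ) * (t - B) < t * (B - 1)) : False := by
  have hp4 : p % 4 = 1 := by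
    obtain ⟨k, hk⟩ := hpodd
    obtain ⟨m, hm⟩ := heven
    omega
  have hq : (0 : ℝ) < (p : ℝ) ^ 2 + 8 := by positivity
  have h4 : 4 ∣ N := by
    have h1 : p ^ n % 4 = 1 := by rw [Nat.pow_mod, hp4]; simp
    have : 4 ∣ N * t := by omega
    refine Nat.Coprime.dvd_of_dvd_mul_right ?_ this
    exact Nat.Coprime.pow_left 2 (Nat.coprime_two_left.2 ht)
  have hN4 : 4 ≤ N := Nat.le_of_dvd hN h4
  rcases ht3.eq_or_lt with rfl | ht3
  · have h1 : (3 : ℝ) * N < (p : ℝ) ^ 2 - 1 := by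
      rw [hB] at hlt
      have e1 : (N : ℝ) * ((3 : ℕ) - 3 * ((p : ℝ) ^ 2 + 2) / ((p : ℝ) ^ 2 + 8))
          = (18 * N) / ((p : ℝ) ^ 2 + 8) := by
        field_simp; push_cast; ring
      have e2 : ((3 : ℕ) : ℝ) * (3 * ((p : ℝ) ^ 2 + 2) / ((p : ℝ) ^ 2 + 8) - 1)
          = (6 * ((p : ℝ) ^ 2 - 1)) / ((p : ℝ) ^ 2 + 8) := by
        field_simp; push_cast; ring
      rw [e1, e2, div_lt_div_iff_of_pos_right hq] at hlt
      linarith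
    have h2 : p ^ n < p ^ 2 := by
      have : (1 : ℝ) + N * 3 < (p : ℝ) ^ 2 := by linarith
      rw [hc]
      exact_mod_cast this
    have h3 : n < 2 := (Nat.pow_lt_pow_iff_right hp.one_lt).1 h2
    interval_cases n
    · simp at hc; omega
    · simp at hc; omega
  · have hB3 : B ≤ 3 := by
      rw [hB, div_le_iff₀ hq]; linarith
    have ht5 : 5 ≤ t := by
      obtain ⟨k, hk⟩ := ht; omega
    have h1 : (N : ℝ) * (t - 3) < 2 * t := by
      have hn : (0 : ℝ) ≤ N := by positivity
      have ht0 : (0 : ℝ) ≤ t := by positivity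
      nlinarith
    have h2 : (N : ℤ) * (t - 3) < 2 * t := by exact_mod_cast h1
    have hN5 : N < 8 := by
      zify at ht5 ⊢
      nlinarith
    have : N = 4 := by omega
    subst this
    have : t = 5 := by
      obtain ⟨k, hk⟩ := ht
      push_cast at h2
      omega
    subst this
    have h3 : 3 ∣ p ^ n := by rw [hc]; norm_num
    have := (Nat.prime_three.dvd_of_dvd_pow h3)
    omega

end Arithmetic

/-! ### Normal `p`-complements -/

section Complements

variable {G : Type} [Group G] [Finite G]

theorem hasNormalPComplement_of_comm {p : ℕ} (hp : p.Prime) (h : commutator G = ⊥) :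
    HasNormalPComplement G p := by
  haveI := Fact.mk hp
  have hcomm : ∀ a b : G, a * b = b * a := fun a b => by
    have : a * b * a⁻¹ * b⁻¹ ∈ commutator G :=
      Subgroup.commutator_mem_commutator (Subgroup.mem_top a) (Subgroup.mem_top b)
    rw [h, Subgroup.mem_bot] at this
    exact mul_inv_eq_iff_eq_mul.1 (mul_inv_eq_one.1 this)
  have hnorm : ∀ K : Subgroup G, K.Normal := fun K =>
    ⟨fun n hn g => by rw [hcomm g n, mul_inv_cancel_right]; exact hn⟩
  obtain ⟨P⟩ : Nonempty (Sylow p G) := inferInstance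
  haveI := hnorm P
  obtain ⟨K, hK⟩ := Subgroup.exists_right_complement'_of_coprime (N := (P : Subgroup G))
    P.card_coprime_index
  obtain ⟨n, hn⟩ := (IsPGroup.iff_card (p := p)).1 P.isPGroup'
  refine ⟨K, hnorm K, ?_, n, ?_⟩
  · rw [← hK.symm.index_eq_card]
    exact ((Nat.Prime.coprime_iff_not_dvd hp).2 P.not_dvd_index).symm
  · rw [hK.index_eq_card]; exact hn

theorem hasNormalPComplement_of_quotient {p : ℕ} (R : Subgroup G) [R.Normal]
    (hR : Nat.Coprime (Nat.card R) p) (h : HasNormalPComplement (G ⧸ R) p) :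
    HasNormalPComplement G p := by
  obtain ⟨K, hK, hc, n, hn⟩ := h
  have hs := QuotientGroup.mk'_surjective R
  refine ⟨K.comap (QuotientGroup.mk' R), inferInstance, ?_, n, ?_⟩
  · have : Nat.card (K.comap (QuotientGroup.mk' R)) = Nat.card R * Nat.card K := by
      have h1 := Subgroup.card_mul_index (K.comap (QuotientGroup.mk' R))
      have h2 := Subgroup.card_mul_index K
      have h3 := Subgroup.card_mul_index R
      rw [Subgroup.index_comap_of_surjective _ hs] at h1
      rw [← Subgroup.index_eq_card] at h2
      rw [← h2, ← h1, ← mul_assoc] at h3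
      exact (Nat.eq_of_mul_eq_mul_right (Nat.pos_of_ne_zero Subgroup.index_ne_zero_of_finite) h3).symm
    rw [this]
    exact Nat.Coprime.mul_left hR hc
  · rw [Subgroup.index_comap_of_surjective _ hs, hn]

end Complements

/-! ### Conjugacy of complements of an abelian Hall subgroup -/

section Frattini

open MulOpposite MulAction Subgroup.leftTransversals
open scoped IsMulCommutative Pointwise

/-- Every complement of an abelian normal Hall subgroup `R` is a stabilizer for the action on
`R.QuotientDiff` that underlies the Schur–Zassenhaus theorem. -/
theorem exists_stabilizer {K : Type} [Group K] [Finite K] (R : Subgroup K) [R.Normal]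
    [IsMulCommutative R] (hR : Nat.Coprime (Nat.card R) R.index) (L : Subgroup K)
    (hL : Subgroup.IsComplement' R L) : ∃ α : R.QuotientDiff, stabilizer K α = L := by
  let T : R.LeftTransversal := ⟨(L : Set K), hL.symm⟩
  let α : R.QuotientDiff := Quotient.mk'' T
  refine ⟨α, ?_⟩
  have hle : L ≤ stabilizer K α := by
    intro l hl
    rw [mem_stabilizer_iff]
    refine congrArg Quotient.mk'' (?_ : op l⁻¹ • T = T)
    apply Subtype.ext
    show op l⁻¹ • (L : Set K) = L
    ext x
    rw [Set.mem_smul_set_iff_inv_smul_mem]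
    simp [Subgroup.mul_mem_cancel_right L hl]
  refine (Subgroup.eq_of_le_of_card_ge hle ?_).symm
  have h1 := (Subgroup.isComplement'_stabilizer_of_coprime (α := α) hR).card_mul_card
  rw [← hL.card_mul_card] at h1
  exact (Nat.eq_of_mul_eq_mul_left Nat.card_pos h1).le

/-- Conjugacy of the complements of an abelian normal Hall subgroup. -/
theorem compl_conj {K : Type} [Group K] [Finite K] (R : Subgroup K) [R.Normal]
    [IsMulCommutative R] (hR : Nat.Coprime (Nat.card R) R.index) (H L : Subgroup K)
    (hH : Subgroup.IsComplement' R H) (hL : Subgroup.IsComplement' R L) :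
    ∃ r ∈ R, ∀ x, x ∈ L ↔ r⁻¹ * x * r ∈ H := by
  obtain ⟨α, rfl⟩ := exists_stabilizer R hR H hH
  obtain ⟨β, rfl⟩ := exists_stabilizer R hR L hL
  obtain ⟨r, rfl⟩ := Subgroup.exists_smul_eq hR α β
  refine ⟨r, r.2, fun x => ?_⟩
  rw [mem_stabilizer_iff, mem_stabilizer_iff]
  show x • (r : K) • α = (r : K) • α ↔ _
  rw [mul_smul, mul_smul, inv_smul_eq_iff]

variable {G : Type} [Group G] [Finite G]

/-- A Frattini argument: the normalizer of a complement of `R` in a normal subgroup `K`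
supplements `R`, because `R` permutes these complements transitively. -/
theorem normalizer_sup (K R : Subgroup G) [K.Normal] [R.Normal] [IsMulCommutative R]
    (hR : Nat.Coprime (Nat.card (R.subgroupOf K)) (R.subgroupOf K).index) (H : Subgroup K)
    (hH : Subgroup.IsComplement' (R.subgroupOf K) H) :
    Subgroup.normalizer ((H.map K.subtype : Subgroup G) : Set G) ⊔ R = ⊤ := by
  haveI : IsMulCommutative (R.subgroupOf K) := ⟨⟨fun a b => by
    apply Subtype.ext; apply Subtype.ext
    have h := mul_comm' (⟨_, a.2⟩ : R) ⟨_, b.2⟩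
    have h' : ((a : K) : G) * (b : K) = (b : K) * (a : K) := congrArg Subtype.val h
    exact h'⟩⟩
  rw [eq_top_iff]
  intro g _
  have hL : Subgroup.IsComplement' (R.subgroupOf K)
      (H.map (MulAut.conjNormal g : MulAut K).toMonoidHom) := by
    have hc : Nat.card (H.map (MulAut.conjNormal g : MulAut K).toMonoidHom) = Nat.card H :=
      Subgroup.card_map_of_injective (MulAut.conjNormal g : MulAut K).injective
    refine Subgroup.isComplement'_of_coprime ?_ ?_
    · rw [hc, hH.card_mul_card]
    · rw [hc, ← hH.symm.index_eq_card]; exact hR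
  obtain ⟨r, hr, hx⟩ := compl_conj _ hR _ _ hH hL
  have hmem : (r : G)⁻¹ * g ∈ Subgroup.normalizer ((H.map K.subtype : Subgroup G) : Set G) := by
    refine Subgroup.mem_normalizer_fintype ?_
    rintro _ ⟨h, hh, rfl⟩
    refine ⟨r⁻¹ * MulAut.conjNormal g h * r, (hx _).1 ⟨h, hh, rfl⟩, ?_⟩
    simp [mul_assoc]
  have : g = r * ((r : G)⁻¹ * g) := by group
  rw [this]
  exact Subgroup.mul_mem _ (Subgroup.mem_sup_right hr) (Subgroup.mem_sup_left hmem)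

end Frattini

/-! ### The induction -/

section Main

variable {G : Type} [Group G] [Fintype G]

/-- A minimal normal subgroup inside the derived subgroup is an abelian `q`-group when the average
degree is below `3`: by `key` a proper supplement of it meets it trivially, so the Frattini
argument makes its Sylow subgroups normal. -/
theorem minimal_abelian (hG : Odd (Nat.card G)) {B : ℝ} (hB : B ≤ 3) (hacd : acd G < B)
    {R : Subgroup G} (hR : R ≤ commutator G) (hRn : R.Normal) (hR0 : R ≠ ⊥)
    (hmin : ∀ N : Subgroup G, N.Normal → N ≤ R → N = ⊥ ∨ N = R) :
    IsMulCommutative R ∧ ∃ q : ℕ, q.Prime ∧ IsPGroup q R := by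
  classical
  have hcard : Nat.card R ≠ 1 := fun h => hR0 (Subgroup.card_eq_one.1 h)
  obtain ⟨q, hq, hqd⟩ := Nat.exists_prime_and_dvd hcard
  haveI := Fact.mk hq
  obtain ⟨Q⟩ : Nonempty (Sylow q R) := inferInstance
  have hQ0 : (Q : Subgroup R).map R.subtype ≠ ⊥ := by
    intro h
    rw [Subgroup.map_eq_bot_iff_of_injective _ R.subtype_injective] at h
    exact Q.ne_bot_of_dvd_card hqd h
  have hQR : (Q : Subgroup R).map R.subtype ≤ R := Subgroup.map_subtype_le _
  set A : Subgroup G := Subgroup.normalizer (((Q : Subgroup R).map R.subtype : Subgroup G) : Set G)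
    with hA
  have hAR : A ⊔ R = ⊤ := Sylow.normalizer_sup_eq_top Q
  have hRA : R ≤ A := by
    by_contra hRA
    haveI : Fintype A := Fintype.ofFinite _
    have h := (key hG hB hacd hR hRn hmin hAR hRA).1
    exact hQ0 (le_bot_iff.1 (h ▸ le_inf Subgroup.le_normalizer hQR))
  have hQn : ((Q : Subgroup R).map R.subtype).Normal := by
    rw [← Subgroup.normalizer_eq_top_iff, ← hAR, sup_eq_left.2 hRA]
  have hQe := (hmin _ hQn hQR).resolve_left hQ0
  have hpR : IsPGroup q R := by
    have := Q.isPGroup'.map R.subtype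
    rwa [hQe] at this
  refine ⟨?_, q, hq, hpR⟩
  haveI : Nontrivial R := (Subgroup.nontrivial_iff_ne_bot R).2 hR0
  have hZ := hpR.center_nontrivial
  have hZn : ((Subgroup.center R).map R.subtype).Normal := inferInstance
  have hZe : (Subgroup.center R).map R.subtype = R := by
    refine (hmin _ hZn (Subgroup.map_subtype_le _)).resolve_left fun h => ?_
    rw [Subgroup.map_eq_bot_iff_of_injective _ R.subtype_injective] at h
    exact (Subgroup.nontrivial_iff_ne_bot _).1 hZ h
  refine ⟨⟨fun a b => ?_⟩⟩
  have ha : (a : G) ∈ (Subgroup.center R).map R.subtype := by rw [hZe]; exact a.2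
  obtain ⟨a', ha', he⟩ := ha
  obtain rfl : a' = a := Subtype.ext he
  exact (Subgroup.mem_center_iff.1 ha' b).symm

/-- The case of a minimal normal `p`-subgroup `R`: either a `p`-complement modulo `R` lifts to a
normal subgroup of `G`, or `R` has a proper supplement and `key` contradicts `arith`. -/
theorem lift_pGroup (hG : Odd (Nat.card G)) {p : ℕ} (hp : p.Prime) (hpodd : Odd p)
    (hmod : p % 3 = 2) (heven : Even ((p - 1) / 2)) {B : ℝ}
    (hBeq : B = 3 * ((p : ℝ) ^ 2 + 2) / ((p : ℝ) ^ 2 + 8)) (hB : B ≤ 3) (hacd : acd G < B)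
    {R : Subgroup G} (hR : R ≤ commutator G) (hRn : R.Normal)
    (hmin : ∀ N : Subgroup G, N.Normal → N ≤ R → N = ⊥ ∨ N = R)
    [IsMulCommutative R] (hpR : IsPGroup p R) (h : HasNormalPComplement (G ⧸ R) p) :
    HasNormalPComplement G p := by
  classical
  haveI := Fact.mk hp
  obtain ⟨K', hK', hc, n, hn⟩ := h
  set K : Subgroup G := K'.comap (QuotientGroup.mk' R) with hK
  have hRK : R ≤ K := by
    intro x hx
    rw [hK, Subgroup.mem_comap, QuotientGroup.mk'_apply, (QuotientGroup.eq_one_iff x).2 hx]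
    exact K'.one_mem
  have hKi : K.index = p ^ n := by
    rw [hK, Subgroup.index_comap_of_surjective _ (QuotientGroup.mk'_surjective R), hn]
  obtain ⟨m, hm⟩ := (IsPGroup.iff_card (p := p)).1 hpR
  have hcR : Nat.card (R.subgroupOf K) = p ^ m := by
    rw [Nat.card_congr (Subgroup.subgroupOfEquivOfLe hRK).toEquiv, hm]
  have hiR : (R.subgroupOf K).index = Nat.card K' := by
    have h1 : (R.subgroupOf K).index * K.index = R.index := Subgroup.relIndex_mul_index hRK
    have h2 := Subgroup.card_mul_index K'
    rw [← Subgroup.index_eq_card, hn, ← h1, hKi] at h2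
    exact (Nat.eq_of_mul_eq_mul_right (pow_pos hp.pos n) h2).symm
  have hcop : Nat.Coprime (Nat.card (R.subgroupOf K)) (R.subgroupOf K).index := by
    rw [hcR, hiR]; exact hc.symm.pow_left m
  obtain ⟨H, hH⟩ := Subgroup.exists_right_complement'_of_coprime hcop
  have hHc : Nat.card (H.map K.subtype) = Nat.card K' := by
    rw [Subgroup.card_map_of_injective K.subtype_injective, ← hH.symm.index_eq_card, hiR]
  have hAR := normalizer_sup K R hcop H hH
  set A : Subgroup G := Subgroup.normalizer ((H.map K.subtype : Subgroup G) : Set G) with hA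
  by_cases hRA : R ≤ A
  · have hn' : (H.map K.subtype).Normal := by
      rw [← Subgroup.normalizer_eq_top_iff, ← hAR, sup_eq_left.2 hRA]
    refine ⟨H.map K.subtype, hn', hHc ▸ hc, m + n, ?_⟩
    have h1 := Subgroup.card_mul_index (H.map K.subtype)
    have h2 := Subgroup.card_mul_index K
    rw [← hH.card_mul_card, hcR, hKi, ← hH.symm.index_eq_card, hiR] at h2
    rw [← h2, hHc] at h1
    refine Nat.eq_of_mul_eq_mul_left (Nat.card_pos (α := K')) (h1.trans ?_)
    ring
  · exfalso
    haveI : Fintype A := Fintype.ofFinite _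
    obtain ⟨-, N, t, ht, ht3, hN, hcN, hlt⟩ := key hG hB hacd hR hRn hmin hAR hRA
    exact arith hp hpodd hmod heven hBeq ht ht3 hN (hm ▸ hcN) hlt

theorem exists_minimal (h : commutator G ≠ ⊥) : ∃ R : Subgroup G, R ≤ commutator G ∧ R.Normal ∧
    R ≠ ⊥ ∧ ∀ N : Subgroup G, N.Normal → N ≤ R → N = ⊥ ∨ N = R := by
  obtain ⟨R, hR⟩ := (Set.toFinite {R : Subgroup G | R ≤ commutator G ∧ R.Normal ∧ R ≠ ⊥}
    ).exists_minimal ⟨commutator G, le_rfl, inferInstance, h⟩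
  refine ⟨R, hR.1.1, hR.1.2.1, hR.1.2.2, fun N hN hNR => ?_⟩
  by_contra hcon
  rw [not_or] at hcon
  exact hcon.2 (le_antisymm hNR (hR.2 ⟨hNR.trans hR.1.1, hN, hcon.1⟩ hNR))

theorem main_induction {p : ℕ} (hp : p.Prime) (hpodd : Odd p)
    (hmod : p % 3 = 2) (heven : Even ((p - 1) / 2)) {B : ℝ}
    (hBeq : B = 3 * ((p : ℝ) ^ 2 + 2) / ((p : ℝ) ^ 2 + 8)) (n : ℕ) :
    ∀ (G : Type) [Group G] [Fintype G], Nat.card G = n → Odd (Nat.card G) → acd G < B →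
      HasNormalPComplement G p := by
  have hB : B ≤ 3 := by
    rw [hBeq, div_le_iff₀ (by positivity)]; linarith
  induction n using Nat.strong_induction_on with
  | _ n ih =>
    intro G _ _ hn hG hacd
    by_cases hcomm : commutator G = ⊥
    · exact hasNormalPComplement_of_comm hp hcomm
    obtain ⟨R, hR, hRn, hR0, hmin⟩ := exists_minimal hcomm
    haveI : Fintype (G ⧸ R) := Fintype.ofFinite _
    have hmul := Subgroup.card_mul_index R
    rw [Subgroup.index_eq_card] at hmul
    have hlt : Nat.card (G ⧸ R) < n := by
      have h1 : 1 < Nat.card R := (Subgroup.one_lt_card_iff_ne_bot R).2 hR0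
      have h2 : 0 < Nat.card (G ⧸ R) := Nat.card_pos
      rw [← hn, ← hmul]
      nlinarith
    have hodd : Odd (Nat.card (G ⧸ R)) := by
      rw [← hmul] at hG; exact (Nat.odd_mul.1 hG).2
    have hq := ih _ hlt (G ⧸ R) rfl hodd (acd_quotient hG hB hacd R hR)
    obtain ⟨_, q, hqp, hpR⟩ := minimal_abelian hG hB hacd hR hRn hR0 hmin
    rcases eq_or_ne q p with rfl | hne
    · exact lift_pGroup hG hp hpodd hmod heven hBeq hB hacd hR hRn hmin hpR hq
    · refine hasNormalPComplement_of_quotient R ?_ hq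
      haveI := Fact.mk hqp
      obtain ⟨m, hm⟩ := (IsPGroup.iff_card (p := q)).1 hpR
      rw [hm]
      exact ((Nat.coprime_primes hqp hp).2 hne).pow_left m

end Main

end OddAcd

theorem average_degree_p_nilpotent_two_mod_three_even
    (G : Type) [Group G] [Fintype G] (hG : Odd (Nat.card G))
    (p : ℕ) (hp : p.Prime) (hpodd : Odd p) (hmod : p % 3 = 2)
    (heven : Even ((p - 1) / 2))
    (h : acd G < 3 * ((p : ℝ) ^ 2 + 2) / ((p : ℝ) ^ 2 + 8)) :
    HasNormalPComplement G p := by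
  exact OddAcd.main_induction hp hpodd hmod heven rfl _ G rfl hG h
end
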